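/- arXiv:0712.3847 — 3 statements merged into one kernel-verified Lean document; each statement's English description precedes it below -/
import Mathlib

section
/- Let n ≥ 1 and define G : ℝ → ℝ by G(x) = ∫_{(−∞,x]^n} Δ_n(z)² ∏_{k=1}^n e^{−z_k²} dz₁…dz_n. Then G is smooth and strictly positive, and f := G'/G (that is, f(x) = d/dx log P_n(max eigenvalue ≤ x) for the Gaussian Unitary Ensemble) satisfies the third-order ODE f''' + 6 (f')² + 4(2n − x²) f' + 4x f = 0 on all of ℝ. -/
/-!
Let `L_x(p) = ∫_{-∞}^x p(z) e^{-z²} dz` and let `P_n(z; x)` be the monic orthogonal polynomials of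
this functional, with `h_n = L_x(P_n²)` and three-term recurrence
`P_{n+1} = (z - α_n) P_n - β_n P_{n-1}`, `β_n = h_n / h_{n-1}`.  Writing the squared Vandermonde
as a squared determinant of the `P_j(z_i)` and integrating term by term gives Heine's formula
`G = n! ∏_{k<n} h_k` (`heine`), from which smoothness and positivity of `G` follow.

Put `R_n = P_n(x)² e^{-x²} / h_n` and `r_n = P_n(x) P_{n-1}(x) e^{-x²} / h_{n-1}`.

* Integrating the exact derivatives `(p e^{-z²})'` with `p = P_n²`, `P_n P_{n-1}`, `z P_n P_{n-1}`
  gives `R_n = -2 α_n`, `r_n = n - 2 β_n`, and, with `c_n` the subleading coefficient of `P_n`,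
  `2 c_n = 2 β_n (R_n + R_{n-1}) - 2 x r_n` (`RR_eq`, `rr_eq`, `two_subCoeff_eq`).
* Evaluating the recurrence at `z = x` gives `r_{n+1} + r_n = (x - α_n) R_n`, and
  `r_n² = β_n R_n R_{n-1}` is immediate (`rr_add`, `rr_sq`).
* Differentiating the orthogonality relations in `x` gives the Toda-type equations
  `h_n' = h_n R_n` and `c_n' = -r_n` (`hasDerivAt_nrm'`, `hasDerivAt_subCoeff`).

Since `α_k = c_k - c_{k+1}`, the logarithmic derivative is
`f = ∑_{k<n} R_k = -2 ∑_{k<n} α_k = 2 c_n`.  Hence `f' = -2 r_n`, and `β_n`, `R_n`, `R_{n-1}`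
satisfy the closed system
`β_n' = β_n (R_n - R_{n-1})`, `R_n' = -2x R_n - R_n² + 4 r_n`,
`R_{n-1}' = 2x R_{n-1} + R_{n-1}² - 4 r_n`.
The third-order equation is then a polynomial consequence of these relations.
-/

open scoped BigOperators
open MeasureTheory

/-- Vandermonde product `Δ_n(x) = ∏_{i<j} (x_i − x_j)`. -/
def Vdm (n : ℕ) (x : Fin n → ℝ) : ℝ :=
  ∏ p ∈ Finset.univ.filter (fun p : Fin n × Fin n => p.1 < p.2), (x p.1 - x p.2)

namespace GUE
open Polynomial

theorem degree_C_mul_le' (a : ℝ) (p : ℝ[X]) : (C a * p).degree ≤ p.degree := by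
  rw [← smul_eq_C_mul]; exact degree_smul_le a p

/-! ### Orthogonal polynomials of a positive definite moment functional -/

section Algebra

variable (L : ℝ[X] →ₗ[ℝ] ℝ)

/-- The monic orthogonal polynomials of the moment functional `L`, defined through their three-term
recurrence. -/
noncomputable def op : ℕ → ℝ[X]
  | 0 => 1
  | 1 => X - C (L X / L 1)
  | n + 2 => (X - C (L (X * (op (n + 1) * op (n + 1))) / L (op (n + 1) * op (n + 1)))) * op (n + 1)
      - C (L (op (n + 1) * op (n + 1)) / L (op n * op n)) * op n

/-- The squared norm `h_n = L(P_n²)`. -/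
noncomputable def nrm (n : ℕ) : ℝ := L (op L n * op L n)

/-- The recurrence coefficient `α_n = L(X P_n²) / h_n`. -/
noncomputable def recA (n : ℕ) : ℝ := L (X * (op L n * op L n)) / nrm L n

/-- The recurrence coefficient `β_n = h_n / h_{n-1}`, with the convention `β_0 = 0`, which lets the
recurrence hold at `n = 0` whatever `P_{-1}` stands for. -/
noncomputable def recB : ℕ → ℝ
  | 0 => 0
  | n + 1 => nrm L (n + 1) / nrm L n

/-- The subleading coefficient `c_n` of `P_n` (of `X^{n-1}`). It is read off from `X P_n`, so that
`c_0 = 0`. -/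
noncomputable def subCoeff (n : ℕ) : ℝ := (X * op L n).coeff n

/-- The recurrence for all `n`; at `n = 0` the natural subtraction is harmless since `β_0 = 0`. -/
theorem op_succ (n : ℕ) :
    op L (n + 1) = (X - C (recA L n)) * op L n - C (recB L n) * op L (n - 1) := by
  cases n with
  | zero => simp [op, recA, recB, nrm]
  | succ n => simp [op, recA, recB, nrm]

theorem op_monic (n : ℕ) : (op L n).Monic ∧ (op L n).natDegree = n := by
  induction n using Nat.strong_induction_on with
  | _ n ih =>
    cases n with
    | zero => simp [op]
    | succ n =>
      obtain ⟨h1, h2⟩ := ih n (by omega)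
      have hm : ((X - C (recA L n)) * op L n).Monic := (monic_X_sub_C _).mul h1
      have hd : ((X - C (recA L n)) * op L n).natDegree = n + 1 := by
        rw [(monic_X_sub_C _).natDegree_mul h1, h2, natDegree_X_sub_C, add_comm]
      have hlt : (C (recB L n) * op L (n - 1)).degree < ((X - C (recA L n)) * op L n).degree := by
        rw [degree_eq_natDegree hm.ne_zero, hd]
        refine lt_of_le_of_lt (degree_C_mul_le' _ _) ?_
        have h3 := ih (n - 1) (by omega)
        rw [degree_eq_natDegree h3.1.ne_zero, h3.2]
        exact_mod_cast (by omega : n - 1 < n + 1)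
      rw [op_succ]
      refine ⟨hm.sub_of_left hlt, ?_⟩
      rw [natDegree_sub_eq_left_of_natDegree_lt, hd]
      rw [hd]
      refine lt_of_le_of_lt (natDegree_C_mul_le _ _) ?_
      rw [(ih (n - 1) (by omega)).2]; omega

theorem op_degree (n : ℕ) : (op L n).degree = n := by
  rw [degree_eq_natDegree (op_monic L n).1.ne_zero, (op_monic L n).2]

theorem op_coeff_self (n : ℕ) : (op L n).coeff n = 1 := by
  have := (op_monic L n).1.coeff_natDegree
  rwa [(op_monic L n).2] at this

theorem op_coeff_of_lt {n k : ℕ} (h : n < k) : (op L n).coeff k = 0 :=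
  coeff_eq_zero_of_natDegree_lt (by rwa [(op_monic L n).2])

/-- Subtracting a multiple of `P_n` lowers the degree of a polynomial of degree at most `n`. -/
theorem degree_sub_coeff {n : ℕ} {q : ℝ[X]} (hq : q.degree < (n + 1 : ℕ)) :
    (q - C (q.coeff n) * op L n).degree < n := by
  rw [degree_lt_iff_coeff_zero] at hq ⊢
  intro m hm
  rcases hm.eq_or_lt with rfl | h
  · simp [op_coeff_self]
  · simp [hq m h, op_coeff_of_lt L h]

theorem degree_lt_X_mul {n : ℕ} {q : ℝ[X]} (hq : q.degree < n) :
    (X * q).degree < ((n + 1 : ℕ) : WithBot ℕ) := by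
  rw [degree_lt_iff_coeff_zero] at hq ⊢
  intro m hm
  cases m with
  | zero => simp
  | succ m => rw [coeff_X_mul]; exact hq m (by omega)

theorem L_C_mul (a : ℝ) (p : ℝ[X]) : L (C a * p) = a * L p := by
  rw [← smul_eq_C_mul, map_smul, smul_eq_mul]

/-- If `P_n` is orthogonal to all lower degrees, then pairing it with `q` of degree at most `n` only
sees the coefficient of `X^n` in `q`. -/
theorem L_op_mul_of_orth {n : ℕ} (horth : ∀ q : ℝ[X], q.degree < n → L (op L n * q) = 0)
    {q : ℝ[X]} (hq : q.degree < (n + 1 : ℕ)) : L (op L n * q) = q.coeff n * nrm L n := by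
  have h := horth _ (degree_sub_coeff L hq)
  have e : op L n * (q - C (q.coeff n) * op L n)
      = op L n * q - C (q.coeff n) * (op L n * op L n) := by ring
  rw [e, map_sub, L_C_mul] at h
  rw [nrm]; linarith

variable {L} (hL : ∀ q : ℝ[X], q ≠ 0 → 0 < L (q * q))

include hL

theorem nrm_pos (n : ℕ) : 0 < nrm L n := hL _ (op_monic L n).1.ne_zero

/-- `P_n` is orthogonal to every polynomial of lower degree. -/
theorem op_orth (n : ℕ) : ∀ q : ℝ[X], q.degree < n → L (op L n * q) = 0 := by
  induction n using Nat.strong_induction_on with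
  | _ n ih =>
    cases n with
    | zero =>
      intro q hq
      have : q = 0 := by
        rw [← degree_eq_bot]; simpa using hq
      simp [this]
    | succ n =>
      intro q hq
      have hn := (nrm_pos hL n).ne'
      have key := degree_sub_coeff L hq
      set a := q.coeff n
      set q1 := q - C a * op L n with hq1
      have hI := ih n (by omega)
      have hqe : q = C a * op L n + q1 := by rw [hq1]; ring
      -- Split off the top part of `q`: `q = a P_n + q1` with `deg q1 < n`.
      have e1 : op L (n + 1) * q = C a * (X * (op L n * op L n))
          - C (a * recA L n) * (op L n * op L n) - C (a * recB L n) * (op L n * op L (n - 1))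
          + op L n * (X * q1) - C (recA L n) * (op L n * q1)
          - C (recB L n) * (op L (n - 1) * q1) := by
        rw [hqe, op_succ, C_mul, C_mul]; ring
      rw [e1]
      simp only [map_add, map_sub, L_C_mul]
      rw [hI q1 key, L_op_mul_of_orth L hI (degree_lt_X_mul key)]
      have e2 : a * L (X * (op L n * op L n)) = a * recA L n * L (op L n * op L n) := by
        rw [recA]
        change _ = _ * nrm L n
        field_simp
      rw [e2]
      cases n with
      | zero =>
        have : q1 = 0 := by
          rw [← degree_eq_bot]; simpa using key
        simp [recB, this]
      | succ m =>
        have hm := (nrm_pos hL m).ne'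
        simp only [Nat.add_sub_cancel]
        rw [hI (op L m) (by rw [op_degree]; exact_mod_cast m.lt_succ_self),
          L_op_mul_of_orth L (ih m (by omega)) key, coeff_X_mul, recB]
        field_simp
        ring

theorem L_op_mul {n : ℕ} {q : ℝ[X]} (hq : q.degree < (n + 1 : ℕ)) :
    L (op L n * q) = q.coeff n * nrm L n := L_op_mul_of_orth L (op_orth hL n) hq

omit hL in
theorem subCoeff_zero : subCoeff L 0 = 0 := by simp [subCoeff]

omit hL in
theorem subCoeff_succ (n : ℕ) : subCoeff L (n + 1) = (op L (n + 1)).coeff n := by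
  rw [subCoeff, coeff_X_mul]

omit hL in
theorem recA_eq (n : ℕ) : recA L n = subCoeff L n - subCoeff L (n + 1) := by
  rw [subCoeff_succ, op_succ, subCoeff, sub_mul, coeff_sub, coeff_sub, coeff_C_mul, coeff_C_mul,
    op_coeff_self]
  cases n with
  | zero => simp [recB]
  | succ n => rw [op_coeff_of_lt L (by omega : n + 1 - 1 < n + 1)]; ring

theorem L_X_op_op (n : ℕ) : L (op L (n + 1) * (X * op L n)) = nrm L (n + 1) := by
  rw [L_op_mul hL (degree_lt_X_mul (by rw [op_degree]; exact_mod_cast n.lt_succ_self)),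
    coeff_X_mul, op_coeff_self, one_mul]

theorem L_X_op_sq (n : ℕ) : L (X * (op L n * op L n)) = recA L n * nrm L n := by
  rw [recA, div_mul_cancel₀ _ (nrm_pos hL n).ne']

variable {x w : ℝ} (hibp : ∀ p : ℝ[X], L (derivative p) - 2 * L (X * p) = p.eval x * w)

include hibp

/-- `R_n = P_n(x)² w / h_n`, where `w` stands for the weight at the endpoint `x`. -/
noncomputable def RR (L : ℝ[X] →ₗ[ℝ] ℝ) (x w : ℝ) (n : ℕ) : ℝ :=
  (op L n).eval x ^ 2 * w / nrm L n

/-- `r_n = P_n(x) P_{n-1}(x) w / h_{n-1}`, written as `β_n P_n(x) P_{n-1}(x) w / h_n` so that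
`r_0 = 0`. -/
noncomputable def rr (L : ℝ[X] →ₗ[ℝ] ℝ) (x w : ℝ) (n : ℕ) : ℝ :=
  recB L n * (op L n).eval x * (op L (n - 1)).eval x * w / nrm L n

omit hL hibp in
theorem rr_zero : rr L x w 0 = 0 := by simp [rr, recB]

omit hibp in
theorem rr_succ (n : ℕ) :
    rr L x w (n + 1) = (op L (n + 1)).eval x * (op L n).eval x * w / nrm L n := by
  have h1 := (nrm_pos hL n).ne'
  have h2 := (nrm_pos hL (n + 1)).ne'
  simp only [rr, recB, Nat.add_sub_cancel]
  field_simp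

/-- Integration by parts applied to `P_n²`. -/
theorem RR_eq (n : ℕ) : RR L x w n = -2 * recA L n := by
  have h := hibp (op L n * op L n)
  rw [derivative_mul] at h
  have e : derivative (op L n) * op L n + op L n * derivative (op L n)
      = C 2 * (op L n * derivative (op L n)) := by
    rw [show (C 2 : ℝ[X]) = 2 from rfl]; ring
  rw [e, L_C_mul, op_orth hL n, L_X_op_sq hL, eval_mul] at h
  · have := (nrm_pos hL n).ne'
    rw [RR]
    field_simp
    linarith
  · have := degree_derivative_lt (op_monic L n).1.ne_zero
    rwa [op_degree] at this

/-- Integration by parts applied to `P_{n+1} P_n`. -/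
theorem rr_eq (n : ℕ) : rr L x w (n + 1) = (n + 1) - 2 * recB L (n + 1) := by
  have h := hibp (op L (n + 1) * op L n)
  have h1 := (nrm_pos hL n).ne'
  have d1 : (derivative (op L (n + 1))).degree < (n + 1 : ℕ) := by
    have := degree_derivative_lt (op_monic L (n + 1)).1.ne_zero
    rwa [op_degree] at this
  have d2 : (derivative (op L n)).degree < (n + 1 : ℕ) := by
    have := degree_derivative_lt (op_monic L n).1.ne_zero
    rw [op_degree] at this
    exact this.trans (by exact_mod_cast n.lt_succ_self)
  rw [derivative_mul, mul_comm (derivative (op L (n + 1))), map_add, L_op_mul hL d1,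
    op_orth hL _ _ d2, show X * (op L (n + 1) * op L n) = op L (n + 1) * (X * op L n) by ring,
    L_X_op_op hL, coeff_derivative, op_coeff_self, eval_mul] at h
  rw [rr_succ hL, recB]
  field_simp
  linarith

omit hibp in
/-- The three-term recurrence evaluated at the endpoint `x`. -/
theorem rr_add (n : ℕ) : rr L x w (n + 1) + rr L x w n = (x - recA L n) * RR L x w n := by
  have h1 := (nrm_pos hL n).ne'
  rw [rr_succ hL, rr, RR, op_succ]
  simp only [eval_sub, eval_mul, eval_X, eval_C]
  field_simp
  ring

omit hibp in
theorem rr_sq (n : ℕ) :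
    rr L x w (n + 1) ^ 2 = recB L (n + 1) * RR L x w (n + 1) * RR L x w n := by
  have h1 := (nrm_pos hL n).ne'
  have h2 := (nrm_pos hL (n + 1)).ne'
  rw [rr_succ hL, RR, RR, recB]
  field_simp

/-- Integration by parts applied to `X P_{n+1} P_n`. With `2 c_{n+1}` the logarithmic derivative of
`G`, this supplies the integration constant in the final differential equation. -/
theorem two_subCoeff_eq (n : ℕ) :
    2 * subCoeff L (n + 1) = 2 * recB L (n + 1) * (RR L x w (n + 1) + RR L x w n)
      - 2 * x * rr L x w (n + 1) := by
  have h := hibp (X * (op L (n + 1) * op L n))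
  have h1 := (nrm_pos hL n).ne'
  set P := op L (n + 1)
  set Q := op L n
  -- `X P' - (n+1) P` has degree at most `n`, with coefficient `-c_{n+1}` at `X^n`.
  have e : derivative (X * (P * Q))
      = P * Q + Q * (X * derivative P - C ((n : ℝ) + 1) * P) + C ((n : ℝ) + 1) * (P * Q)
        + P * (X * derivative Q) := by
    rw [derivative_mul, derivative_mul, derivative_X]; ring
  have dQ : Q.degree < (n + 1 : ℕ) := by
    rw [op_degree]; exact_mod_cast n.lt_succ_self
  have a1 : L (P * Q) = 0 := op_orth hL _ _ dQ
  have a2 : L (P * (X * derivative Q)) = 0 := by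
    refine op_orth hL _ _ (degree_lt_X_mul ?_)
    have := degree_derivative_lt (op_monic L n).1.ne_zero
    rwa [op_degree] at this
  have a3 : L (Q * (X * derivative P - C ((n : ℝ) + 1) * P)) = - subCoeff L (n + 1) * nrm L n := by
    rw [L_op_mul hL]
    · congr 1
      rw [subCoeff_succ, coeff_sub, coeff_C_mul]
      cases n with
      | zero => simp [P]
      | succ n => rw [coeff_X_mul, coeff_derivative]; push_cast; ring
    · rw [degree_lt_iff_coeff_zero]
      intro m hm
      obtain ⟨k, rfl⟩ : ∃ k, m = k + 1 := ⟨m - 1, by omega⟩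
      rw [coeff_sub, coeff_C_mul, coeff_X_mul, coeff_derivative]
      rcases (Nat.le_of_succ_le_succ hm).eq_or_lt with rfl | hlt
      · ring
      · rw [op_coeff_of_lt L (by omega)]; ring
  have a4 : L (P * (X * (X * Q - P - C (recA L n) * Q))) = 0 := by
    refine op_orth hL _ _ (degree_lt_X_mul ?_)
    have : X * Q - P - C (recA L n) * Q = C (recB L n) * op L (n - 1) := by
      simp only [P, Q]; rw [op_succ]; ring
    rw [this]
    cases n with
    | zero => simp [recB]
    | succ n =>
      refine lt_of_le_of_lt (degree_C_mul_le' _ _) ?_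
      rw [op_degree]; exact_mod_cast n.lt_succ_self
  have e4 : P * (X * (X * Q - P - C (recA L n) * Q))
      = X * (X * (P * Q)) - X * (P * P) - C (recA L n) * (P * (X * Q)) := by ring
  rw [e4, map_sub, map_sub, L_C_mul, L_X_op_op hL, L_X_op_sq hL] at a4
  rw [e, map_add, map_add, map_add, L_C_mul, a1, a2, a3] at h
  simp only [eval_mul, eval_X] at h
  rw [RR_eq hL hibp, RR_eq hL hibp, rr_succ hL, recB]
  field_simp
  linarith
end Algebra

/-! ### The truncated Gaussian functional -/

section Analysis

open Filter Topology Set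

/-- The Gaussian weight `e^{-x²}`. -/
noncomputable def wt (x : ℝ) : ℝ := Real.exp (-x ^ 2)

theorem continuous_wt : Continuous wt := by unfold wt; fun_prop

theorem wt_pos (x : ℝ) : 0 < wt x := Real.exp_pos _

theorem hasDerivAt_wt (x : ℝ) : HasDerivAt wt (-(2 * x) * wt x) x := by
  have h : HasDerivAt (fun y : ℝ => -y ^ 2) (-(2 * x)) x := by
    refine (hasDerivAt_pow 2 x).fun_neg.congr_deriv ?_
    simp
  have := h.exp
  rwa [mul_comm] at this

theorem integrable_poly (p : ℝ[X]) : Integrable (fun z => p.eval z * wt z) := by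
  induction p using Polynomial.induction_on' with
  | add p q hp hq =>
    simp only [eval_add, add_mul]
    exact hp.add hq
  | monomial k a =>
    have h := integrable_rpow_mul_exp_neg_mul_sq (b := 1) one_pos (s := k)
      (lt_of_lt_of_le (by norm_num) k.cast_nonneg)
    have := h.const_mul a
    simpa [eval_monomial, wt, mul_assoc] using this

/-- The moment functional `p ↦ ∫_{-∞}^x p(z) e^{-z²} dz`. -/
noncomputable def Lx (x : ℝ) : ℝ[X] →ₗ[ℝ] ℝ where
  toFun p := ∫ z in Iic x, p.eval z * wt z
  map_add' p q := by
    simp only [eval_add, add_mul]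
    exact integral_add (integrable_poly p).integrableOn (integrable_poly q).integrableOn
  map_smul' a p := by
    simp only [eval_smul, smul_eq_mul, mul_assoc, RingHom.id_apply]
    exact integral_const_mul _ _

theorem Lx_apply (x : ℝ) (p : ℝ[X]) : Lx x p = ∫ z in Iic x, p.eval z * wt z := rfl

theorem Lx_pos (x : ℝ) (q : ℝ[X]) (hq : q ≠ 0) : 0 < Lx x (q * q) := by
  rw [Lx_apply, setIntegral_pos_iff_support_of_nonneg_ae _ (integrable_poly _).integrableOn]
  · have hsub : Iic x \ {z | q.IsRoot z} ⊆
        (Function.support fun z => (q * q).eval z * wt z) ∩ Iic x := by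
      rintro z ⟨hz, hr⟩
      refine ⟨?_, hz⟩
      have : q.eval z ≠ 0 := hr
      simp [this, (wt_pos z).ne']
    refine lt_of_lt_of_le ?_ (measure_mono hsub)
    rw [measure_sdiff_null ((finite_setOfPred_isRoot hq).measure_zero _)]
    simp
  · refine Eventually.of_forall fun z => ?_
    simp only [eval_mul, Pi.zero_apply]
    exact mul_nonneg (mul_self_nonneg _) (wt_pos z).le

/-- Integration by parts: the integral of `(p e^{-z²})'` over `(-∞, x]` is its value at `x`. -/
theorem Lx_ibp (x : ℝ) (p : ℝ[X]) :
    Lx x (derivative p) - 2 * Lx x (X * p) = p.eval x * wt x := by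
  have hd : ∀ y ∈ Iic x, HasDerivAt (fun z => p.eval z * wt z)
      ((derivative p - C 2 * (X * p)).eval y * wt y) y := by
    intro y _
    have := (p.hasDerivAt y).mul (hasDerivAt_wt y)
    refine this.congr_deriv ?_
    simp; ring
  have hi := (integrable_poly (derivative p - C 2 * (X * p))).integrableOn (s := Iic x)
  have h := integral_Iic_of_hasDerivAt_of_tendsto' hd hi
    (tendsto_zero_of_hasDerivAt_of_integrableOn_Iic hd hi (integrable_poly p).integrableOn)
  rw [← Lx_apply, map_sub, L_C_mul, sub_zero] at h
  exact h

theorem hasDerivAt_Lx (p : ℝ[X]) (x : ℝ) :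
    HasDerivAt (fun y => Lx y p) (p.eval x * wt x) x := by
  have hc : Continuous fun z => p.eval z * wt z := p.continuous.mul continuous_wt
  have e : (fun y => Lx y p) = fun y => (∫ z in (0 : ℝ)..y, p.eval z * wt z) + Lx 0 p := by
    ext y
    rw [Lx_apply, Lx_apply, ← intervalIntegral.integral_Iic_sub_Iic
      (integrable_poly p).integrableOn (integrable_poly p).integrableOn]
    ring
  rw [e]
  exact (intervalIntegral.integral_hasDerivAt_right (hc.intervalIntegrable _ _)
    (hc.stronglyMeasurableAtFilter _ _) hc.continuousAt).add_const _

theorem contDiff_wt : ContDiff ℝ (⊤ : ℕ∞) wt := by unfold wt; fun_prop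

theorem contDiff_Lx (p : ℝ[X]) : ContDiff ℝ (⊤ : ℕ∞) fun y => Lx y p := by
  rw [contDiff_infty_iff_deriv]
  refine ⟨fun x => (hasDerivAt_Lx p x).differentiableAt, ?_⟩
  rw [show deriv (fun y => Lx y p) = fun x => p.eval x * wt x from
    funext fun x => (hasDerivAt_Lx p x).deriv]
  refine ContDiff.mul ?_ contDiff_wt
  simpa using p.contDiff_aeval (𝕜 := ℝ) (⊤ : ℕ∞)

theorem L_eq_sum (L : ℝ[X] →ₗ[ℝ] ℝ) {p : ℝ[X]} {N : ℕ} (h : p.natDegree < N) :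
    L p = ∑ k ∈ Finset.range N, p.coeff k * L (X ^ k) := by
  conv_lhs => rw [p.as_sum_range' N h]
  rw [map_sum]
  refine Finset.sum_congr rfl fun k _ => ?_
  rw [← C_mul_X_pow_eq_monomial, L_C_mul]

/-! ### Dependence of the orthogonal polynomials on the endpoint -/

/-- The family `P` of polynomials is differentiable at `x` coefficient by coefficient, and `P'`
collects the derivatives of the coefficients. -/
def HasCoeffDerivAt (P : ℝ → ℝ[X]) (P' : ℝ[X]) (x : ℝ) : Prop :=
  ∀ k, HasDerivAt (fun y => (P y).coeff k) (P'.coeff k) x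

theorem HasCoeffDerivAt.mul {P Q : ℝ → ℝ[X]} {P' Q' : ℝ[X]} {x : ℝ}
    (hP : HasCoeffDerivAt P P' x) (hQ : HasCoeffDerivAt Q Q' x) :
    HasCoeffDerivAt (fun y => P y * Q y) (P' * Q x + P x * Q') x := by
  intro k
  simp only [coeff_add, coeff_mul, ← Finset.sum_add_distrib]
  exact HasDerivAt.fun_sum fun i _ => (hP i.1).mul (hQ i.2)

/-- Leibniz rule for `L_y(P_y)`: the endpoint contributes a boundary term. The degrees must be
uniformly bounded, so that `L_y(P_y)` is one finite sum for all `y`. -/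
theorem HasCoeffDerivAt.Lx {P : ℝ → ℝ[X]} {P' : ℝ[X]} {x : ℝ} {N : ℕ}
    (hP : HasCoeffDerivAt P P' x) (hN : ∀ y, (P y).natDegree < N) :
    HasDerivAt (fun y => Lx y (P y)) (Lx x P' + (P x).eval x * wt x) x := by
  have hN' : P'.natDegree < N := by
    have h0 : 0 < N := (Nat.zero_le _).trans_lt (hN x)
    rw [Nat.lt_iff_le_pred h0, natDegree_le_iff_coeff_eq_zero]
    intro m hm
    replace hm : N ≤ m := by omega
    have h := hP m
    simp only [fun y => coeff_eq_zero_of_natDegree_lt ((hN y).trans_le hm)] at h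
    exact h.unique (hasDerivAt_const x 0)
  simp only [fun y => L_eq_sum (GUE.Lx y) (hN y)]
  rw [L_eq_sum _ hN', eval_eq_sum_range' (hN x), Finset.sum_mul, ← Finset.sum_add_distrib]
  refine HasDerivAt.fun_sum fun k _ => ?_
  refine ((hP k).mul (hasDerivAt_Lx (X ^ k) x)).congr_deriv ?_
  simp; ring

/-- All coefficients of the family `P` are smooth functions of the parameter. -/
def SmoothCoeff (P : ℝ → ℝ[X]) : Prop :=
  ∀ k, ContDiff ℝ (⊤ : ℕ∞) fun y => (P y).coeff k

theorem SmoothCoeff.mul {P Q : ℝ → ℝ[X]} (hP : SmoothCoeff P) (hQ : SmoothCoeff Q) :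
    SmoothCoeff fun y => P y * Q y := by
  intro k
  simp only [coeff_mul]
  exact ContDiff.sum fun i _ => (hP i.1).mul (hQ i.2)

theorem SmoothCoeff.sub {P Q : ℝ → ℝ[X]} (hP : SmoothCoeff P) (hQ : SmoothCoeff Q) :
    SmoothCoeff fun y => P y - Q y := by
  intro k
  simp only [coeff_sub]
  exact (hP k).sub (hQ k)

theorem smoothCoeff_const (p : ℝ[X]) : SmoothCoeff fun _ => p := fun _ => contDiff_const

theorem smoothCoeff_C {a : ℝ → ℝ} (ha : ContDiff ℝ (⊤ : ℕ∞) a) : SmoothCoeff fun y => C (a y) := by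
  intro k
  simp only [coeff_C]
  split_ifs
  · exact ha
  · exact contDiff_const

theorem SmoothCoeff.Lx {P : ℝ → ℝ[X]} {N : ℕ} (hP : SmoothCoeff P)
    (hN : ∀ y, (P y).natDegree < N) : ContDiff ℝ (⊤ : ℕ∞) fun y => Lx y (P y) := by
  simp only [fun y => L_eq_sum (GUE.Lx y) (hN y)]
  exact ContDiff.sum fun k _ => (hP k).mul (contDiff_Lx _)

theorem natDegree_op_mul (L : ℝ[X] →ₗ[ℝ] ℝ) (m n : ℕ) :
    (op L m * op L n).natDegree < m + n + 1 := by
  rw [(op_monic L m).1.natDegree_mul (op_monic L n).1, (op_monic L m).2, (op_monic L n).2]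
  omega

theorem contDiff_nrm_of {n : ℕ} (h : SmoothCoeff fun y => op (Lx y) n) :
    ContDiff ℝ (⊤ : ℕ∞) fun y => nrm (Lx y) n :=
  (h.mul h).Lx fun _ => natDegree_op_mul _ n n

theorem smoothCoeff_op (n : ℕ) : SmoothCoeff fun y => op (Lx y) n := by
  induction n using Nat.strong_induction_on with
  | _ n ih =>
    cases n with
    | zero => exact smoothCoeff_const 1
    | succ n =>
      have hn := ih n (by omega)
      have hA : ContDiff ℝ (⊤ : ℕ∞) fun y => recA (Lx y) n := by
        refine ContDiff.div ?_ (contDiff_nrm_of hn) fun y => (nrm_pos (Lx_pos y) n).ne'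
        refine ((smoothCoeff_const X).mul (hn.mul hn)).Lx (N := n + n + 2) fun y => ?_
        refine lt_of_le_of_lt (natDegree_mul_le) ?_
        have := natDegree_op_mul (GUE.Lx y) n n
        rw [natDegree_X]; omega
      have hB : ContDiff ℝ (⊤ : ℕ∞) fun y => recB (Lx y) n := by
        cases n with
        | zero => exact contDiff_const
        | succ m =>
          exact (contDiff_nrm_of hn).div (contDiff_nrm_of (ih m (by omega)))
            fun y => (nrm_pos (Lx_pos y) m).ne'
      simp only [op_succ]
      exact (((smoothCoeff_const X).sub (smoothCoeff_C hA)).mul hn).sub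
        ((smoothCoeff_C hB).mul (ih (n - 1) (by omega)))

theorem contDiff_nrm (n : ℕ) : ContDiff ℝ (⊤ : ℕ∞) fun y => nrm (Lx y) n :=
  contDiff_nrm_of (smoothCoeff_op n)

/-- `∂P_n/∂x` exists and, `P_n` being monic, has degree less than `n`; it is therefore orthogonal to
`P_n`. -/
theorem exists_op_deriv (n : ℕ) (x : ℝ) :
    ∃ D : ℝ[X], D.degree < n ∧ HasCoeffDerivAt (fun y => op (Lx y) n) D x := by
  refine ⟨∑ k ∈ Finset.range n, C (deriv (fun y => (op (Lx y) n).coeff k) x) * X ^ k, ?_, ?_⟩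
  · rw [degree_lt_iff_coeff_zero]
    intro m hm
    simp only [finsetSum_coeff, coeff_C_mul, coeff_X_pow]
    refine Finset.sum_eq_zero fun k hk => ?_
    rw [if_neg (by have := Finset.mem_range.1 hk; omega), mul_zero]
  · intro m
    simp only [finsetSum_coeff, coeff_C_mul, coeff_X_pow, mul_ite, mul_one, mul_zero,
      Finset.sum_ite_eq, Finset.mem_range]
    split_ifs with h
    · exact ((smoothCoeff_op n m).differentiable (by simp) x).hasDerivAt
    · rcases (not_lt.1 h).eq_or_lt with rfl | h
      · simp only [op_coeff_self]; exact hasDerivAt_const _ _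
      · simp only [op_coeff_of_lt _ h]; exact hasDerivAt_const _ _

theorem hasDerivAt_nrm (n : ℕ) (x : ℝ) :
    HasDerivAt (fun y => nrm (Lx y) n) ((op (Lx x) n).eval x ^ 2 * wt x) x := by
  obtain ⟨D, hD, hd⟩ := exists_op_deriv n x
  have h := (hd.mul hd).Lx fun y => natDegree_op_mul (GUE.Lx y) n n
  refine h.congr_deriv ?_
  rw [map_add, mul_comm D, op_orth (Lx_pos x) n D hD, eval_mul]
  ring

/-- The equation `h_n' = h_n R_n`. -/
theorem hasDerivAt_nrm' (n : ℕ) (x : ℝ) :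
    HasDerivAt (fun y => nrm (Lx y) n) (nrm (Lx x) n * RR (Lx x) x (wt x) n) x := by
  refine (hasDerivAt_nrm n x).congr_deriv ?_
  have := (nrm_pos (Lx_pos x) n).ne'
  rw [RR]; field_simp

/-- Obtained by differentiating `L_x(P_{n+1} P_n) = 0`. -/
theorem hasDerivAt_subCoeff (n : ℕ) (x : ℝ) :
    HasDerivAt (fun y => subCoeff (Lx y) n) (-rr (Lx x) x (wt x) n) x := by
  cases n with
  | zero =>
    simp only [subCoeff_zero, rr_zero, neg_zero]; exact hasDerivAt_const _ _
  | succ n =>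
    have hL := Lx_pos x
    obtain ⟨D, hD, hd⟩ := exists_op_deriv (n + 1) x
    obtain ⟨E, hE, he⟩ := exists_op_deriv n x
    have h := (hd.mul he).Lx fun y => natDegree_op_mul (GUE.Lx y) (n + 1) n
    have h0 : (fun y => Lx y (op (Lx y) (n + 1) * op (Lx y) n)) = fun _ => 0 := by
      ext y
      refine op_orth (Lx_pos y) _ _ ?_
      rw [op_degree]; exact_mod_cast n.lt_succ_self
    rw [h0] at h
    have h1 := h.unique (hasDerivAt_const x 0)
    rw [map_add, mul_comm D, L_op_mul hL hD,
      op_orth hL _ E (hE.trans (by exact_mod_cast n.lt_succ_self)), eval_mul] at h1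
    simp only [subCoeff_succ]
    refine (hd n).congr_deriv ?_
    have := (nrm_pos hL n).ne'
    rw [rr_succ hL]
    field_simp
    linarith

theorem hasDerivAt_recB (n : ℕ) (x : ℝ) :
    HasDerivAt (fun y => recB (Lx y) (n + 1)) (recB (Lx x) (n + 1) *
      (RR (Lx x) x (wt x) (n + 1) - RR (Lx x) x (wt x) n)) x := by
  have h1 := (nrm_pos (Lx_pos x) n).ne'
  refine ((hasDerivAt_nrm' (n + 1) x).div (hasDerivAt_nrm' n x) h1).congr_deriv ?_
  rw [recB]; field_simp

/-- The Toda equation, from `R_n = -2 α_n = -2 (c_n - c_{n+1})` and `c_n' = -r_n`. -/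
theorem hasDerivAt_RR (n : ℕ) (x : ℝ) :
    HasDerivAt (fun y => RR (Lx y) y (wt y) n)
      (2 * rr (Lx x) x (wt x) n - 2 * rr (Lx x) x (wt x) (n + 1)) x := by
  simp only [fun y => RR_eq (Lx_pos y) (Lx_ibp y) n, recA_eq]
  refine (((hasDerivAt_subCoeff n x).sub (hasDerivAt_subCoeff (n + 1) x)).const_mul
    (-2)).congr_deriv ?_
  ring

/-! ### Heine's formula -/

/-- Column operations replace the powers in the Vandermonde determinant by monic polynomials; the
square absorbs the sign convention in `Vdm`. -/
theorem vdm_sq (n : ℕ) (z : Fin n → ℝ) (L : ℝ[X] →ₗ[ℝ] ℝ) :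
    Vdm n z ^ 2 = (Matrix.of fun i j : Fin n => (op L j).eval (z i)).det ^ 2 := by
  rw [← Matrix.det_eval_matrixOfPolynomials_eq_det_vandermonde z (fun j : Fin n => op L j)
    (fun i => (op_monic L i).2) (fun i => (op_monic L i).1), Matrix.det_vandermonde, Vdm,
    ← Finset.prod_pow, ← Finset.univ_product_univ, Finset.prod_filter, Finset.prod_product,
    ← Finset.prod_pow]
  refine Finset.prod_congr rfl fun i _ => ?_
  rw [← Finset.prod_pow, ← Finset.prod_filter]
  refine Finset.prod_congr ?_ fun j _ => by ring
  ext j; simp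

theorem L_op_op (x : ℝ) (i j : ℕ) :
    Lx x (op (Lx x) i * op (Lx x) j) = if i = j then nrm (Lx x) i else 0 := by
  rcases lt_trichotomy i j with h | rfl | h
  · rw [if_neg h.ne, mul_comm]
    exact op_orth (Lx_pos x) _ _ (by rw [op_degree]; exact_mod_cast h)
  · rw [if_pos rfl, nrm]
  · rw [if_neg h.ne']
    exact op_orth (Lx_pos x) _ _ (by rw [op_degree]; exact_mod_cast h)

/-- Heine's formula: expand both determinants over permutations and use Fubini; by orthogonality
only equal pairs of permutations contribute, and each contributes the product of the norms. -/
theorem heine (n : ℕ) (x : ℝ) :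
    (∫ z : Fin n → ℝ in Set.univ.pi (fun _ => Set.Iic x),
        (Vdm n z) ^ 2 * ∏ k, Real.exp (-(z k) ^ 2))
      = n.factorial * ∏ k ∈ Finset.range n, nrm (Lx x) k := by
  set P := op (Lx x) with hP
  have e : ∀ z : Fin n → ℝ, (Vdm n z) ^ 2 * ∏ k, Real.exp (-(z k) ^ 2)
      = ∑ σ : Equiv.Perm (Fin n), ∑ τ : Equiv.Perm (Fin n),
        ((Equiv.Perm.sign σ : ℤ) : ℝ) * ((Equiv.Perm.sign τ : ℤ) : ℝ) *
          ∏ k, ((P (σ k) * P (τ k)).eval (z k) * wt (z k)) := by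
    intro z
    rw [vdm_sq n z (Lx x), sq, ← Matrix.det_transpose, Matrix.det_apply', Finset.sum_mul_sum,
      Finset.sum_mul]
    refine Finset.sum_congr rfl fun σ _ => ?_
    rw [Finset.sum_mul]
    refine Finset.sum_congr rfl fun τ _ => ?_
    simp only [Matrix.transpose_apply, Matrix.of_apply, eval_mul, Finset.prod_mul_distrib, wt]
    ring
  have hint : ∀ p : ℝ[X], Integrable (fun z => p.eval z * wt z) (volume.restrict (Iic x)) :=
    fun p => (integrable_poly p).integrableOn
  rw [volume_pi, Measure.restrict_pi_pi]
  simp only [e]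
  have hI : ∀ σ τ : Equiv.Perm (Fin n), Integrable (fun z : Fin n → ℝ =>
      ((Equiv.Perm.sign σ : ℤ) : ℝ) * ((Equiv.Perm.sign τ : ℤ) : ℝ) *
          ∏ k, ((P (σ k) * P (τ k)).eval (z k) * wt (z k)))
      (Measure.pi fun _ => volume.restrict (Iic x)) := fun σ τ =>
    (Integrable.fintype_prod (f := fun k z => (P (σ k) * P (τ k)).eval z * wt z)
      fun k => hint _).const_mul _
  rw [integral_finsetSum _ fun σ _ => integrable_finsetSum _ fun τ _ => hI σ τ]
  have hσ : ∀ σ : Equiv.Perm (Fin n), (∫ z : Fin n → ℝ, ∑ τ : Equiv.Perm (Fin n),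
      ((Equiv.Perm.sign σ : ℤ) : ℝ) * ((Equiv.Perm.sign τ : ℤ) : ℝ) *
          ∏ k, ((P (σ k) * P (τ k)).eval (z k) * wt (z k))
      ∂(Measure.pi fun _ => volume.restrict (Iic x))) = ∏ k ∈ Finset.range n, nrm (Lx x) k := by
    intro σ
    rw [integral_finsetSum _ fun τ _ => hI σ τ]
    have hτ : ∀ τ : Equiv.Perm (Fin n), (∫ z : Fin n → ℝ,
        ((Equiv.Perm.sign σ : ℤ) : ℝ) * ((Equiv.Perm.sign τ : ℤ) : ℝ) *
          ∏ k, ((P (σ k) * P (τ k)).eval (z k) * wt (z k))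
        ∂(Measure.pi fun _ => volume.restrict (Iic x)))
        = if σ = τ then ∏ k ∈ Finset.range n, nrm (Lx x) k else 0 := by
      intro τ
      rw [integral_const_mul,
        integral_fintype_prod_eq_prod (fun k z => (P (σ k) * P (τ k)).eval z * wt z)]
      simp only [← Lx_apply, hP, L_op_op]
      split_ifs with h
      · subst h
        have hs : ((Equiv.Perm.sign σ : ℤ) : ℝ) * ((Equiv.Perm.sign σ : ℤ) : ℝ) = 1 := by
          
          rw [← Int.cast_mul, ← Units.val_mul, Int.units_mul_self]; simp
        simp only [if_true, hs, one_mul]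
        rw [Equiv.prod_comp σ (fun k : Fin n => nrm (Lx x) k),
          Fin.prod_univ_eq_prod_range (fun k => nrm (Lx x) k)]
      · obtain ⟨k, hk⟩ : ∃ k, σ k ≠ τ k := by
          by_contra! hc; exact h (Equiv.ext hc)
        rw [Finset.prod_eq_zero (Finset.mem_univ k), mul_zero]
        rw [if_neg]
        exact fun hc => hk (Fin.ext hc)
    rw [Finset.sum_congr rfl fun τ _ => hτ τ]
    simp
  simp only [hσ]
  simp [Fintype.card_perm]

end Analysis
end GUE

/-- The logarithmic derivative of the GUE largest-eigenvalue distribution satisfies a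
third-order ODE (a form of Painlevé IV). -/
theorem stmt17 (n : ℕ) (hn : 1 ≤ n) :
    let G : ℝ → ℝ := fun x =>
      ∫ z : Fin n → ℝ in Set.univ.pi (fun _ => Set.Iic x),
        (Vdm n z) ^ 2 * ∏ k, Real.exp (-(z k) ^ 2)
    let f : ℝ → ℝ := fun x => deriv G x / G x
    ContDiff ℝ (⊤ : ℕ∞) G ∧ (∀ x, 0 < G x) ∧
    (∀ x, iteratedDeriv 3 f x + 6 * (deriv f x) ^ 2
        + 4 * (2 * (n : ℝ) - x ^ 2) * deriv f x + 4 * x * f x = 0) := by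
  open GUE in
  intro G f
  have hG : G = fun x => (n.factorial : ℝ) * ∏ k ∈ Finset.range n, nrm (Lx x) k :=
    funext fun x => heine n x
  have hpos : ∀ x, 0 < G x := fun x => by
    rw [hG]
    exact mul_pos (by exact_mod_cast n.factorial_pos)
      (Finset.prod_pos fun k _ => nrm_pos (Lx_pos x) k)
  have hsm : ContDiff ℝ (⊤ : ℕ∞) G := by
    rw [hG]
    exact contDiff_const.mul (contDiff_prod fun k _ => contDiff_nrm k)
  refine ⟨hsm, hpos, ?_⟩
  -- `f = ∑ R_k = ∑ 2 (c_{k+1} - c_k)` telescopes.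
  have hf : f = fun x => 2 * subCoeff (Lx x) n := by
    ext x
    change logDeriv G x = _
    rw [hG, logDeriv_const_mul _ _ (by positivity), logDeriv_prod]
    · have : ∀ k ∈ Finset.range n, logDeriv (fun y => nrm (Lx y) k) x
          = 2 * subCoeff (Lx x) (k + 1) - 2 * subCoeff (Lx x) k := by
        intro k _
        rw [logDeriv_apply, (hasDerivAt_nrm' k x).deriv,
          mul_div_cancel_left₀ _ (nrm_pos (Lx_pos x) k).ne', RR_eq (Lx_pos x) (Lx_ibp x), recA_eq]
        ring
      rw [Finset.sum_congr rfl this, Finset.sum_range_sub (fun k => 2 * subCoeff (Lx x) k),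
        subCoeff_zero]
      ring
    · exact fun k _ => (nrm_pos (Lx_pos x) k).ne'
    · exact fun k _ => (hasDerivAt_nrm k x).differentiableAt
  obtain ⟨m, rfl⟩ : ∃ m, n = m + 1 := ⟨n - 1, by omega⟩
  -- With `n = m + 1`: `a = R_n`, `b = R_{n-1}`, `β = β_n`, `r = r_n`.
  set a : ℝ → ℝ := fun x => RR (Lx x) x (wt x) (m + 1) with ha
  set b : ℝ → ℝ := fun x => RR (Lx x) x (wt x) m with hb
  set β : ℝ → ℝ := fun x => recB (Lx x) (m + 1) with hβ
  set r : ℝ → ℝ := fun x => rr (Lx x) x (wt x) (m + 1) with hr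
  have hrβ : ∀ x, r x = (m + 1) - 2 * β x := fun x => rr_eq (Lx_pos x) (Lx_ibp x) m
  have dβ : ∀ x, HasDerivAt β (β x * (a x - b x)) x := fun x => hasDerivAt_recB m x
  have da : ∀ x, HasDerivAt a (-2 * x * a x - a x ^ 2 + 4 * r x) x := fun x => by
    refine (hasDerivAt_RR (m + 1) x).congr_deriv ?_
    have h1 := rr_add (x := x) (w := wt x) (Lx_pos x) (m + 1)
    have h2 := RR_eq (Lx_pos x) (Lx_ibp x) (m + 1)
    have h3 : recA (Lx x) (m + 1) = -(a x) / 2 := by simp only [ha]; rw [h2]; ring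
    rw [h3] at h1
    simp only [ha, hr] at h1 ⊢
    linear_combination (-2) * h1
  have db : ∀ x, HasDerivAt b (2 * x * b x + b x ^ 2 - 4 * r x) x := fun x => by
    refine (hasDerivAt_RR m x).congr_deriv ?_
    have h1 := rr_add (x := x) (w := wt x) (Lx_pos x) m
    have h2 := RR_eq (Lx_pos x) (Lx_ibp x) m
    have h3 : recA (Lx x) m = -(b x) / 2 := by simp only [hb]; rw [h2]; ring
    rw [h3] at h1
    simp only [hb, hr] at h1 ⊢
    linear_combination 2 * h1
  have f1 : deriv f = fun x => -2 * (((m : ℝ) + 1) - 2 * β x) := by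
    ext x
    rw [hf, ((hasDerivAt_subCoeff (m + 1) x).const_mul 2).deriv, ← hrβ]
    simp only [hr]; ring
  have f2 : deriv (deriv f) = fun x => 4 * (β x * (a x - b x)) := by
    ext x
    rw [f1]
    refine HasDerivAt.deriv ?_
    refine ((((dβ x).const_mul 2).const_sub _).const_mul (-2)).congr_deriv ?_
    ring
  have f3 : iteratedDeriv 3 f = deriv (deriv (deriv f)) := by
    simp [iteratedDeriv_succ]
  intro x
  have d3 := (((dβ x).mul ((da x).sub (db x))).const_mul 4).deriv
  have h1 : r x ^ 2 = β x * a x * b x := rr_sq (Lx_pos x) m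
  have h2 : f x = 2 * β x * (a x + b x) - 2 * x * r x := by
    rw [hf]; exact two_subCoeff_eq (Lx_pos x) (Lx_ibp x) m
  have h3 := hrβ x
  rw [f3, f2, f1, h2]
  simp only
  have d3' : deriv (fun x => 4 * (β x * (a x - b x))) x = _ := d3
  rw [d3']
  push_cast
  simp only [Pi.sub_apply]
  linear_combination 8 * h1 - (8 * ((m + 1 - 2 * β x) + r x) - 32 * β x + 8 * x ^ 2) * h3
end

section
/- Let n ≥ 1 and a > −1, and define G : (0,∞) → ℝ by G(x) = ∫_{[0,x]^n} Δ_n(z)² ∏_{k=1}^n z_k^a e^{−z_k} dz₁…dz_n. Then G is smooth and strictly positive on (0,∞), and f(x) := x·G'(x)/G(x) (that is, f(x) = x·d/dx log P_n(max eigenvalue ≤ x) for the Laguerre Hermitian ensemble) satisfies the third-order ODE x² f''' + x f'' + 6x (f')² − 4 f f' − ((a − x)² − 4nx) f' − (2n + a − x) f = 0 on (0,∞). -/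
/-!
The substitution `z = x u` turns the Laguerre integral into `G x = x ^ N * E_x[1]`, where
`N = n (n + a)` and `E_t[F]` (`LaguerrePV.ex`) is the integral over the cube `[0, 1] ^ n` of the
polynomial `F` against `Δ_n(u)² ∏ u_i ^ a e ^ (-t u_i)`. Differentiation in `t` inserts `-p_1`,
where `p_k = ∑ u_i ^ k` are the power sums, so with `R_k = E_x[p_1 ^ k] / E_x[1]` one has
`f = N - x R_1` and `R_k' = -R_{k+1} + R_k R_1`. In particular `f` and its first three derivatives
are explicit polynomials in `x` and `R_1, …, R_4`, and the differential equation is a polynomial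
relation between these moments. It follows from two sources.

* Loop equations (`loop_zero`, `loop_one`): integration by parts along the vector fields
  `∑ u_i ^ (k+1) (1 - u_i) ∂_i`, `k = 0, 1`, whose boundary terms vanish at `u_i = 0` and `u_i = 1`.
  Applied to `1`, `p_1` and `p_2` they express the expectations of `p_2`, `p_3`, `p_1 p_2`, `p_2²`
  and `p_1 p_3` through the moments of `p_1`.
* The bilinear relation `kp_relation` (the KP equation in Plücker form). By Heine's formula `ex_prod`
  the expectation of `∏ (1 - s u_i)(1 - r u_i)` is `n!` times a Hankel determinant, and
  `hankel_rank_two` shows that this function of `(s, r)`, after multiplication by `s - r`, is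
  antisymmetric of rank two. Comparing the coefficients of such a kernel (`plucker_coeff`) and
  rewriting elementary symmetric polynomials by Newton's identities (`gen_coeff`) gives the relation.

`ratio_relation` eliminates the auxiliary expectations.
-/

open scoped BigOperators
open MeasureTheory

namespace LaguerrePV

open MvPolynomial

/-! ### The truncated Laguerre weight and its moments -/

/-- The weight `u ^ a * e ^ (-t u)`, in which the upper endpoint of the Laguerre integral has been
scaled to `1` and become the parameter `t` of the exponential. -/
noncomputable def weight (a t u : ℝ) : ℝ := u ^ a * Real.exp (-(t * u))

/-- The `k`-th moment of `weight a t` on `[0, 1]`. -/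
noncomputable def moment (a t : ℝ) (k : ℕ) : ℝ := ∫ u in Set.Icc (0 : ℝ) 1, u ^ k * weight a t u

lemma integrable_rpow_Icc {a : ℝ} (ha : -1 < a) :
    Integrable (fun u : ℝ => u ^ a) (volume.restrict (Set.Icc 0 1)) := by
  have h := intervalIntegral.intervalIntegrable_rpow' (a := 0) (b := 1) ha
  rwa [intervalIntegrable_iff_integrableOn_Icc_of_le zero_le_one] at h

lemma integrable_mul_rpow {a : ℝ} (ha : -1 < a) {g : ℝ → ℝ} (hg : Continuous g) :
    Integrable (fun u : ℝ => g u * u ^ a) (volume.restrict (Set.Icc 0 1)) := by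
  obtain ⟨C, hC⟩ := (isCompact_Icc (a := (0 : ℝ)) (b := 1)).exists_bound_of_continuousOn
    hg.continuousOn
  refine (integrable_rpow_Icc ha).bdd_mul (c := C) hg.aestronglyMeasurable ?_
  filter_upwards [ae_restrict_mem measurableSet_Icc] with u hu using hC u hu

lemma integrable_mul_weight {a : ℝ} (ha : -1 < a) (t : ℝ) {g : ℝ → ℝ} (hg : Continuous g) :
    Integrable (fun u : ℝ => g u * weight a t u) (volume.restrict (Set.Icc 0 1)) := by
  have := integrable_mul_rpow ha (g := fun u => g u * Real.exp (-(t * u))) (by fun_prop)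
  refine this.congr (Filter.Eventually.of_forall fun u => ?_)
  simp only [weight]; ring

/-- Integration by parts against the weight: the function `u ^ (k + 1 + a) (1 - u) e ^ (-t u)`
vanishes at both endpoints of `[0, 1]`. -/
lemma moment_recurrence {a : ℝ} (ha : -1 < a) (t : ℝ) (k : ℕ) :
    (k + a + 1) * moment a t k - (k + a + 2 + t) * moment a t (k + 1) + t * moment a t (k + 2)
      = 0 := by
  set f' : ℝ → ℝ := fun u =>
    ((k + a + 1) * u ^ k - (k + a + 2 + t) * u ^ (k + 1) + t * u ^ (k + 2)) * weight a t u
  have hk : (0 : ℝ) < k + 1 + a := by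
    have : (0 : ℝ) ≤ k := k.cast_nonneg
    linarith
  have hint : Integrable f' (volume.restrict (Set.Icc 0 1)) :=
    integrable_mul_weight ha t (by fun_prop)
  have hFTC : ∫ u in (0 : ℝ)..1, f' u = 0 := by
    have := intervalIntegral.integral_eq_sub_of_hasDerivAt_of_le (a := 0) (b := 1) (f' := f')
      (f := fun u : ℝ => u ^ ((k : ℝ) + 1 + a) * ((1 - u) * Real.exp (-(t * u)))) zero_le_one
      ?_ ?_ ?_
    · rw [this]; simp [Real.zero_rpow hk.ne']
    · refine ContinuousOn.mul ?_ (by fun_prop)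
      exact (Real.continuous_rpow_const hk.le).continuousOn
    · intro u hu
      have h1 := Real.hasDerivAt_rpow_const (x := u) (p := (k : ℝ) + 1 + a) (Or.inl hu.1.ne')
      have h2 : HasDerivAt (fun u : ℝ => (1 - u) * Real.exp (-(t * u)))
          ((-1) * Real.exp (-(t * u)) + (1 - u) * (Real.exp (-(t * u)) * (-(t * 1)))) u :=
        ((hasDerivAt_id u).const_sub 1).mul (((hasDerivAt_id u).const_mul t).neg.exp)
      refine (h1.mul h2).congr_deriv ?_
      have e1 : u ^ ((k : ℝ) + 1 + a - 1) = u ^ k * u ^ a := by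
        rw [show (k : ℝ) + 1 + a - 1 = k + a by ring, Real.rpow_add hu.1, Real.rpow_natCast]
      have e2 : u ^ ((k : ℝ) + 1 + a) = u ^ k * u * u ^ a := by
        rw [Real.rpow_add hu.1, Real.rpow_add hu.1, Real.rpow_natCast, Real.rpow_one]
      simp only [f', weight, e1, e2]
      ring
    · rw [intervalIntegrable_iff_integrableOn_Ioc_of_le zero_le_one]
      exact IntegrableOn.mono_set hint Set.Ioc_subset_Icc_self
  rw [intervalIntegral.integral_of_le zero_le_one, ← integral_Icc_eq_integral_Ioc] at hFTC
  rw [← hFTC]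
  have hi : ∀ j : ℕ, Integrable (fun u => u ^ j * weight a t u) (volume.restrict (Set.Icc 0 1)) :=
    fun j => integrable_mul_weight ha t (by fun_prop)
  simp only [moment]
  rw [← integral_const_mul, ← integral_const_mul, ← integral_const_mul,
    ← integral_sub ((hi _).const_mul _) ((hi _).const_mul _)]
  refine (integral_add (((hi _).const_mul _).sub ((hi _).const_mul _))
    ((hi _).const_mul _)).symm.trans ?_
  congr 1
  ext u
  simp only [f', Pi.sub_apply]
  ring

/-! ### The weighted integral over the cube as a functional on polynomials -/

variable {n : ℕ}

/-- The product weight on the cube. -/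
noncomputable def cubeWeight (a t : ℝ) (z : Fin n → ℝ) : ℝ := ∏ i, weight a t (z i)

/-- Lebesgue measure on the cube `[0, 1] ^ n`. -/
noncomputable def cube (n : ℕ) : Measure (Fin n → ℝ) :=
  volume.restrict (Set.univ.pi fun _ => Set.Icc 0 1)

lemma cube_eq_pi : cube n = Measure.pi fun _ => volume.restrict (Set.Icc 0 1) := by
  rw [cube, volume_pi, Measure.restrict_pi_pi]

lemma ae_mem_cube : ∀ᵐ z ∂(cube n), z ∈ Set.univ.pi fun _ : Fin n => Set.Icc (0 : ℝ) 1 :=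
  ae_restrict_mem (MeasurableSet.univ_pi fun _ => measurableSet_Icc)

lemma cubeWeight_eq (a t : ℝ) (z : Fin n → ℝ) :
    cubeWeight a t z = Real.exp (-(t * ∑ i, z i)) * ∏ i, (z i) ^ a := by
  simp only [cubeWeight, weight, Finset.prod_mul_distrib, ← Real.exp_sum, Finset.mul_sum,
    Finset.sum_neg_distrib]
  ring

lemma integrable_mul_prod_rpow {a : ℝ} (ha : -1 < a) {F : (Fin n → ℝ) → ℝ} (hF : Continuous F) :
    Integrable (fun z => F z * ∏ i, (z i) ^ a) (cube n) := by
  obtain ⟨C, hC⟩ := (isCompact_univ_pi fun _ : Fin n =>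
    isCompact_Icc (a := (0 : ℝ)) (b := 1)).exists_bound_of_continuousOn hF.continuousOn
  have h0 : Integrable (fun z : Fin n → ℝ => ∏ i, (z i) ^ a) (cube n) := by
    rw [cube_eq_pi]
    exact Integrable.fintype_prod (f := fun _ u => u ^ a) fun _ => integrable_rpow_Icc ha
  refine h0.bdd_mul (c := C) hF.aestronglyMeasurable ?_
  filter_upwards [ae_mem_cube] with z hz using hC z hz

lemma integrable_mul_cubeWeight {a : ℝ} (ha : -1 < a) (t : ℝ) {F : (Fin n → ℝ) → ℝ}
    (hF : Continuous F) : Integrable (fun z => F z * cubeWeight a t z) (cube n) := by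
  have := integrable_mul_prod_rpow ha (F := fun z => F z * Real.exp (-(t * ∑ i, z i)))
    (by fun_prop)
  refine this.congr (Filter.Eventually.of_forall fun z => ?_)
  simp only [cubeWeight_eq]; ring

/-- The functional `Q ↦ ∫_{[0,1]^n} Q(z) ∏ z_i ^ a e ^ (-t z_i) dz` on polynomials. -/
noncomputable def pairing (n : ℕ) {a : ℝ} (ha : -1 < a) (t : ℝ) :
    MvPolynomial (Fin n) ℝ →ₗ[ℝ] ℝ where
  toFun Q := ∫ z, eval z Q * cubeWeight a t z ∂(cube n)
  map_add' P Q := by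
    rw [← integral_add (integrable_mul_cubeWeight ha t (MvPolynomial.continuous_eval P))
      (integrable_mul_cubeWeight ha t (MvPolynomial.continuous_eval Q))]
    simp only [map_add, add_mul]
  map_smul' c Q := by
    simp only [smul_eval, RingHom.id_apply, smul_eq_mul, mul_assoc, integral_const_mul]

lemma pairing_apply {a : ℝ} (ha : -1 < a) (t : ℝ) (Q : MvPolynomial (Fin n) ℝ) :
    pairing n ha t Q = ∫ z, eval z Q * cubeWeight a t z ∂(cube n) := rfl

/-- Fubini for products of one-variable functions. -/
lemma integral_prod_mul_cubeWeight (a t : ℝ) (g : Fin n → ℝ → ℝ) :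
    ∫ z, (∏ i, g i (z i)) * cubeWeight a t z ∂(cube n)
      = ∏ i, ∫ u in Set.Icc (0 : ℝ) 1, g i u * weight a t u := by
  simp only [cubeWeight, ← Finset.prod_mul_distrib]
  rw [cube_eq_pi]
  exact integral_fintype_prod_eq_prod (fun i u => g i u * weight a t u)

lemma pairing_monomial {a : ℝ} (ha : -1 < a) (t : ℝ) (s : Fin n →₀ ℕ) (c : ℝ) :
    pairing n ha t (monomial s c) = c * ∏ i, moment a t (s i) := by
  simp only [moment, ← integral_prod_mul_cubeWeight a t (fun i u => u ^ s i), pairing_apply,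
    eval_monomial, Finsupp.prod_fintype _ _ fun _ => pow_zero _, mul_assoc, integral_const_mul]

lemma pairing_X_pow_mul_monomial {a : ℝ} (ha : -1 < a) (t : ℝ) (i : Fin n) (k : ℕ)
    (s : Fin n →₀ ℕ) (c : ℝ) :
    pairing n ha t (X i ^ k * monomial s c)
      = moment a t (s i + k) * (c * ∏ j ∈ Finset.univ.erase i, moment a t (s j)) := by
  rw [X_pow_eq_monomial, monomial_mul, pairing_monomial,
    ← Finset.mul_prod_erase _ _ (Finset.mem_univ i)]
  have : ∏ j ∈ Finset.univ.erase i, moment a t ((Finsupp.single i k + s) j)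
      = ∏ j ∈ Finset.univ.erase i, moment a t (s j) := by
    refine Finset.prod_congr rfl fun j hj => ?_
    rw [Finsupp.add_apply, Finsupp.single_eq_of_ne (Finset.ne_of_mem_erase hj), zero_add]
  rw [this, Finsupp.add_apply, Finsupp.single_eq_same, add_comm k]
  ring

/-- Integration by parts in the `i`-th variable. -/
lemma pairing_pderiv {a : ℝ} (ha : -1 < a) (t : ℝ) (i : Fin n) (Q : MvPolynomial (Fin n) ℝ) :
    pairing n ha t (X i * (1 - X i) * pderiv i Q
      + (C (a + 1) - C (a + 2 + t) * X i + C t * X i ^ 2) * Q) = 0 := by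
  induction Q using MvPolynomial.induction_on' with
  | add p q hp hq =>
    have h := congrArg₂ (· + ·) hp hq
    simp only [← map_add (pairing n ha t), add_zero] at h
    rw [← h]
    congr 1
    simp only [map_add]
    ring
  | monomial s c =>
    have h := X_mul_pderiv_monomial (i := i) (m := s) (r := c)
    have e : X i * (1 - X i) * pderiv i (monomial s c)
        + (C (a + 1) - C (a + 2 + t) * X i + C t * X i ^ 2) * monomial s c
        = ((s i : ℝ) + a + 1) • (X i ^ 0 * monomial s c)
          - ((s i : ℝ) + a + 2 + t) • (X i ^ 1 * monomial s c)
          + t • (X i ^ 2 * monomial s c) := by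
      rw [mul_comm (X i) (1 - X i), mul_assoc, h, nsmul_eq_mul, ← map_natCast (C (σ := Fin n))]
      simp only [smul_eq_C_mul, map_add, map_one, map_ofNat, map_natCast]
      ring
    rw [e]
    simp only [map_add, map_sub, map_smul, pairing_X_pow_mul_monomial, smul_eq_mul]
    linear_combination (c * ∏ j ∈ Finset.univ.erase i, moment a t (s j)) *
      moment_recurrence ha t (s i)

/-! ### Loop equations -/

/-- The power sum `p_k = ∑ X_i ^ k`. -/
noncomputable def pw (n k : ℕ) : MvPolynomial (Fin n) ℝ := ∑ i, X i ^ k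

/-- The Vandermonde polynomial. -/
noncomputable def vand (n : ℕ) : MvPolynomial (Fin n) ℝ :=
  ∏ p ∈ Finset.univ.filter (fun p : Fin n × Fin n => p.1 < p.2), (X p.1 - X p.2)

/-- The vector field `∑ x_i ^ (k + 1) (1 - x_i) ∂_i`, tangent to the faces of the cube. -/
noncomputable def field (n k : ℕ) :
    Derivation ℝ (MvPolynomial (Fin n) ℝ) (MvPolynomial (Fin n) ℝ) :=
  ∑ i, ((X i ^ (k + 1) * (1 - X i) : MvPolynomial (Fin n) ℝ)) • pderiv i

lemma field_apply (k : ℕ) (Q : MvPolynomial (Fin n) ℝ) :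
    field n k Q = ∑ i, X i ^ (k + 1) * (1 - X i) * pderiv i Q := by
  have : (field n k : MvPolynomial (Fin n) ℝ → MvPolynomial (Fin n) ℝ) =
      Derivation.coeFnAddMonoidHom (field n k) := rfl
  rw [this, field, map_sum, Finset.sum_apply]
  rfl

lemma field_X (k : ℕ) (i : Fin n) : field n k (X i) = X i ^ (k + 1) * (1 - X i) := by
  rw [field_apply, Finset.sum_eq_single i]
  · simp
  · intro j _ hj
    simp [pderiv_X_of_ne hj.symm]
  · simp

/-- The divergence theorem for `field n k` against the product weight. -/
lemma pairing_field {a : ℝ} (ha : -1 < a) (t : ℝ) (k : ℕ) (Q : MvPolynomial (Fin n) ℝ) :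
    pairing n ha t (field n k Q + (C (k + a + 1) * pw n k - C (k + a + 2 + t) * pw n (k + 1)
      + C t * pw n (k + 2)) * Q) = 0 := by
  have h : field n k Q + (C (k + a + 1) * pw n k - C (k + a + 2 + t) * pw n (k + 1)
      + C t * pw n (k + 2)) * Q = ∑ i, (X i * (1 - X i) * pderiv i (X i ^ k * Q)
      + (C (a + 1) - C (a + 2 + t) * X i + C t * X i ^ 2) * (X i ^ k * Q)) := by
    simp only [field_apply, pw, Finset.mul_sum, ← Finset.sum_add_distrib,
      ← Finset.sum_sub_distrib, Finset.sum_mul]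
    refine Finset.sum_congr rfl fun i _ => ?_
    rw [Derivation.leibniz, Derivation.leibniz_pow, pderiv_X_self]
    simp only [smul_eq_mul, nsmul_eq_mul, mul_one, map_add, map_one, map_ofNat, map_natCast]
    rcases k with _ | k
    · simp only [Nat.cast_zero]; ring
    · simp only [Nat.add_sub_cancel]; push_cast; ring
  rw [h, map_sum]
  exact Finset.sum_eq_zero fun i _ => pairing_pderiv ha t i _

lemma derivation_prod {ι A : Type*} [CommRing A] [Algebra ℝ A] (D : Derivation ℝ A A)
    (S : Finset ι) (f g : ι → A) (h : ∀ i ∈ S, D (f i) = f i * g i) :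
    D (∏ i ∈ S, f i) = (∏ i ∈ S, f i) * ∑ i ∈ S, g i := by
  classical
  induction S using Finset.induction_on with
  | empty => simp
  | insert i S hi ih =>
    rw [Finset.prod_insert hi, Finset.sum_insert hi, Derivation.leibniz, h i (by simp),
      ih fun j hj => h j (by simp [hj])]
    simp only [smul_eq_mul]
    ring

lemma two_mul_sum_lt {A : Type*} [CommRing A] (h : Fin n → Fin n → A)
    (hs : ∀ i j, h i j = h j i) :
    2 * ∑ p ∈ Finset.univ.filter (fun p : Fin n × Fin n => p.1 < p.2), h p.1 p.2
      = ∑ i, ∑ j, h i j - ∑ i, h i i := by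
  have e1 : ∑ p ∈ Finset.univ.filter (fun p : Fin n × Fin n => p.1 < p.2), h p.1 p.2
      = ∑ i, ∑ j, if i < j then h i j else 0 := by
    rw [Finset.sum_filter, ← Finset.univ_product_univ, Finset.sum_product]
  have e2 : ∑ p ∈ Finset.univ.filter (fun p : Fin n × Fin n => p.1 < p.2), h p.1 p.2
      = ∑ i, ∑ j, if j < i then h i j else 0 := by
    rw [e1, Finset.sum_comm]
    simp only [hs]
  have e3 : ∑ i, h i i = ∑ i, ∑ j, if i = j then h i j else 0 := by simp
  rw [two_mul]
  nth_rewrite 1 [e1]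
  rw [e2, e3, ← Finset.sum_add_distrib, ← Finset.sum_sub_distrib]
  refine Finset.sum_congr rfl fun i _ => ?_
  rw [← Finset.sum_add_distrib, ← Finset.sum_sub_distrib]
  refine Finset.sum_congr rfl fun j _ => ?_
  rcases lt_trichotomy i j with hij | rfl | hij
  · simp [hij, hij.ne, hij.not_gt]
  · simp
  · simp [hij, hij.ne', hij.not_gt]

lemma pw_zero : pw n 0 = (n : MvPolynomial (Fin n) ℝ) := by simp [pw]

lemma pw_one : pw n 1 = ∑ i, X i := by simp [pw]

lemma field_vand_sq (k : ℕ) (h : Fin n → Fin n → MvPolynomial (Fin n) ℝ)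
    (hs : ∀ i j, h i j = h j i)
    (hk : ∀ i j : Fin n, X i ^ (k + 1) * (1 - X i) - X j ^ (k + 1) * (1 - X j)
      = (X i - X j) * h i j) :
    field n k (vand n ^ 2) = vand n ^ 2 * (∑ i, ∑ j, h i j - ∑ i, h i i) := by
  have := derivation_prod (field n k)
    (Finset.univ.filter (fun p : Fin n × Fin n => p.1 < p.2))
    (fun p => X p.1 - X p.2) (fun p => h p.1 p.2)
    (fun p _ => by simp only [map_sub, field_X, hk])
  rw [← two_mul_sum_lt h hs, Derivation.leibniz_pow, vand, this]
  simp only [smul_eq_mul, nsmul_eq_mul, Nat.add_one_sub_one, pow_one, Nat.cast_ofNat]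
  ring

lemma field_zero_vand_sq : field n 0 (vand n ^ 2)
    = vand n ^ 2 * ((n : MvPolynomial (Fin n) ℝ) ^ 2 - n - (2 * n - 2) * pw n 1) := by
  rw [field_vand_sq 0 (fun i j => 1 - X i - X j) (fun i j => by ring) (fun i j => by ring)]
  simp only [Finset.sum_sub_distrib, Finset.sum_const, Finset.card_univ, Fintype.card_fin,
    nsmul_eq_mul, mul_one, ← Finset.mul_sum, pw_one]
  ring

lemma field_one_vand_sq : field n 1 (vand n ^ 2)
    = vand n ^ 2 * ((2 * n - 2) * pw n 1 - (2 * n - 3) * pw n 2 - pw n 1 ^ 2) := by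
  rw [field_vand_sq 1 (fun i j => X i + X j - X i ^ 2 - X i * X j - X j ^ 2)
    (fun i j => by ring) (fun i j => by ring)]
  have e : ∀ i : Fin n, X i + X i - X i ^ 2 - X i * X i - X i ^ 2
      = (2 * X i - 3 * X i ^ 2 : MvPolynomial (Fin n) ℝ) := fun i => by ring
  simp only [e, Finset.sum_sub_distrib, Finset.sum_add_distrib, Finset.sum_const,
    Finset.card_univ, Fintype.card_fin, nsmul_eq_mul, ← Finset.mul_sum, ← Finset.sum_mul,
    pw_one]
  simp only [pw]
  ring

/-- The unnormalised expectation of `F` under the density `Δ² ∏ z_i ^ a e ^ (-t z_i)`. -/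
noncomputable def ex (n : ℕ) {a : ℝ} (ha : -1 < a) (t : ℝ) :
    MvPolynomial (Fin n) ℝ →ₗ[ℝ] ℝ where
  toFun F := pairing n ha t (F * vand n ^ 2)
  map_add' P Q := by simp only [add_mul, map_add]
  map_smul' c Q := by simp only [smul_mul_assoc, map_smul, RingHom.id_apply]

lemma ex_apply {a : ℝ} (ha : -1 < a) (t : ℝ) (F : MvPolynomial (Fin n) ℝ) :
    ex n ha t F = pairing n ha t (F * vand n ^ 2) := rfl

lemma mul_pairing {a : ℝ} (ha : -1 < a) (t c : ℝ) (Q : MvPolynomial (Fin n) ℝ) :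
    c * pairing n ha t Q = pairing n ha t (C c * Q) := by
  rw [← smul_eq_C_mul, map_smul, smul_eq_mul]

/-- Loop equation of `∑ x_i (1 - x_i) ∂_i`. -/
lemma loop_zero {a : ℝ} (ha : -1 < a) (t : ℝ) (F : MvPolynomial (Fin n) ℝ) :
    ex n ha t (field n 0 F) + n * (n + a) * ex n ha t F
      - (2 * n + a + t) * ex n ha t (pw n 1 * F) + t * ex n ha t (pw n 2 * F) = 0 := by
  have h := pairing_field ha t 0 (F * vand n ^ 2)
  rw [← h]
  simp only [ex_apply, mul_pairing, ← map_add (pairing n ha t), ← map_sub (pairing n ha t)]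
  congr 1
  rw [Derivation.leibniz, field_zero_vand_sq, pw_zero]
  simp only [smul_eq_mul, map_add, map_mul, map_one, map_ofNat, map_natCast,
    Nat.cast_zero, zero_add]
  ring

/-- Loop equation of `∑ x_i ^ 2 (1 - x_i) ∂_i`. -/
lemma loop_one {a : ℝ} (ha : -1 < a) (t : ℝ) (F : MvPolynomial (Fin n) ℝ) :
    ex n ha t (field n 1 F) + (2 * n + a) * ex n ha t (pw n 1 * F) - ex n ha t (pw n 1 ^ 2 * F)
      - (2 * n + a + t) * ex n ha t (pw n 2 * F) + t * ex n ha t (pw n 3 * F) = 0 := by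
  have h := pairing_field ha t 1 (F * vand n ^ 2)
  rw [← h]
  simp only [ex_apply, mul_pairing, ← map_add (pairing n ha t), ← map_sub (pairing n ha t)]
  congr 1
  rw [Derivation.leibniz, field_one_vand_sq]
  simp only [smul_eq_mul, map_add, map_mul, map_one, map_ofNat, map_natCast,
    Nat.cast_one]
  ring

lemma field_pw (k m : ℕ) :
    field n k (pw n (m + 1)) = (m + 1) * (pw n (m + k + 1) - pw n (m + k + 2)) := by
  simp only [pw, map_sum, Derivation.leibniz_pow, field_X, smul_eq_mul, nsmul_eq_mul,
    ← Finset.sum_sub_distrib, Finset.mul_sum]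
  refine Finset.sum_congr rfl fun i _ => ?_
  simp only [Nat.add_sub_cancel]
  push_cast
  ring

/-! ### Heine's formula -/

lemma eval_vand (z : Fin n → ℝ) : eval z (vand n) = Vdm n z := by
  simp [vand, Vdm, map_prod]

lemma Vdm_sq (z : Fin n → ℝ) : Vdm n z ^ 2 = (Matrix.vandermonde z).det ^ 2 := by
  have h : Vdm n z = ∏ i, ∏ j ∈ Finset.Ioi i, (z i - z j) := by
    rw [Vdm, Finset.prod_filter, ← Finset.univ_product_univ, Finset.prod_product]
    refine Finset.prod_congr rfl fun i _ => ?_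
    rw [← Finset.prod_filter]
    refine Finset.prod_congr ?_ fun _ _ => rfl
    ext j; simp
  rw [h, Matrix.det_vandermonde]
  simp only [← Finset.prod_pow]
  exact Finset.prod_congr rfl fun i _ => Finset.prod_congr rfl fun j _ => by ring

/-- Heine's formula: expanding both Vandermonde determinants turns the integral into `n!` times a
Hankel determinant. -/
lemma heine {a : ℝ} (ha : -1 < a) (t : ℝ) {g : ℝ → ℝ} (hg : Continuous g) :
    ∫ z, (∏ i, g (z i)) * Vdm n z ^ 2 * cubeWeight a t z ∂(cube n)
      = n.factorial * (Matrix.of fun i j : Fin n =>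
          ∫ u in Set.Icc (0 : ℝ) 1, u ^ ((i : ℕ) + j) * g u * weight a t u).det := by
  set A : Matrix (Fin n) (Fin n) ℝ := Matrix.of fun i j =>
    ∫ u in Set.Icc (0 : ℝ) 1, u ^ ((i : ℕ) + j) * g u * weight a t u with hA
  have hdet : ∀ z : Fin n → ℝ, (Matrix.vandermonde z).det
      = ∑ σ : Equiv.Perm (Fin n), ((Equiv.Perm.sign σ : ℤ) : ℝ) * ∏ i, z i ^ (σ i : ℕ) := by
    intro z
    rw [← Matrix.det_transpose, Matrix.det_apply']
    rfl
  have hexp : ∀ z : Fin n → ℝ, (∏ i, g (z i)) * Vdm n z ^ 2 * cubeWeight a t z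
      = ∑ σ : Equiv.Perm (Fin n), ∑ τ : Equiv.Perm (Fin n),
        (((Equiv.Perm.sign σ : ℤ) : ℝ) * ((Equiv.Perm.sign τ : ℤ) : ℝ)) *
          ((∏ i, z i ^ ((τ i : ℕ) + σ i) * g (z i)) * cubeWeight a t z) := by
    intro z
    rw [Vdm_sq, sq, hdet, Finset.sum_mul_sum, Finset.mul_sum, Finset.sum_mul]
    refine Finset.sum_congr rfl fun σ _ => ?_
    rw [Finset.mul_sum, Finset.sum_mul]
    refine Finset.sum_congr rfl fun τ _ => ?_
    simp only [pow_add, Finset.prod_mul_distrib]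
    ring
  have hint : ∀ σ τ : Equiv.Perm (Fin n), Integrable (fun z : Fin n → ℝ =>
      (((Equiv.Perm.sign σ : ℤ) : ℝ) * ((Equiv.Perm.sign τ : ℤ) : ℝ)) *
          ((∏ i, z i ^ ((τ i : ℕ) + σ i) * g (z i)) * cubeWeight a t z)) (cube n) :=
    fun σ τ => (integrable_mul_cubeWeight ha t (by fun_prop)).const_mul _
  simp only [hexp]
  rw [integral_finsetSum _ fun σ _ => integrable_finsetSum _ fun τ _ => hint σ τ]
  simp_rw [integral_finsetSum _ fun τ _ => hint _ τ, integral_const_mul]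
  have hterm : ∀ σ : Equiv.Perm (Fin n), ∑ τ : Equiv.Perm (Fin n),
      (((Equiv.Perm.sign σ : ℤ) : ℝ) * ((Equiv.Perm.sign τ : ℤ) : ℝ)) *
        ∫ z, (∏ i, z i ^ ((τ i : ℕ) + σ i) * g (z i)) * cubeWeight a t z ∂(cube n) = A.det := by
    intro σ
    have h1 : (A.submatrix id σ).det = ((Equiv.Perm.sign σ : ℤ) : ℝ) * A.det :=
      Matrix.det_permute' σ A
    have h2 : ((Equiv.Perm.sign σ : ℤ) : ℝ) * ((Equiv.Perm.sign σ : ℤ) : ℝ) = 1 := by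
      rcases Int.units_eq_one_or (Equiv.Perm.sign σ) with h | h <;> simp [h]
    rw [← one_mul A.det, ← h2, mul_assoc, ← h1, Matrix.det_apply', Finset.mul_sum]
    refine Finset.sum_congr rfl fun τ _ => ?_
    rw [integral_prod_mul_cubeWeight a t (fun i u => u ^ ((τ i : ℕ) + σ i) * g u), mul_assoc]
    rfl
  rw [Finset.sum_congr rfl fun σ _ => hterm σ, Finset.sum_const, Finset.card_univ,
    Fintype.card_perm, Fintype.card_fin, nsmul_eq_mul]

/-- The Hankel matrix of the weight multiplied by `(1 - s u) (1 - r u)`. -/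
noncomputable def hankel (n : ℕ) (μ : ℕ → ℝ) (s r : ℝ) : Matrix (Fin n) (Fin n) ℝ :=
  Matrix.of fun i j => μ ((i : ℕ) + j) - (s + r) * μ ((i : ℕ) + j + 1)
    + s * r * μ ((i : ℕ) + j + 2)

lemma ex_prod {a : ℝ} (ha : -1 < a) (t s r : ℝ) :
    ex n ha t ((∏ i, (1 - C s * X i)) * ∏ i, (1 - C r * X i))
      = n.factorial * (hankel n (moment a t) s r).det := by
  have h := heine (n := n) ha t (g := fun u => (1 - s * u) * (1 - r * u)) (by fun_prop)
  have e : hankel n (moment a t) s r = Matrix.of fun i j : Fin n =>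
      ∫ u in Set.Icc (0 : ℝ) 1,
        u ^ ((i : ℕ) + j) * ((1 - s * u) * (1 - r * u)) * weight a t u := by
    ext i j
    have hi : ∀ k : ℕ, Integrable (fun u => u ^ k * weight a t u)
        (volume.restrict (Set.Icc 0 1)) := fun k => integrable_mul_weight ha t (by fun_prop)
    simp only [hankel, moment, Matrix.of_apply]
    rw [← integral_const_mul, ← integral_const_mul, ← integral_sub (hi _) ((hi _).const_mul _)]
    refine (integral_add ((hi _).sub ((hi _).const_mul _)) ((hi _).const_mul _)).symm.trans ?_
    congr 1
    ext u
    simp only [Pi.sub_apply]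
    ring
  rw [e, ← h, ex_apply, pairing_apply]
  simp only [map_mul, map_prod, map_sub, map_one, eval_C, eval_X, map_pow, eval_vand,
    Finset.prod_mul_distrib]

/-! ### The Plücker relation for Hankel determinants -/

/-- Coefficient of `u ^ b` in `u ^ j (1 - s u) (1 - r u)`. -/
noncomputable def quadCoeff (s r : ℝ) (b j : ℕ) : ℝ :=
  (if b = j then 1 else 0) - (if b = j + 1 then s + r else 0) + if b = j + 2 then s * r else 0

lemma sum_quadCoeff (s r : ℝ) (g : ℕ → ℝ) {j : ℕ} (hj : j < n) :
    ∑ i : Fin n, g i * quadCoeff s r i j + ∑ k : Fin 2, g (n + k) * quadCoeff s r (n + k) j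
      = g j - (s + r) * g (j + 1) + s * r * g (j + 2) := by
  have h : ∑ i : Fin n, g i * quadCoeff s r i j
      + ∑ k : Fin 2, g (n + k) * quadCoeff s r (n + k) j
      = ∑ i ∈ Finset.range (n + 2), g i * quadCoeff s r i j := by
    rw [Fin.sum_univ_eq_sum_range (fun i => g i * quadCoeff s r i j), Fin.sum_univ_two,
      Finset.sum_range_succ, Finset.sum_range_succ, ← add_assoc]
    rfl
  rw [h]
  simp only [quadCoeff, mul_add, mul_sub, Finset.sum_add_distrib, Finset.sum_sub_distrib,
    mul_ite, mul_zero, mul_one, Finset.sum_ite_eq', Finset.mem_range]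
  rw [if_pos (by omega), if_pos (by omega), if_pos (by omega)]
  ring

/-- The determinants of the doubly modified Hankel matrices form a rank two alternating kernel.
Both sides equal the determinant of the `n × (n + 2)` Hankel matrix bordered by the rows
`s ^ (n + 1 - j)` and `r ^ (n + 1 - j)`: one unimodular column operation clears its last two Hankel
columns, another one clears the first `n` entries of the two new rows. -/
lemma hankel_rank_two (μ : ℕ → ℝ) (hμ : (hankel n μ 0 0).det ≠ 0) :
    ∃ p q : Polynomial ℝ, ∀ s r : ℝ, (s - r) * (hankel n μ s r).det
      = p.eval s * q.eval r - q.eval s * p.eval r := by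
  set M := hankel n μ 0 0 with hM
  have hMa : ∀ i j : Fin n, M i j = μ ((i : ℕ) + j) := fun i j => by simp [hM, hankel]
  set M' : Matrix (Fin n) (Fin 2) ℝ := Matrix.of fun i k => μ ((i : ℕ) + (n + k)) with hM'
  set Y : Matrix (Fin n) (Fin 2) ℝ := -(M⁻¹ * M') with hY
  have hMY : M * Y + M' = 0 := by
    rw [hY, Matrix.mul_neg, ← Matrix.mul_assoc,
      Matrix.mul_nonsing_inv _ (isUnit_iff_ne_zero.mpr hμ), Matrix.one_mul, neg_add_cancel]
  let P : Fin 2 → Polynomial ℝ := fun l =>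
    ∑ j : Fin n, Polynomial.X ^ (n + 1 - j) * Polynomial.C (Y j l)
      + Polynomial.X ^ (n + 1 - (n + l))
  refine ⟨Polynomial.C M.det * P 0, P 1, fun s r => ?_⟩
  let V : Matrix (Fin 2) (Fin n) ℝ := Matrix.of fun k j => ![s, r] k ^ (n + 1 - (j : ℕ))
  let W : Matrix (Fin 2) (Fin 2) ℝ := Matrix.of fun k l => ![s, r] k ^ (n + 1 - (n + (l : ℕ)))
  let K₁ : Matrix (Fin n) (Fin n) ℝ := Matrix.of fun i j => quadCoeff s r i j
  let K₂ : Matrix (Fin 2) (Fin n) ℝ := Matrix.of fun k j => quadCoeff s r (n + k) j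
  have hN₁ : (Matrix.fromBlocks M M' V W).det = M.det * (V * Y + W).det := by
    have h : Matrix.fromBlocks M M' V W * Matrix.fromBlocks 1 Y 0 1
        = Matrix.fromBlocks M 0 V (V * Y + W) := by
      rw [Matrix.fromBlocks_multiply]
      simp [hMY]
    have := congrArg Matrix.det h
    rwa [Matrix.det_mul, Matrix.det_fromBlocks_zero₂₁, Matrix.det_fromBlocks_zero₁₂,
      Matrix.det_one, Matrix.det_one, mul_one, mul_one] at this
  have hK : K₁.det = 1 := by
    rw [Matrix.det_of_isLowerTriangular]
    · refine Finset.prod_eq_one fun i _ => ?_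
      simp [K₁, quadCoeff]
    · intro i j hij
      have hij' : (i : ℕ) < j := hij
      simp only [K₁, Matrix.of_apply, quadCoeff]
      rw [if_neg (by omega), if_neg (by omega), if_neg (by omega)]
      ring
  have hN₂ : (Matrix.fromBlocks M M' V W).det = (hankel n μ s r).det * W.det := by
    have h1 : M * K₁ + M' * K₂ = hankel n μ s r := by
      ext i j
      rw [Matrix.add_apply, Matrix.mul_apply, Matrix.mul_apply]
      simp only [hMa]
      exact sum_quadCoeff s r (fun b => μ ((i : ℕ) + b)) j.2
    have h2 : V * K₁ + W * K₂ = 0 := by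
      ext k j
      rw [Matrix.add_apply, Matrix.mul_apply, Matrix.mul_apply]
      refine (sum_quadCoeff s r (fun b => ![s, r] k ^ (n + 1 - b)) j.2).trans ?_
      obtain ⟨d, hd⟩ := Nat.exists_eq_add_of_lt j.2
      rw [show n + 1 - (j : ℕ) = d + 2 by omega, show n + 1 - ((j : ℕ) + 1) = d + 1 by omega,
        show n + 1 - ((j : ℕ) + 2) = d by omega]
      fin_cases k <;> simp <;> ring
    have h : Matrix.fromBlocks M M' V W * Matrix.fromBlocks K₁ 0 K₂ 1
        = Matrix.fromBlocks (hankel n μ s r) M' 0 W := by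
      rw [Matrix.fromBlocks_multiply, h1, h2]
      simp
    have := congrArg Matrix.det h
    rwa [Matrix.det_mul, Matrix.det_fromBlocks_zero₁₂, Matrix.det_fromBlocks_zero₂₁, hK,
      Matrix.det_one, mul_one, mul_one] at this
  have hW : W.det = s - r := by
    simp [Matrix.det_fin_two, W]
  have hP : ∀ k l, (V * Y + W) k l = (P l).eval (![s, r] k) := by
    intro k l
    simp [V, W, P, Matrix.add_apply, Matrix.mul_apply, Polynomial.eval_finsetSum]
    exact Finset.sum_congr rfl fun j _ => mul_comm _ _
  rw [mul_comm, ← hW, ← hN₂, hN₁, Matrix.det_fin_two]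
  simp only [hP, Polynomial.eval_mul, Polynomial.eval_C, Matrix.cons_val_zero,
    Matrix.cons_val_one]
  ring

/-- Comparing coefficients in a rank two alternating kernel gives the three-term Plücker relation
for the coefficients with indices `0, 1, 2, 3`. -/
lemma plucker_coeff (c : ℕ → ℕ → ℝ) (N : ℕ) (p q : Polynomial ℝ)
    (h : ∀ s r : ℝ, (s - r) * ∑ i ∈ Finset.range (N + 4), ∑ j ∈ Finset.range (N + 4),
      c i j * s ^ i * r ^ j = p.eval s * q.eval r - q.eval s * p.eval r) :
    c 0 0 * (c 2 2 - c 1 3) + c 0 1 * (c 0 3 - c 1 2) - c 0 2 * (c 0 2 - c 1 1) = 0 := by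
  let T : ℕ → Polynomial ℝ := fun i =>
    ∑ j ∈ Finset.range (N + 4), Polynomial.C (c i j) * Polynomial.X ^ j
  have hT : ∀ i j, j < 4 → (T i).coeff j = c i j := by
    intro i j hj
    simp only [T, Polynomial.finsetSum_coeff, Polynomial.coeff_C_mul_X_pow]
    rw [Finset.sum_eq_single j]
    · simp
    · intro b _ hb; simp [hb.symm]
    · intro hj'; exact absurd (Finset.mem_range.mpr (by omega)) hj'
  have hs : ∀ r : ℝ, (Polynomial.X - Polynomial.C r) *
      (∑ i ∈ Finset.range (N + 4), Polynomial.C ((T i).eval r) * Polynomial.X ^ i)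
      = p * Polynomial.C (q.eval r) - q * Polynomial.C (p.eval r) := by
    intro r
    refine Polynomial.funext fun s => ?_
    simp only [Polynomial.eval_mul, Polynomial.eval_sub, Polynomial.eval_X, Polynomial.eval_C,
      Polynomial.eval_finsetSum, Polynomial.eval_pow, T]
    rw [← h s r]
    congr 1
    refine Finset.sum_congr rfl fun i _ => ?_
    rw [Finset.sum_mul]
    exact Finset.sum_congr rfl fun j _ => by ring
  have hc : ∀ r : ℝ, ∀ i, i < 4 →
      (∑ i ∈ Finset.range (N + 4), Polynomial.C ((T i).eval r) * Polynomial.X ^ i).coeff i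
        = (T i).eval r := by
    intro r i hi
    simp only [Polynomial.finsetSum_coeff, Polynomial.coeff_C_mul_X_pow]
    rw [Finset.sum_eq_single i]
    · simp
    · intro b _ hb; simp [hb.symm]
    · intro hj'; exact absurd (Finset.mem_range.mpr (by omega)) hj'
  have h0 : -(Polynomial.X * T 0) = Polynomial.C (p.coeff 0) * q - Polynomial.C (q.coeff 0) * p := by
    refine Polynomial.funext fun r => ?_
    have := congrArg (fun f => Polynomial.coeff f 0) (hs r)
    simp only [sub_mul, Polynomial.coeff_sub, Polynomial.coeff_X_mul_zero, Polynomial.coeff_C_mul,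
      Polynomial.coeff_mul_C, hc r 0 (by norm_num)] at this
    simp only [Polynomial.eval_neg, Polynomial.eval_mul, Polynomial.eval_X, Polynomial.eval_sub,
      Polynomial.eval_C]
    linear_combination this
  have h1 : ∀ i, i + 1 < 4 → T i - Polynomial.X * T (i + 1)
      = Polynomial.C (p.coeff (i + 1)) * q - Polynomial.C (q.coeff (i + 1)) * p := by
    intro i hi
    refine Polynomial.funext fun r => ?_
    have := congrArg (fun f => Polynomial.coeff f (i + 1)) (hs r)
    simp only [sub_mul, Polynomial.coeff_sub, Polynomial.coeff_X_mul, Polynomial.coeff_C_mul,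
      Polynomial.coeff_mul_C, hc r (i + 1) hi, hc r i (by omega)] at this
    simp only [Polynomial.eval_mul, Polynomial.eval_X, Polynomial.eval_sub,
      Polynomial.eval_C]
    linear_combination this
  have k0 : ∀ j, j < 4 → -c 0 j = p.coeff 0 * q.coeff (j + 1) - q.coeff 0 * p.coeff (j + 1) := by
    intro j hj
    have := congrArg (fun f => Polynomial.coeff f (j + 1)) h0
    simpa only [Polynomial.coeff_neg, Polynomial.coeff_X_mul, Polynomial.coeff_sub,
      Polynomial.coeff_C_mul, hT 0 j hj] using this
  have k1 : ∀ i j, i + 1 < 4 → j + 1 < 4 → c i (j + 1) - c (i + 1) j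
      = p.coeff (i + 1) * q.coeff (j + 1) - q.coeff (i + 1) * p.coeff (j + 1) := by
    intro i j hi hj
    have := congrArg (fun f => Polynomial.coeff f (j + 1)) (h1 i hi)
    simpa only [Polynomial.coeff_X_mul, Polynomial.coeff_sub,
      Polynomial.coeff_C_mul, hT i (j + 1) hj, hT (i + 1) j (by omega)] using this
  have a1 := k0 0 (by norm_num)
  have a2 := k0 1 (by norm_num)
  have a3 := k0 2 (by norm_num)
  have b1 := k1 0 1 (by norm_num) (by norm_num)
  have b2 := k1 0 2 (by norm_num) (by norm_num)
  have b3 := k1 1 2 (by norm_num) (by norm_num)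
  norm_num only at a1 a2 a3 b1 b2 b3
  have e : c 0 0 * (c 2 2 - c 1 3) + c 0 1 * (c 0 3 - c 1 2) - c 0 2 * (c 0 2 - c 1 1)
      = (-c 0 0) * (c 1 3 - c 2 2) - (-c 0 1) * (c 0 3 - c 1 2)
        + (-c 0 2) * (c 0 2 - c 1 1) := by ring
  rw [e, a1, a2, a3, b1, b2, b3]
  ring

/-! ### Positivity and the bilinear relation -/

lemma cubeWeight_pos {a t : ℝ} {z : Fin n → ℝ} (hz : ∀ i, 0 < z i) : 0 < cubeWeight a t z :=
  Finset.prod_pos fun i _ => mul_pos (Real.rpow_pos_of_pos (hz i) a) (Real.exp_pos _)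

lemma ex_one_pos {a : ℝ} (ha : -1 < a) (t : ℝ) : 0 < ex n ha t 1 := by
  have hint : Integrable (fun z => eval z (vand n ^ 2) * cubeWeight a t z) (cube n) :=
    integrable_mul_cubeWeight ha t (MvPolynomial.continuous_eval _)
  have hnn : 0 ≤ᵐ[cube n] fun z => eval z (vand n ^ 2) * cubeWeight a t z := by
    filter_upwards [ae_mem_cube] with z hz
    have hz' : ∀ i, 0 ≤ z i := fun i => (hz i trivial).1
    refine mul_nonneg (by rw [map_pow]; exact sq_nonneg _) (Finset.prod_nonneg fun i _ => ?_)
    exact mul_nonneg (Real.rpow_nonneg (hz' i) a) (Real.exp_pos _).le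
  rw [ex_apply, one_mul, pairing_apply, integral_pos_iff_support_of_nonneg_ae hnn hint]
  -- the open set of points of the open cube with distinct coordinates is not null
  set U : Set (Fin n → ℝ) := (Set.univ.pi fun _ => Set.Ioo (0 : ℝ) 1) ∩
    {z | eval z (vand n) ≠ 0} with hU
  have hUo : IsOpen U := by
    refine (isOpen_set_pi Set.finite_univ fun _ _ => isOpen_Ioo).inter ?_
    exact isOpen_ne_fun (MvPolynomial.continuous_eval _) continuous_const
  have hUn : U.Nonempty := by
    refine ⟨fun i => ((i : ℝ) + 1) / (n + 1), fun i _ => ⟨by positivity, ?_⟩, ?_⟩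
    · rw [div_lt_one (by positivity)]
      have : (i : ℝ) < n := by exact_mod_cast i.2
      linarith
    · rw [Set.mem_ofPred_eq, eval_vand, Vdm, Finset.prod_ne_zero_iff]
      rintro ⟨i, j⟩ hij
      have hij' : (i : ℝ) < j := by
        exact_mod_cast Fin.lt_def.mp (Finset.mem_filter.mp hij).2
      rw [← sub_div]
      refine div_ne_zero ?_ (by positivity)
      intro h
      simp only at h
      linarith
  have hUs : U ⊆ Set.univ.pi fun _ => Set.Icc (0 : ℝ) 1 := fun z hz i hi =>
    Set.Ioo_subset_Icc_self (hz.1 i hi)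
  refine lt_of_lt_of_le (hUo.measure_pos volume hUn) ?_
  rw [← Measure.restrict_eq_self volume hUs]
  refine measure_mono fun z hz => ?_
  have : 0 < cubeWeight a t z := cubeWeight_pos fun i => (hz.1 i trivial).1
  rw [Function.mem_support, map_pow]
  exact mul_ne_zero (pow_ne_zero 2 hz.2) this.ne'

/-- The generating polynomial `∏ (1 - x_i X)` of the signed elementary symmetric polynomials. -/
noncomputable def gen (S : Finset (Fin n)) : Polynomial (MvPolynomial (Fin n) ℝ) :=
  ∏ i ∈ S, (1 - Polynomial.C (X i) * Polynomial.X)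

/-- Newton's identities up to degree three. -/
lemma gen_coeff (S : Finset (Fin n)) :
    (gen S).coeff 0 = 1 ∧ (gen S).coeff 1 = -∑ i ∈ S, X i ∧
    2 * (gen S).coeff 2 = (∑ i ∈ S, X i) ^ 2 - ∑ i ∈ S, X i ^ 2 ∧
    6 * (gen S).coeff 3 = -((∑ i ∈ S, X i) ^ 3 - 3 * (∑ i ∈ S, X i) * ∑ i ∈ S, X i ^ 2
      + 2 * ∑ i ∈ S, X i ^ 3) := by
  classical
  induction S using Finset.induction_on with
  | empty => simp [gen, Polynomial.coeff_one]
  | insert i S hi ih =>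
    have h : gen (insert i S) = gen S - Polynomial.C (X i) * (Polynomial.X * gen S) := by
      rw [gen, Finset.prod_insert hi, ← gen]; ring
    obtain ⟨h0, h1, h2, h3⟩ := ih
    simp only [h, Finset.sum_insert hi, Polynomial.coeff_sub, Polynomial.coeff_C_mul,
      Polynomial.coeff_X_mul_zero, Polynomial.coeff_X_mul, h0, h1]
    refine ⟨by ring, by ring, ?_, ?_⟩
    · linear_combination h2
    · linear_combination h3 - 3 * X i * h2

lemma eval_gen (s : ℝ) : (gen (Finset.univ : Finset (Fin n))).eval (C s)
    = ∏ i, (1 - C s * X i) := by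
  simp only [gen, Polynomial.eval_prod, Polynomial.eval_sub, Polynomial.eval_one,
    Polynomial.eval_mul, Polynomial.eval_C, Polynomial.eval_X]
  exact Finset.prod_congr rfl fun i _ => by ring

lemma ex_C_mul {a : ℝ} (ha : -1 < a) (t c : ℝ) (Q : MvPolynomial (Fin n) ℝ) :
    ex n ha t (C c * Q) = c * ex n ha t Q := by
  rw [← smul_eq_C_mul, map_smul, smul_eq_mul]

/-- The bilinear (KP) relation between the expectations of power sums: it is the Plücker relation
`s_∅ s_{22} - s_1 s_{21} + s_2 s_{11} = 0` for expectations of Schur polynomials. -/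
lemma kp_relation {a : ℝ} (ha : -1 < a) (t : ℝ) :
    ex n ha t 1 * (ex n ha t (pw n 1 ^ 4) + 3 * ex n ha t (pw n 2 ^ 2)
        - 4 * ex n ha t (pw n 1 * pw n 3))
      - 4 * ex n ha t (pw n 1) * (ex n ha t (pw n 1 ^ 3) - ex n ha t (pw n 3))
      + 3 * (ex n ha t (pw n 1 ^ 2) ^ 2 - ex n ha t (pw n 2) ^ 2) = 0 := by
  set E := ex n ha t with hE
  set g := gen (Finset.univ : Finset (Fin n)) with hg
  have hfac : (n.factorial : ℝ) ≠ 0 := Nat.cast_ne_zero.mpr n.factorial_ne_zero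
  have hdet : (hankel n (moment a t) 0 0).det ≠ 0 := by
    have h := ex_prod (n := n) ha t 0 0
    simp only [map_zero, zero_mul, sub_zero, Finset.prod_const_one, mul_one] at h
    intro h0
    rw [h0, mul_zero] at h
    exact (ex_one_pos ha t).ne' h
  obtain ⟨p, q, hpq⟩ := hankel_rank_two (moment a t) hdet
  have key := plucker_coeff (fun i j => E (g.coeff i * g.coeff j)) g.natDegree
    (Polynomial.C (n.factorial : ℝ) * p) q (fun s r => by
      have h1 : E (g.eval (C s) * g.eval (C r)) = ∑ i ∈ Finset.range (g.natDegree + 4),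
          ∑ j ∈ Finset.range (g.natDegree + 4), E (g.coeff i * g.coeff j) * s ^ i * r ^ j := by
        rw [Polynomial.eval_eq_sum_range' (n := g.natDegree + 4) (by omega) (C s),
          Polynomial.eval_eq_sum_range' (n := g.natDegree + 4) (by omega) (C r),
          Finset.sum_mul_sum, map_sum]
        refine Finset.sum_congr rfl fun i _ => ?_
        rw [map_sum]
        refine Finset.sum_congr rfl fun j _ => ?_
        rw [show g.coeff i * C s ^ i * (g.coeff j * C r ^ j)
          = C (s ^ i * r ^ j) * (g.coeff i * g.coeff j) by simp only [map_mul, map_pow]; ring,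
          hE, ex_C_mul]
        ring
      rw [← h1, hg, eval_gen, eval_gen, hE, ex_prod]
      simp only [Polynomial.eval_mul, Polynomial.eval_C]
      linear_combination (n.factorial : ℝ) * hpq s r)
  obtain ⟨h0, h1, h2, h3⟩ := gen_coeff (Finset.univ : Finset (Fin n))
  have p1 : ∑ i, X i = pw n 1 := pw_one.symm
  have p2 : ∑ i, X i ^ 2 = pw n 2 := rfl
  have p3 : ∑ i, X i ^ 3 = pw n 3 := rfl
  rw [p1] at h1 h2 h3
  rw [p2] at h2 h3
  rw [p3] at h3
  rw [← hg] at h0 h1 h2 h3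
  have hh : ∀ c : ℕ, (c : ℝ) ≠ 0 → ∀ P Q : MvPolynomial (Fin n) ℝ, (c : MvPolynomial (Fin n) ℝ) * P
      = Q → P = C ((c : ℝ)⁻¹) * Q := by
    intro c hc P Q h
    rw [← h, ← mul_assoc, ← map_natCast (C (σ := Fin n)), ← map_mul, inv_mul_cancel₀ hc, map_one,
      one_mul]
  replace h2 := hh 2 (by norm_num) _ _ (by exact_mod_cast h2)
  replace h3 := hh 6 (by norm_num) _ _ (by exact_mod_cast h3)
  have k00 : E (g.coeff 0 * g.coeff 0) = E 1 := by rw [h0, mul_one]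
  have k01 : E (g.coeff 0 * g.coeff 1) = -E (pw n 1) := by rw [h0, h1, one_mul, map_neg]
  have k02 : E (g.coeff 0 * g.coeff 2) = 2⁻¹ * (E (pw n 1 ^ 2) - E (pw n 2)) := by
    rw [h0, h2, one_mul, hE, ex_C_mul, map_sub]; norm_num
  have k11 : E (g.coeff 1 * g.coeff 1) = E (pw n 1 ^ 2) := by
    rw [h1]; congr 1; ring
  have k03 : E (g.coeff 0 * g.coeff 3) = -(6⁻¹ * (E (pw n 1 ^ 3) - 3 * E (pw n 1 * pw n 2)
      + 2 * E (pw n 3))) := by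
    rw [h0, h3, one_mul, hE, ex_C_mul, map_neg, map_add, map_sub,
      show 3 * pw n 1 * pw n 2 = C 3 * (pw n 1 * pw n 2) by rw [map_ofNat]; ring, ex_C_mul,
      show 2 * pw n 3 = C 2 * pw n 3 by rw [map_ofNat], ex_C_mul]
    push_cast; ring
  have k12 : E (g.coeff 1 * g.coeff 2) = -(2⁻¹ * (E (pw n 1 ^ 3) - E (pw n 1 * pw n 2))) := by
    rw [h1, h2, hE, show -pw n 1 * (C ((2 : ℕ) : ℝ)⁻¹ * (pw n 1 ^ 2 - pw n 2))
      = C ((2 : ℕ) : ℝ)⁻¹ * (-(pw n 1 ^ 3 - pw n 1 * pw n 2)) by ring, ex_C_mul, map_neg, map_sub]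
    push_cast; ring
  have k13 : E (g.coeff 1 * g.coeff 3) = 6⁻¹ * (E (pw n 1 ^ 4) - 3 * E (pw n 1 ^ 2 * pw n 2)
      + 2 * E (pw n 1 * pw n 3)) := by
    rw [h1, h3, hE, show -pw n 1 * (C ((6 : ℕ) : ℝ)⁻¹ * -(pw n 1 ^ 3 - 3 * pw n 1 * pw n 2
        + 2 * pw n 3)) = C ((6 : ℕ) : ℝ)⁻¹ * (pw n 1 ^ 4 - C 3 * (pw n 1 ^ 2 * pw n 2)
        + C 2 * (pw n 1 * pw n 3)) by simp only [map_ofNat]; ring, ex_C_mul, map_add, map_sub,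
      ex_C_mul, ex_C_mul]
    push_cast; ring
  have k22 : E (g.coeff 2 * g.coeff 2) = 4⁻¹ * (E (pw n 1 ^ 4) - 2 * E (pw n 1 ^ 2 * pw n 2)
      + E (pw n 2 ^ 2)) := by
    rw [h2, hE, show C ((2 : ℕ) : ℝ)⁻¹ * (pw n 1 ^ 2 - pw n 2)
        * (C ((2 : ℕ) : ℝ)⁻¹ * (pw n 1 ^ 2 - pw n 2))
        = C (((2 : ℕ) : ℝ)⁻¹ * ((2 : ℕ) : ℝ)⁻¹) * (pw n 1 ^ 4 - C 2 * (pw n 1 ^ 2 * pw n 2)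
        + pw n 2 ^ 2) by simp only [map_mul, map_ofNat]; ring, ex_C_mul, map_add, map_sub, ex_C_mul]
    push_cast; ring
  simp only [k00, k01, k02, k11, k03, k12, k13, k22] at key
  linear_combination 12 * key

/-! ### Dependence on the parameter -/

/-- Differentiating in `t` inserts `-p_1`. -/
lemma hasDerivAt_pairing {a : ℝ} (ha : -1 < a) (Q : MvPolynomial (Fin n) ℝ) (t : ℝ) :
    HasDerivAt (fun t => pairing n ha t Q) (-pairing n ha t (pw n 1 * Q)) t := by
  have hp : ∀ z : Fin n → ℝ, eval z (pw n 1 * Q) = (∑ i, z i) * eval z Q := by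
    intro z; simp [pw_one, map_sum]
  have h := hasDerivAt_integral_of_dominated_loc_of_deriv_le (μ := cube n)
    (F := fun t z => eval z Q * cubeWeight a t z)
    (F' := fun t z => -(eval z (pw n 1 * Q) * cubeWeight a t z))
    (bound := fun z => (|eval z (pw n 1 * Q)| * Real.exp ((|t| + 1) * |∑ i, z i|))
      * ∏ i, (z i) ^ a)
    (x₀ := t) (Metric.ball_mem_nhds t one_pos)
    (Filter.Eventually.of_forall fun t =>
      (integrable_mul_cubeWeight ha t (MvPolynomial.continuous_eval Q)).aestronglyMeasurable)
    (integrable_mul_cubeWeight ha t (MvPolynomial.continuous_eval Q))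
    (integrable_mul_cubeWeight ha t (MvPolynomial.continuous_eval _)).neg.aestronglyMeasurable
    ?_ ?_ ?_
  · have h2 := h.2
    rw [integral_neg] at h2
    exact h2
  · filter_upwards [ae_mem_cube] with z hz x hx
    have hz' : 0 ≤ ∏ i, (z i) ^ a :=
      Finset.prod_nonneg fun i _ => Real.rpow_nonneg (hz i trivial).1 a
    have hx' : |x| ≤ |t| + 1 := by
      rw [Metric.mem_ball, Real.dist_eq] at hx
      have := abs_sub_abs_le_abs_sub x t
      linarith
    rw [norm_neg, cubeWeight_eq, norm_mul, norm_mul, Real.norm_of_nonneg hz', Real.norm_eq_abs,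
      Real.norm_of_nonneg (Real.exp_pos _).le, mul_assoc]
    have : -(x * ∑ i, z i) ≤ (|t| + 1) * |∑ i, z i| := by
      refine (neg_le_abs _).trans ?_
      rw [abs_mul]
      gcongr
    gcongr
  · exact integrable_mul_prod_rpow ha (by
      have := MvPolynomial.continuous_eval (pw n 1 * Q)
      fun_prop)
  · refine Filter.Eventually.of_forall fun z x _ => ?_
    simp only [cubeWeight_eq, hp]
    have h1 : HasDerivAt (fun t : ℝ => Real.exp (-(t * ∑ i, z i)))
        (Real.exp (-(x * ∑ i, z i)) * (-(1 * ∑ i, z i))) x :=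
      ((hasDerivAt_id x).mul_const _).neg.exp
    refine ((h1.mul_const (∏ i, (z i) ^ a)).const_mul (eval z Q)).congr_deriv ?_
    ring

lemma contDiff_pairing {a : ℝ} (ha : -1 < a) (Q : MvPolynomial (Fin n) ℝ) :
    ContDiff ℝ (⊤ : ℕ∞) (fun t => pairing n ha t Q) := by
  rw [contDiff_infty]
  intro m
  induction m generalizing Q with
  | zero =>
    rw [Nat.cast_zero, contDiff_zero, continuous_iff_continuousAt]
    exact fun t => (hasDerivAt_pairing ha Q t).continuousAt
  | succ m ih =>
    rw [Nat.cast_succ, contDiff_succ_iff_deriv]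
    refine ⟨fun t => (hasDerivAt_pairing ha Q t).differentiableAt, by simp, ?_⟩
    have : deriv (fun t => pairing n ha t Q) = fun t => -pairing n ha t (pw n 1 * Q) :=
      funext fun t => (hasDerivAt_pairing ha Q t).deriv
    rw [this]
    exact (ih _).neg

lemma hasDerivAt_ex {a : ℝ} (ha : -1 < a) (F : MvPolynomial (Fin n) ℝ) (t : ℝ) :
    HasDerivAt (fun t => ex n ha t F) (-ex n ha t (pw n 1 * F)) t := by
  simp only [ex_apply, mul_assoc]
  exact hasDerivAt_pairing ha _ t

/-! ### Scaling -/

lemma two_mul_card_lt : 2 * ((Finset.univ.filter fun p : Fin n × Fin n => p.1 < p.2).card : ℝ)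
    = (n : ℝ) ^ 2 - n := by
  have h := two_mul_sum_lt (n := n) (fun _ _ => (1 : ℝ)) (fun _ _ => rfl)
  simp only [Finset.sum_const, nsmul_eq_mul, mul_one, Finset.card_univ, Fintype.card_fin] at h
  rw [h, sq]

lemma Vdm_smul (x : ℝ) (u : Fin n → ℝ) : Vdm n (x • u)
    = x ^ (Finset.univ.filter fun p : Fin n × Fin n => p.1 < p.2).card * Vdm n u := by
  simp only [Vdm, Pi.smul_apply, smul_eq_mul, ← mul_sub, Finset.prod_mul_distrib,
    Finset.prod_const]

open scoped Pointwise in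
lemma smul_cube {x : ℝ} (hx : 0 < x) : x • (Set.univ.pi fun _ : Fin n => Set.Icc (0 : ℝ) 1)
    = Set.univ.pi fun _ => Set.Icc (0 : ℝ) x := by
  ext z
  rw [Set.mem_smul_set_iff_inv_smul_mem₀ hx.ne']
  simp only [Set.mem_pi, Set.mem_univ, true_imp_iff, Pi.smul_apply, smul_eq_mul, Set.mem_Icc]
  refine forall_congr' fun i => ?_
  rw [inv_mul_le_one₀ hx, mul_nonneg_iff_of_pos_left (inv_pos.mpr hx)]

/-- The substitution `z = x u` moves the endpoint `x` into the exponential. -/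
lemma integral_eq_rpow_mul_ex {a : ℝ} (ha : -1 < a) {x : ℝ} (hx : 0 < x) :
    ∫ z : Fin n → ℝ in Set.univ.pi (fun _ => Set.Icc 0 x),
        (Vdm n z) ^ 2 * ∏ k, ((z k) ^ a * Real.exp (-(z k)))
      = x ^ ((n : ℝ) * (n + a)) * ex n ha x 1 := by
  have h := Measure.setIntegral_comp_smul_of_pos (volume : Measure (Fin n → ℝ))
    (fun z => (Vdm n z) ^ 2 * ∏ k, ((z k) ^ a * Real.exp (-(z k))))
    (Set.univ.pi fun _ => Set.Icc (0 : ℝ) 1) hx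
  set c := (Finset.univ.filter fun p : Fin n × Fin n => p.1 < p.2).card with hc
  rw [smul_cube hx, smul_eq_mul, Module.finrank_fin_fun] at h
  have h' : ∫ u : Fin n → ℝ in Set.univ.pi fun _ => Set.Icc (0 : ℝ) 1,
      (Vdm n (x • u)) ^ 2 * ∏ k, (((x • u) k) ^ a * Real.exp (-((x • u) k)))
      = x ^ (2 * c) * (x ^ a) ^ n * ex n ha x 1 := by
    rw [ex_apply, one_mul, pairing_apply, ← integral_const_mul]
    refine setIntegral_congr_fun (MeasurableSet.univ_pi fun _ => measurableSet_Icc)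
      fun u hu => ?_
    have hw : ∀ k, ((x • u) k) ^ a * Real.exp (-((x • u) k)) = x ^ a * weight a x (u k) := by
      intro k
      rw [Pi.smul_apply, smul_eq_mul, Real.mul_rpow hx.le (hu k trivial).1, weight, mul_assoc]
    simp only [hw, Finset.prod_mul_distrib, Finset.prod_const, Finset.card_univ, Fintype.card_fin,
      Vdm_smul, map_pow, eval_vand, cubeWeight, ← hc]
    ring
  rw [h'] at h
  have hN : x ^ ((n : ℝ) * (n + a)) = x ^ n * (x ^ (2 * c) * (x ^ a) ^ n) := by
    rw [← Real.rpow_natCast x n, ← Real.rpow_natCast x (2 * c), ← Real.rpow_mul_natCast hx.le,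
      ← Real.rpow_add hx, ← Real.rpow_add hx]
    congr 1
    push_cast
    rw [hc, two_mul_card_lt]
    ring
  rw [hN, mul_assoc, h, ← mul_assoc, mul_inv_cancel₀ (pow_pos hx n).ne', one_mul]

/-! ### The differential equation -/

/-- The normalized expectations `⟨p_1 ^ k⟩` as functions of the parameter. -/
noncomputable def ratio (n : ℕ) {a : ℝ} (ha : -1 < a) (k : ℕ) (t : ℝ) : ℝ :=
  ex n ha t (pw n 1 ^ k) / ex n ha t 1

lemma hasDerivAt_ratio {a : ℝ} (ha : -1 < a) (k : ℕ) (t : ℝ) :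
    HasDerivAt (ratio n ha k) (-ratio n ha (k + 1) t + ratio n ha k t * ratio n ha 1 t) t := by
  have h0 := (ex_one_pos (n := n) ha t).ne'
  refine ((hasDerivAt_ex ha (pw n 1 ^ k) t).div (hasDerivAt_ex ha 1 t) h0).congr_deriv ?_
  simp only [ratio, mul_one, pow_one, ← pow_succ']
  field_simp
  ring

/-- The loop equations and the bilinear relation combine into a relation between the first four
normalized moments of `p_1`; this is the differential equation in disguise. -/
lemma ratio_relation {a : ℝ} (ha : -1 < a) (x R₁ R₂ R₃ R₄ : ℝ)
    (h₁ : ratio n ha 1 x = R₁) (h₂ : ratio n ha 2 x = R₂) (h₃ : ratio n ha 3 x = R₃)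
    (h₄ : ratio n ha 4 x = R₄) :
    x ^ 2 * (3 * (-R₃ + 3 * R₁ * R₂ - 2 * R₁ ^ 3)
        + x * (R₄ - 4 * R₁ * R₃ - 3 * R₂ ^ 2 + 12 * R₁ ^ 2 * R₂ - 6 * R₁ ^ 4))
      + x * (2 * R₂ - 2 * R₁ ^ 2 + x * (-R₃ + 3 * R₁ * R₂ - 2 * R₁ ^ 3))
      + 6 * x * (-R₁ - x * (-R₂ + R₁ ^ 2)) ^ 2
      - 4 * (n * (n + a) - x * R₁) * (-R₁ - x * (-R₂ + R₁ ^ 2))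
      - ((a - x) ^ 2 - 4 * (n : ℝ) * x) * (-R₁ - x * (-R₂ + R₁ ^ 2))
      - (2 * (n : ℝ) + a - x) * (n * (n + a) - x * R₁) = 0 := by
  have h0 := (ex_one_pos (n := n) ha x).ne'
  have f01 := field_pw (n := n) 0 0
  have f02 := field_pw (n := n) 0 1
  have f11 := field_pw (n := n) 1 0
  norm_num at f01 f02 f11
  have l1 := loop_zero (n := n) ha x 1
  have l2 := loop_zero (n := n) ha x (pw n 1)
  have l3 := loop_zero (n := n) ha x (pw n 2)
  have l4 := loop_one (n := n) ha x 1
  have l5 := loop_one (n := n) ha x (pw n 1)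
  have kp := kp_relation (n := n) ha x
  rw [f02, show (2 : MvPolynomial (Fin n) ℝ) = C 2 from (map_ofNat _ _).symm, ex_C_mul] at l3
  rw [f01] at l2
  rw [f11] at l5
  rw [← pow_succ] at l5
  rw [← sq] at l2 l3
  simp only [Derivation.map_one_eq_zero, map_zero, map_sub, mul_one, mul_comm (pw n 2) (pw n 1),
    mul_comm (pw n 3) (pw n 1), ← sq] at l1 l2 l3 l4 l5
  simp only [ratio, pow_one] at h₁ h₂ h₃ h₄
  rw [div_eq_iff h0] at h₁ h₂ h₃ h₄
  have hex : ∀ F : MvPolynomial (Fin n) ℝ, ∃ r, ex n ha x F = r * ex n ha x 1 := fun F =>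
    ⟨ex n ha x F / ex n ha x 1, (div_mul_cancel₀ _ h0).symm⟩
  obtain ⟨p2, hp2⟩ := hex (pw n 2)
  obtain ⟨p3, hp3⟩ := hex (pw n 3)
  obtain ⟨p12, hp12⟩ := hex (pw n 1 * pw n 2)
  obtain ⟨p22, hp22⟩ := hex (pw n 2 ^ 2)
  obtain ⟨p13, hp13⟩ := hex (pw n 1 * pw n 3)
  rw [h₁, h₂, h₃, h₄, hp2, hp3, hp22, hp13] at kp
  rw [h₁, hp2] at l1
  rw [h₁, h₂, hp2, hp12] at l2
  rw [hp2, hp3, hp12, hp22] at l3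
  rw [h₁, h₂, hp2, hp3] at l4
  rw [h₂, h₃, hp2, hp3, hp12, hp13] at l5
  generalize ex n ha x 1 = e at h0 kp l1 l2 l3 l4 l5
  set c := 2 * (n : ℝ) + a + x with hc
  set N := (n : ℝ) * (n + a) with hN
  have L1 : x * p2 - c * R₁ + N = 0 := mul_left_cancel₀ h0 (by linear_combination l1)
  have L2 : x * p12 - (c * R₂ - N * R₁ - R₁ + p2) = 0 :=
    mul_left_cancel₀ h0 (by linear_combination l2)
  have L3 : x * p22 - (c * p12 - N * p2 - 2 * p2 + 2 * p3) = 0 :=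
    mul_left_cancel₀ h0 (by linear_combination l3)
  have L4 : x * p3 - (c * p2 + R₂ - (2 * n + a) * R₁) = 0 :=
    mul_left_cancel₀ h0 (by linear_combination l4)
  have L5 : x * p13 - (c * p12 + R₃ - (2 * n + a) * R₂ - p2 + p3) = 0 :=
    mul_left_cancel₀ h0 (by linear_combination l5)
  have K : R₄ + 3 * p22 - 4 * p13 - 4 * R₁ * (R₃ - p3) + 3 * (R₂ ^ 2 - p2 ^ 2) = 0 :=
    mul_left_cancel₀ (pow_ne_zero 2 h0) (by linear_combination kp)
  -- successive elimination of `p22`, `p13`, `p12`, `p3` and `p2`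
  linear_combination x ^ 3 * K - 3 * x ^ 2 * L3 + 4 * x ^ 2 * L5 - (4 * x ^ 2 * R₁ + 2 * x) * L4
    + c * x * L2 + (3 * x * (x * p2 + c * R₁ - N) + 3 * x * (N + 2) - 4 * x
      - (2 + 4 * x * R₁) * c + c) * L1

/-- The function `f` in terms of the first normalized moment, for `G x = x ^ N * ex n ha x 1`. -/
lemma log_deriv_eq {a : ℝ} (ha : -1 < a) {G : ℝ → ℝ} {N : ℝ}
    (hG : ∀ x > 0, G x = x ^ N * ex n ha x 1) {x : ℝ} (hx : 0 < x) :
    x * deriv G x / G x = N - x * ratio n ha 1 x := by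
  have h0 := (ex_one_pos (n := n) ha x).ne'
  have hloc : G =ᶠ[nhds x] fun x => x ^ N * ex n ha x 1 := by
    filter_upwards [Ioi_mem_nhds hx] with y hy using hG y hy
  have hd := ((Real.hasDerivAt_rpow_const (p := N) (Or.inl hx.ne')).mul
    (hasDerivAt_ex (n := n) ha 1 x))
  have hxN : x ^ N ≠ 0 := (Real.rpow_pos_of_pos hx N).ne'
  rw [hloc.deriv_eq, hG x hx, ratio, pow_one]
  erw [hd.deriv]
  rw [Real.rpow_sub_one hx.ne', mul_one]
  field_simp
  ring

end LaguerrePV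

/-- `x` times the logarithmic derivative of the Laguerre largest-eigenvalue distribution
satisfies a third-order ODE (a form of Painlevé V). -/
theorem stmt18 (n : ℕ) (hn : 1 ≤ n) (a : ℝ) (ha : -1 < a) :
    let G : ℝ → ℝ := fun x =>
      ∫ z : Fin n → ℝ in Set.univ.pi (fun _ => Set.Icc 0 x),
        (Vdm n z) ^ 2 * ∏ k, ((z k) ^ a * Real.exp (-(z k)))
    let f : ℝ → ℝ := fun x => x * deriv G x / G x
    ContDiffOn ℝ (⊤ : ℕ∞) G (Set.Ioi 0) ∧ (∀ x > (0 : ℝ), 0 < G x) ∧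
    (∀ x > (0 : ℝ),
      x ^ 2 * iteratedDeriv 3 f x + x * iteratedDeriv 2 f x
        + 6 * x * (deriv f x) ^ 2 - 4 * f x * deriv f x
        - ((a - x) ^ 2 - 4 * (n : ℝ) * x) * deriv f x
        - (2 * (n : ℝ) + a - x) * f x = 0) := by
  intro G f
  have hG : ∀ x > 0, G x = x ^ ((n : ℝ) * (n + a)) * LaguerrePV.ex n ha x 1 := fun x hx =>
    LaguerrePV.integral_eq_rpow_mul_ex ha hx
  refine ⟨?_, fun x hx => ?_, fun x hx => ?_⟩
  · refine ContDiffOn.congr ?_ hG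
    refine ContDiffOn.mul (fun x hx => ?_) ?_
    · exact (Real.contDiffAt_rpow_const_of_ne (ne_of_gt hx)).contDiffWithinAt
    · exact (LaguerrePV.contDiff_pairing ha _).contDiffOn
  · rw [hG x hx]
    exact mul_pos (Real.rpow_pos_of_pos hx _) (LaguerrePV.ex_one_pos ha x)
  -- near every positive point, `f` and its derivatives are polynomials in the normalized moments
  have ev : ∀ {u v : ℝ → ℝ}, (∀ y > 0, u y = v y) → ∀ y > 0, u =ᶠ[nhds y] v :=
    fun h y hy => by filter_upwards [Ioi_mem_nhds hy] with z hz using h z hz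
  set R := LaguerrePV.ratio n ha with hR
  have dR : ∀ k y, HasDerivAt (R k) (-R (k + 1) y + R k y * R 1 y) y :=
    LaguerrePV.hasDerivAt_ratio ha
  have f0 : ∀ y > 0, f y = n * (n + a) - y * R 1 y := fun y hy => LaguerrePV.log_deriv_eq ha hG hy
  have f1 : ∀ y > 0, deriv f y = -R 1 y - y * (-R 2 y + R 1 y ^ 2) := fun y hy => by
    rw [(ev f0 y hy).deriv_eq]
    refine (((hasDerivAt_id y).mul (dR 1 y)).const_sub _).deriv.trans ?_
    simp only [id]
    ring
  have f2 : ∀ y > 0, iteratedDeriv 2 f y = 2 * R 2 y - 2 * R 1 y ^ 2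
      + y * (-R 3 y + 3 * R 1 y * R 2 y - 2 * R 1 y ^ 3) := fun y hy => by
    rw [iteratedDeriv_succ, iteratedDeriv_one, (ev f1 y hy).deriv_eq]
    refine ((dR 1 y).neg.sub ((hasDerivAt_id y).mul
      ((dR 2 y).neg.add ((dR 1 y).pow 2)))).deriv.trans ?_
    simp
    ring
  have f3 : ∀ y > 0, iteratedDeriv 3 f y = 3 * (-R 3 y + 3 * R 1 y * R 2 y - 2 * R 1 y ^ 3)
      + y * (R 4 y - 4 * R 1 y * R 3 y - 3 * R 2 y ^ 2 + 12 * R 1 y ^ 2 * R 2 y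
        - 6 * R 1 y ^ 4) := fun y hy => by
    rw [iteratedDeriv_succ, (ev f2 y hy).deriv_eq]
    refine ((((dR 2 y).const_mul 2).sub (((dR 1 y).pow 2).const_mul 2)).add
      ((hasDerivAt_id y).mul (((dR 3 y).neg.add (((dR 1 y).const_mul 3).mul (dR 2 y))).sub
        (((dR 1 y).pow 3).const_mul 2)))).deriv.trans ?_
    simp
    ring
  rw [f0 x hx, f1 x hx, f2 x hx, f3 x hx]
  exact LaguerrePV.ratio_relation ha x _ _ _ _ rfl rfl rfl rfl
end

section
/- Let n ≥ 1 and a, b > −1, and define G : (−1,1) → ℝ by G(x) = ∫_{[−1,x]^n} Δ_n(z)² ∏_{k=1}^n (1 − z_k)^a (1 + z_k)^b dz₁…dz_n. Set q = (2n + a + b)², r = a² + b², s = a² − b². Then G is smooth and strictly positive on (−1,1), and f(x) := (1 − x²)·G'(x)/G(x) (that is, f(x) = (1 − x²)·d/dx log P_n(max eigenvalue ≤ x) for the Jacobi Hermitian ensemble) satisfies the third-order ODE (x² − 1)² f''' + 2(x² − 1)(x f'' − 3 (f')²) + (8x f − q(x² − 1) − 2sx − 2r) f' − f (2f − qx − s)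 = 0 on (−1,1). -/
/-!
Write `A[P](x)` for the integral of `P Δ² ∏ w(z_k)` over `[-1, x]^n`, so that `G = A[1]`, and
`D = (1 - x²) d/dx`, so that `f = D G / G`. With `p_k` the power sums and `N = 2n + a + b`,
`β = b - a`, the proof combines two sources of relations between averages.

* *Loop equations* (Virasoro constraints). Integrating the divergence of the vector fields
  `z ^ j (1 - z²)`, `j = 0, 1, 2`, against `P Δ² ∏ w(z_k)` gives linear formulas for `D A[P]`,
  `x D A[P]`, `x² D A[P]` as averages (`loop0`, `loop1`, `loop2`). The first one shows that averages
  are stable under `D`; hence `G` is smooth.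
* *A Plücker relation* (`ell_pluecker`). By Andréief's identity the averages of the `2 × 2` minors
  in the elementary symmetric polynomials are moment determinants of Hankel type with two columns
  removed, and these satisfy the three-term Plücker relation. In power sums it reads
  `A[1] A[p₁⁴ + 3p₂² - 4p₁p₃] - 4 A[p₁] A[p₁³ - p₃] + 3 A[p₁² + p₂] A[p₁² - p₂] = 0`.

The loop equations at `1` and `p₁` determine `A[p₁]`, `A[p₂]`, `A[p₁²]` from `G`, `D G`, `D² G` when
`N (N² - 1) ≠ 0`. Those of higher degree determine `A[p₁³ - p₃]` and
`A[p₁⁴ + 3p₂² - 4p₁p₃]` as well. Substituting everything in the Plücker relation and writing the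
`D^k G` through `f` and its derivatives gives the equation (`painleve_algebra`). For `n ≥ 2` one has
`N > 1`. For `n = 1` elimination can fail, but then `p₁² = p₂`, which yields
`D² G = (β - N x) D G` and a Riccati equation for `f` (`riccati_algebra`).

All algebra takes place on polynomials: `ell` replaces monomials by products of moments, so the only
analysis needed concerns the one-variable truncated moments `mom` of the Jacobi weight and Fubini's
theorem (`integral_eval`).
-/

open scoped BigOperators
open MeasureTheory

section
open MvPolynomial

/-! ### Integration functionals on polynomials -/

/-- The linear functional on polynomials in `n` variables that replaces every monomial
`∏ X_k ^ α_k` by the product of moments `∏ m (α_k)`; for `m k = ∫ z ^ k w` it is integration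
against the product weight `∏ w(z_k)`. -/
noncomputable def ell {n : ℕ} (m : ℕ → ℝ) : MvPolynomial (Fin n) ℝ →ₗ[ℝ] ℝ :=
  (basisMonomials (Fin n) ℝ).constr ℝ (fun α => ∏ k, m (α k))

lemma ell_monomial {n : ℕ} (m : ℕ → ℝ) (α : Fin n →₀ ℕ) (c : ℝ) :
    ell m (monomial α c) = c * ∏ k, m (α k) := by
  have h : (monomial α c : MvPolynomial (Fin n) ℝ) = c • basisMonomials (Fin n) ℝ α := by
    simp [smul_monomial]
  rw [h, map_smul, ell, Module.Basis.constr_basis, smul_eq_mul]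

/-- The derivative of `ell m` when each moment `m k` has derivative `d k`. -/
noncomputable def dell {n : ℕ} (m d : ℕ → ℝ) : MvPolynomial (Fin n) ℝ →ₗ[ℝ] ℝ :=
  (basisMonomials (Fin n) ℝ).constr ℝ
    (fun α => ∑ k, (∏ j ∈ Finset.univ.erase k, m (α j)) * d (α k))

lemma dell_monomial {n : ℕ} (m d : ℕ → ℝ) (α : Fin n →₀ ℕ) (c : ℝ) :
    dell m d (monomial α c) =
      c * ∑ k, (∏ j ∈ Finset.univ.erase k, m (α j)) * d (α k) := by
  have h : (monomial α c : MvPolynomial (Fin n) ℝ) = c • basisMonomials (Fin n) ℝ α := by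
    simp [smul_monomial]
  rw [h, map_smul, dell, Module.Basis.constr_basis, smul_eq_mul]

lemma hasDerivAt_ell {n : ℕ} {m d : ℕ → ℝ → ℝ} {x : ℝ}
    (h : ∀ k, HasDerivAt (m k) (d k x) x) (Q : MvPolynomial (Fin n) ℝ) :
    HasDerivAt (fun y => ell (fun k => m k y) Q)
      (dell (fun k => m k x) (fun k => d k x) Q) x := by
  induction Q using MvPolynomial.induction_on' with
  | monomial α c =>
    simp only [ell_monomial, dell_monomial]
    refine HasDerivAt.const_mul c ?_
    simpa [smul_eq_mul] using
      HasDerivAt.fun_finsetProd (u := Finset.univ) (f := fun (k : Fin n) => m (α k))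
        (f' := fun k => d (α k) x) (x := x) (fun k _ => h (α k))
  | add p q hp hq =>
    simp only [map_add]
    exact hp.add hq

/-- The derivation `∑ (X_k ^ j - X_k ^ (j + 2)) ∂_k`, i.e. the vector field
`z ^ j (1 - z²) d/dz` acting on every variable. -/
noncomputable def der (n j : ℕ) : Derivation ℝ (MvPolynomial (Fin n) ℝ) (MvPolynomial (Fin n) ℝ) :=
  mkDerivation ℝ (fun k => X k ^ j - X k ^ (j + 2))

/-- The one-body term of the loop equation with index `j`: the divergence of the vector field
`z ^ j (1 - z²)` plus its pairing with the logarithmic derivative of the weight, where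
`(1 - z²) w' / w = β - γ z`. -/
noncomputable def cof (n j : ℕ) (β γ : ℝ) : MvPolynomial (Fin n) ℝ :=
  ∑ k, (C (j : ℝ) * X k ^ (j - 1) + C β * X k ^ j - C (j + 2 + γ) * X k ^ (j + 1))

lemma ell_mono_mul {n : ℕ} (m : ℕ → ℝ) (α : Fin n →₀ ℕ) (k : Fin n) (c : ℝ) (p : ℕ) :
    ell m (monomial α c * X k ^ p) =
      c * ((∏ j ∈ Finset.univ.erase k, m (α j)) * m (α k + p)) := by
  rw [X_pow_eq_monomial, monomial_mul, ell_monomial, mul_one,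
    ← Finset.prod_erase_mul _ _ (Finset.mem_univ k)]
  congr 2
  · refine Finset.prod_congr rfl fun j hj => ?_
    rw [Finsupp.add_apply, Finsupp.single_eq_of_ne (Finset.ne_of_mem_erase hj), add_zero]
  · simp

/-- Integration by parts: the derivative in the endpoint `x` is a boundary term, and the moment
recurrence `hibp` turns its product with `x ^ j (1 - x²)` into the average of the divergence,
relative to the weight, of `Q` times the vector field `z ^ j (1 - z²)`. -/
lemma dell_loop {n : ℕ} {m d : ℕ → ℝ} {x β γ : ℝ} (hd : ∀ k j, x ^ j * d k = d (k + j))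
    (hibp : ∀ k : ℕ, (1 - x ^ 2) * d k = k * m (k - 1) + β * m k - (k + 2 + γ) * m (k + 1))
    (j : ℕ) (Q : MvPolynomial (Fin n) ℝ) :
    x ^ j * ((1 - x ^ 2) * dell m d Q) = ell m (der n j Q + cof n j β γ * Q) := by
  induction Q using MvPolynomial.induction_on' with
  | monomial α c =>
    rw [dell_monomial, der, mkDerivation_monomial, Finsupp.sum_fintype _ _ (by simp)]
    rw [cof, Finset.sum_mul, Finset.smul_sum, ← Finset.sum_add_distrib, map_sum, Finset.mul_sum,
      Finset.mul_sum, Finset.mul_sum]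
    refine Finset.sum_congr rfl fun k _ => ?_
    have e1 : (c • (monomial (α - Finsupp.single k 1) ((α k : ℕ) : ℝ) •
        (X k ^ j - X k ^ (j + 2) : MvPolynomial (Fin n) ℝ)) +
        (C (j : ℝ) * X k ^ (j - 1) + C β * X k ^ j - C (j + 2 + γ) * X k ^ (j + 1)) *
          monomial α c) =
        c • (monomial (α - Finsupp.single k 1) ((α k : ℕ) : ℝ) * X k ^ j
        - monomial (α - Finsupp.single k 1) ((α k : ℕ) : ℝ) * X k ^ (j + 2))
        + (j : ℝ) • (monomial α c * X k ^ (j - 1)) + β • (monomial α c * X k ^ j)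
        - (j + 2 + γ : ℝ) • (monomial α c * X k ^ (j + 1)) := by
      simp only [smul_eq_mul, smul_eq_C_mul]; ring
    have e2 : ∏ i ∈ Finset.univ.erase k, m ((α - Finsupp.single k 1 : Fin n →₀ ℕ) i) =
        ∏ i ∈ Finset.univ.erase k, m (α i) := by
      refine Finset.prod_congr rfl fun i hi => ?_
      rw [Finsupp.tsub_apply, Finsupp.single_eq_of_ne (Finset.ne_of_mem_erase hi), Nat.sub_zero]
    have e3 : (α - Finsupp.single k 1 : Fin n →₀ ℕ) k = α k - 1 := by simp
    rw [e1]
    simp only [map_add, map_sub, map_smul, ell_mono_mul, smul_eq_mul, e2, e3]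
    have h1 : x ^ j * ((1 - x ^ 2) * d (α k)) = ((α k + j : ℕ) : ℝ) * m (α k + j - 1)
        + β * m (α k + j) - ((α k + j : ℕ) + 2 + γ) * m (α k + j + 1) := by
      rw [← hibp, ← hd]; ring
    have h2 : ((α k : ℕ) : ℝ) * m (α k - 1 + j) + j * m (α k + (j - 1)) =
        ((α k + j : ℕ) : ℝ) * m (α k + j - 1) := by
      rcases Nat.eq_zero_or_pos (α k) with h | h <;> rcases Nat.eq_zero_or_pos j with h' | h'
      · simp [h, h']
      · simp [h]
      · simp [h']
      · rw [show α k - 1 + j = α k + j - 1 by omega, show α k + (j - 1) = α k + j - 1 by omega]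
        push_cast; ring
    have h3 : ((α k : ℕ) : ℝ) * m (α k - 1 + (j + 2)) = α k * m (α k + j + 1) := by
      rcases Nat.eq_zero_or_pos (α k) with h | h
      · simp [h]
      · rw [show α k - 1 + (j + 2) = α k + j + 1 by omega]
    set Pr := ∏ i ∈ Finset.univ.erase k, m (α i)
    rw [show α k + (j + 1) = α k + j + 1 by omega]
    push_cast at *
    linear_combination c * Pr * h1 - c * Pr * h2 + c * Pr * h3
  | add p q hp hq =>
    simp only [map_add, mul_add] at *
    linarith

/-! ### Loop equations -/

/-- The Vandermonde product `∏_{i<j} (X_i - X_j)` as a polynomial. -/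
noncomputable def vd (n : ℕ) : MvPolynomial (Fin n) ℝ :=
  ∏ p ∈ Finset.univ.filter (fun p : Fin n × Fin n => p.1 < p.2), (X p.1 - X p.2)

lemma derivation_prod {R A ι : Type*} [CommRing R] [CommRing A] [Algebra R A] (D : Derivation R A A)
    (s : Finset ι) (f g : ι → A) (h : ∀ i ∈ s, D (f i) = f i * g i) :
    D (∏ i ∈ s, f i) = (∏ i ∈ s, f i) * ∑ i ∈ s, g i := by
  classical
  induction s using Finset.induction_on with
  | empty => simp
  | insert a s ha ih =>
    rw [Finset.prod_insert ha, Finset.sum_insert ha, D.leibniz, smul_eq_mul, smul_eq_mul,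
      ih (fun i hi => h i (Finset.mem_insert_of_mem hi)), h a (Finset.mem_insert_self _ _)]
    ring

lemma two_mul_sum_lt {n : ℕ} {A : Type*} [CommRing A] (g : Fin n → Fin n → A)
    (hg : ∀ i j, g i j = g j i) :
    2 * ∑ p ∈ Finset.univ.filter (fun p : Fin n × Fin n => p.1 < p.2), g p.1 p.2 =
      ∑ i, ∑ j, g i j - ∑ i, g i i := by
  have h1 : ∑ i, ∑ j, g i j = ∑ p : Fin n × Fin n, g p.1 p.2 := by
    rw [Fintype.sum_prod_type]
  have h2 : ∑ p ∈ Finset.univ.filter (fun p : Fin n × Fin n => p.2 < p.1), g p.1 p.2 =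
      ∑ p ∈ Finset.univ.filter (fun p : Fin n × Fin n => p.1 < p.2), g p.1 p.2 := by
    refine Finset.sum_nbij' Prod.swap Prod.swap ?_ ?_ ?_ ?_ ?_ <;> simp [hg]
  have h3 : ∑ p ∈ Finset.univ.filter (fun p : Fin n × Fin n => p.1 = p.2), g p.1 p.2 =
      ∑ i, g i i := by
    refine Finset.sum_nbij' Prod.fst (fun i => (i, i)) ?_ ?_ ?_ ?_ ?_ <;> simp +contextual
  have h4 : ∑ p : Fin n × Fin n, g p.1 p.2 =
      ∑ p ∈ Finset.univ.filter (fun p : Fin n × Fin n => p.1 < p.2), g p.1 p.2 +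
      ∑ p ∈ Finset.univ.filter (fun p : Fin n × Fin n => p.1 = p.2), g p.1 p.2 +
      ∑ p ∈ Finset.univ.filter (fun p : Fin n × Fin n => p.2 < p.1), g p.1 p.2 := by
    rw [Finset.sum_filter, Finset.sum_filter, Finset.sum_filter, ← Finset.sum_add_distrib,
      ← Finset.sum_add_distrib]
    refine Finset.sum_congr rfl fun p _ => ?_
    rcases lt_trichotomy p.1 p.2 with h | h | h
    · simp [h, h.ne, h.not_gt]
    · simp [h]
    · simp [h, h.ne', h.not_gt]
  rw [h1, h4, h2, h3]
  ring

/-- The power sum `∑ X_i ^ k`. -/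
noncomputable def ps (n k : ℕ) : MvPolynomial (Fin n) ℝ := ∑ i, X i ^ k

lemma der_ps (n j k : ℕ) : der n j (ps n k) = C (k : ℝ) * (ps n (k - 1 + j) - ps n (k + 1 + j)) := by
  rw [ps, map_sum, ps, ps, ← Finset.sum_sub_distrib, Finset.mul_sum]
  refine Finset.sum_congr rfl fun i _ => ?_
  rw [Derivation.leibniz_pow, der, mkDerivation_X]
  rcases k with _ | k
  · simp
  · simp only [nsmul_eq_mul, smul_eq_mul, Nat.add_sub_cancel]
    push_cast
    simp only [C_add, C_1, map_natCast]
    ring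

/-- The loop equation for `P` times the squared Vandermonde product. Applying the vector field to
`vd n` gives `vd n` times the sum over pairs of the divided differences `g` of
`z ^ j - z ^ (j + 2)`, a symmetric function that can be summed over all ordered pairs. -/
lemma loop_aux {n : ℕ} {m d : ℕ → ℝ} {x β γ : ℝ} (hd : ∀ k j, x ^ j * d k = d (k + j))
    (hibp : ∀ k : ℕ, (1 - x ^ 2) * d k = k * m (k - 1) + β * m k - (k + 2 + γ) * m (k + 1))
    (j : ℕ) (g : Fin n → Fin n → MvPolynomial (Fin n) ℝ) (hg : ∀ i j, g i j = g j i)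
    (hgX : ∀ i k, (X i ^ j - X i ^ (j + 2)) - (X k ^ j - X k ^ (j + 2)) = (X i - X k) * g i k)
    (V : MvPolynomial (Fin n) ℝ) (hV : cof n j β γ + (∑ i, ∑ j, g i j - ∑ i, g i i) = V)
    (P : MvPolynomial (Fin n) ℝ) :
    x ^ j * ((1 - x ^ 2) * dell m d (P * vd n ^ 2)) =
      ell m ((der n j P + V * P) * vd n ^ 2) := by
  rw [dell_loop hd hibp]
  congr 1
  have h : der n j (vd n) = vd n * ∑ p ∈ Finset.univ.filter
      (fun p : Fin n × Fin n => p.1 < p.2), g p.1 p.2 := by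
    refine derivation_prod _ _ _ _ fun p _ => ?_
    rw [map_sub, der, mkDerivation_X, mkDerivation_X, hgX]
  have h2 := two_mul_sum_lt g hg
  rw [← hV, Derivation.leibniz, pow_two, Derivation.leibniz, h, ← h2]
  simp only [smul_eq_mul]
  ring

lemma ps_zero (n : ℕ) : ps n 0 = C (n : ℝ) := by simp [ps]

/-- The loop equation for the vector field `1 - z²`; it expresses `(1 - x²) d/dx` of an average as
another average. -/
lemma loop0 {n : ℕ} {m d : ℕ → ℝ} {x β γ : ℝ} (hd : ∀ k j, x ^ j * d k = d (k + j))
    (hibp : ∀ k : ℕ, (1 - x ^ 2) * d k = k * m (k - 1) + β * m k - (k + 2 + γ) * m (k + 1))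
    (P : MvPolynomial (Fin n) ℝ) :
    (1 - x ^ 2) * dell m d (P * vd n ^ 2) =
      ell m ((der n 0 P + (C (β * n) - C (2 * n + γ) * ps n 1) * P) * vd n ^ 2) := by
  have := loop_aux (n := n) hd hibp 0 (fun i k => -(X i + X k)) (fun i j => by ring)
    (fun i k => by ring) _ rfl P
  rw [pow_zero, one_mul] at this
  rw [this]
  congr 4
  simp only [cof, ps, Finset.sum_neg_distrib, Finset.sum_add_distrib, Finset.sum_sub_distrib,
    ← Finset.mul_sum]
  simp [← Finset.mul_sum, show (C 2 : MvPolynomial (Fin n) ℝ) = 2 from map_ofNat C 2]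
  ring

/-- The loop equation for the vector field `z (1 - z²)`. -/
lemma loop1 {n : ℕ} {m d : ℕ → ℝ} {x β γ : ℝ} (hd : ∀ k j, x ^ j * d k = d (k + j))
    (hibp : ∀ k : ℕ, (1 - x ^ 2) * d k = k * m (k - 1) + β * m k - (k + 2 + γ) * m (k + 1))
    (P : MvPolynomial (Fin n) ℝ) :
    x * ((1 - x ^ 2) * dell m d (P * vd n ^ 2)) =
      ell m ((der n 1 P + (C ((n : ℝ) ^ 2) + C β * ps n 1 - C (2 * n + γ) * ps n 2
        - ps n 1 * ps n 1) * P) * vd n ^ 2) := by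
  have := loop_aux (n := n) hd hibp 1 (fun i k => 1 - (X i ^ 2 + X i * X k + X k ^ 2))
    (fun i j => by ring) (fun i k => by ring) _ rfl P
  rw [pow_one] at this
  rw [this]
  congr 4
  simp only [cof, ps, Finset.sum_add_distrib, Finset.sum_sub_distrib,
    ← Finset.mul_sum, ← Finset.sum_mul, ← pow_two]
  simp [← Finset.mul_sum, show (C 2 : MvPolynomial (Fin n) ℝ) = 2 from map_ofNat C 2]
  ring

/-- The loop equation for the vector field `z² (1 - z²)`. -/
lemma loop2 {n : ℕ} {m d : ℕ → ℝ} {x β γ : ℝ} (hd : ∀ k j, x ^ j * d k = d (k + j))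
    (hibp : ∀ k : ℕ, (1 - x ^ 2) * d k = k * m (k - 1) + β * m k - (k + 2 + γ) * m (k + 1))
    (P : MvPolynomial (Fin n) ℝ) :
    x ^ 2 * ((1 - x ^ 2) * dell m d (P * vd n ^ 2)) =
      ell m ((der n 2 P + (C (2 * (n : ℝ)) * ps n 1 + C β * ps n 2 - C (2 * n + γ) * ps n 3
        - 2 * (ps n 1 * ps n 2)) * P) * vd n ^ 2) := by
  have := loop_aux (n := n) hd hibp 2
    (fun i k => X i + X k - (X i ^ 3 + X i ^ 2 * X k + X i * X k ^ 2 + X k ^ 3))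
    (fun i j => by ring) (fun i k => by ring) _ rfl P
  rw [this]
  congr 4
  simp only [cof, ps, Finset.sum_add_distrib, Finset.sum_sub_distrib,
    ← Finset.mul_sum, ← Finset.sum_mul, ← pow_succ, ← pow_succ']
  simp [← Finset.mul_sum, show (C 2 : MvPolynomial (Fin n) ℝ) = 2 from map_ofNat C 2]
  ring

/-! ### Brackets and moment determinants -/

section bracket
variable {n : ℕ}

/-- The square matrix of size `n + 2` with rows `T 0, …, T (n - 1), a, b`. -/
def rowsMat {K : Type*} (T : Fin n → Fin n ⊕ Fin 2 → K) (a b : Fin n ⊕ Fin 2 → K) :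
    Matrix (Fin n ⊕ Fin 2) (Fin n ⊕ Fin 2) K :=
  Matrix.of (Sum.elim T ![a, b])

@[simp] lemma rowsMat_inl {K : Type*} (T : Fin n → Fin n ⊕ Fin 2 → K) (a b : Fin n ⊕ Fin 2 → K)
    (k : Fin n) (c : Fin n ⊕ Fin 2) : rowsMat T a b (Sum.inl k) c = T k c := rfl

@[simp] lemma rowsMat_inr_zero {K : Type*} (T : Fin n → Fin n ⊕ Fin 2 → K)
    (a b : Fin n ⊕ Fin 2 → K) (c : Fin n ⊕ Fin 2) : rowsMat T a b (Sum.inr 0) c = a c := rfl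

@[simp] lemma rowsMat_inr_one {K : Type*} (T : Fin n → Fin n ⊕ Fin 2 → K)
    (a b : Fin n ⊕ Fin 2 → K) (c : Fin n ⊕ Fin 2) : rowsMat T a b (Sum.inr 1) c = b c := rfl

/-- The three-term Plücker relation for the brackets `[a b] = det (T, a, b)`. -/
lemma bracket_pluecker {K : Type*} [CommRing K] (T : Fin n → Fin n ⊕ Fin 2 → K)
    (a b c d : Fin n ⊕ Fin 2 → K) :
    (rowsMat T a b).det * (rowsMat T c d).det - (rowsMat T a c).det * (rowsMat T b d).det
      + (rowsMat T a d).det * (rowsMat T b c).det = 0 := by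
  have hup0 : ∀ a b c : Fin n ⊕ Fin 2 → K,
      (rowsMat T a b).updateRow (Sum.inr 0) c = rowsMat T c b := by
    intro a b c
    ext i j
    rcases i with i | i
    · simp [Matrix.updateRow_apply]
    · fin_cases i <;> simp [Matrix.updateRow_apply]
  have hup1 : ∀ a b c : Fin n ⊕ Fin 2 → K,
      (rowsMat T a b).updateRow (Sum.inr 1) c = rowsMat T a c := by
    intro a b c
    ext i j
    rcases i with i | i
    · simp [Matrix.updateRow_apply]
    · fin_cases i <;> simp [Matrix.updateRow_apply]
  obtain ⟨φ, hφ⟩ : ∃ φ : (Fin n ⊕ Fin 2 → K) →ₗ[K] K, ∀ v, φ v = (rowsMat T v d).det := by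
    refine ⟨(Matrix.detRowAlternating (R := K) (n := Fin n ⊕ Fin 2)).toMultilinearMap.toLinearMap
      (rowsMat T a d) (Sum.inr 0), fun v => ?_⟩
    rw [← hup0 a d v]
    rfl
  have hT : ∀ k, φ (T k) = 0 := by
    intro k
    rw [hφ]
    refine Matrix.det_zero_of_row_eq (i := Sum.inl k) (j := Sum.inr 0) (by simp) ?_
    ext j
    simp
  have hanti : (rowsMat T c b).det = -(rowsMat T b c).det := by
    have := Matrix.det_permute (Equiv.swap (Sum.inr 0) (Sum.inr 1)) (rowsMat T b c)
    rw [Equiv.Perm.sign_swap (by simp)] at this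
    simp only [Units.val_neg, Units.val_one, Int.cast_neg, Int.cast_one, neg_mul, one_mul] at this
    rw [← this]
    congr 1
    ext i j
    rcases i with i | i
    · simp [Equiv.swap_apply_of_ne_of_ne]
    · fin_cases i <;> simp
  -- Cramer's rule expands `c` in the rows of `rowsMat T a b`; then take the bracket with `d`
  have hc := Matrix.mulVec_cramer (rowsMat T a b).transpose c
  have hc2 : (rowsMat T a b).det • c = ∑ k, ((rowsMat T a b).updateRow (Sum.inl k) c).det • T k
      + (rowsMat T c b).det • a + (rowsMat T a c).det • b := by
    rw [Matrix.det_transpose] at hc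
    rw [← hc]
    ext j
    simp only [Matrix.mulVec, dotProduct, Fintype.sum_sum_type, Fin.sum_univ_two,
      Matrix.cramer_transpose_apply, hup0, hup1, Pi.add_apply, Finset.sum_apply, Pi.smul_apply,
      smul_eq_mul, Matrix.transpose_apply, rowsMat_inl, rowsMat_inr_zero, rowsMat_inr_one]
    rw [add_assoc]
    congr 1
    · exact Finset.sum_congr rfl fun k _ => mul_comm _ _
    · ring
  have h := congrArg φ hc2
  simp only [map_add, map_sum, map_smul, hT, smul_eq_mul, mul_zero, Finset.sum_const_zero,
    zero_add] at h
  simp only [hφ, hanti] at h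
  linear_combination h

/-- The exponent attached to a column: the `n + 2` columns are numbered `0, …, n + 1`, the last
two being the summand `Fin 2`. -/
def ex : Fin n ⊕ Fin 2 → ℕ := Sum.elim (fun j => (j : ℕ)) (fun i => n + (i : ℕ))

lemma ell_rename (m : ℕ → ℝ) (e : Equiv.Perm (Fin n)) (Q : MvPolynomial (Fin n) ℝ) :
    ell m (rename e Q) = ell m Q := by
  induction Q using MvPolynomial.induction_on' with
  | monomial α c =>
    rw [rename_monomial, ell_monomial, ell_monomial, ← Equiv.prod_comp e]
    congr 1
    refine Finset.prod_congr rfl fun k _ => ?_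
    rw [Finsupp.mapDomain_apply e.injective]
  | add p q hp hq => simp [hp, hq]

lemma ell_prod_X (m : ℕ → ℝ) (c : ℝ) (g : Fin n → ℕ) :
    ell m (C c * ∏ k, X k ^ g k) = c * ∏ k, m (g k) := by
  have : (C c * ∏ k, X k ^ g k : MvPolynomial (Fin n) ℝ) =
      monomial (Finsupp.equivFunOnFinite.symm g) c := by
    rw [monomial_eq, Finsupp.prod_fintype _ _ (by simp)]
    simp
  rw [this, ell_monomial]
  simp

/-- The `n` rows `(1, X_k, …, X_k ^ (n + 1))`. -/
noncomputable def polyRows (n : ℕ) :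
    Fin n → Fin n ⊕ Fin 2 → MvPolynomial (Fin n) ℝ := fun k c => X k ^ ex c

/-- The `n` rows `(m k, m (k + 1), …, m (k + n + 1))` of a Hankel matrix of moments. -/
def momRows (n : ℕ) (m : ℕ → ℝ) : Fin n → Fin n ⊕ Fin 2 → ℝ :=
  fun k c => m ((k : ℕ) + ex c)

lemma ell_diag_mul_det (m : ℕ → ℝ) (a b : Fin n ⊕ Fin 2 → ℝ) :
    ell m ((∏ k : Fin n, X k ^ (k : ℕ)) *
      (rowsMat (polyRows n) (fun c => C (a c)) (fun c => C (b c))).det) =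
      (rowsMat (momRows n m) a b).det := by
  rw [← Matrix.det_transpose, Matrix.det_apply', ← Matrix.det_transpose (rowsMat (momRows n m) a b),
    Matrix.det_apply', Finset.mul_sum, map_sum]
  refine Finset.sum_congr rfl fun σ _ => ?_
  simp only [Matrix.transpose_apply, Fintype.prod_sum_type, Fin.prod_univ_two,
    rowsMat_inl, rowsMat_inr_zero, rowsMat_inr_one, polyRows, momRows]
  rw [show ((∏ k : Fin n, X k ^ (k : ℕ)) * (((Equiv.Perm.sign σ : ℤ) : MvPolynomial (Fin n) ℝ) *
      ((∏ k : Fin n, X k ^ ex (σ (Sum.inl k))) * (C (a (σ (Sum.inr 0))) * C (b (σ (Sum.inr 1))))))) =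
      C (((Equiv.Perm.sign σ : ℤ) : ℝ) * (a (σ (Sum.inr 0)) * b (σ (Sum.inr 1)))) *
      ∏ k : Fin n, X k ^ ((k : ℕ) + ex (σ (Sum.inl k))) from ?_, ell_prod_X]
  · ring
  · simp only [pow_add, Finset.prod_mul_distrib, C_mul, map_intCast]
    ring

/-- Andréief's identity, for a Vandermonde determinant against an `n`-variable determinant
bordered by two constant rows. -/
lemma ell_vandermonde_mul_det (m : ℕ → ℝ) (a b : Fin n ⊕ Fin 2 → ℝ) :
    ell m ((Matrix.vandermonde (X : Fin n → MvPolynomial (Fin n) ℝ)).det *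
      (rowsMat (polyRows n) (fun c => C (a c)) (fun c => C (b c))).det) =
      (n.factorial : ℝ) * (rowsMat (momRows n m) a b).det := by
  set R := rowsMat (polyRows n) (fun c => C (a c)) (fun c => C (b c)) with hR
  -- every term of the Vandermonde expansion contributes the same amount: relabelling the
  -- variables permutes the rows of `R`, and the two signs cancel
  have key : ∀ σ : Equiv.Perm (Fin n), ell m ((((Equiv.Perm.sign σ : ℤ) : MvPolynomial (Fin n) ℝ) *
      ∏ k : Fin n, X (σ k) ^ (k : ℕ)) * R.det) = (rowsMat (momRows n m) a b).det := by
    intro σ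
    rw [← ell_diag_mul_det, ← ell_rename m σ.symm]
    congr 1
    have hdet : rename σ.symm R.det = ((Equiv.Perm.sign σ : ℤ) : MvPolynomial (Fin n) ℝ) * R.det := by
      rw [AlgHom.map_det]
      have := Matrix.det_permute (Equiv.Perm.sumCongr σ.symm (1 : Equiv.Perm (Fin 2))) R
      rw [Equiv.Perm.sign_sumCongr, Equiv.Perm.sign_one, mul_one, Equiv.Perm.sign_symm] at this
      rw [← this]
      congr 1
      ext1 i j
      rcases i with i | i
      · simp [hR, polyRows]
      · fin_cases i <;> simp [hR]
    rw [map_mul, map_mul, hdet, map_intCast, map_prod]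
    simp only [map_pow, rename_X, Equiv.symm_apply_apply]
    have hs : (((Equiv.Perm.sign σ : ℤ) : MvPolynomial (Fin n) ℝ)) *
        ((Equiv.Perm.sign σ : ℤ) : MvPolynomial (Fin n) ℝ) = 1 := by
      rw [← Int.cast_mul, ← Units.val_mul, Int.units_mul_self]; simp
    linear_combination ((∏ k : Fin n, X k ^ (k : ℕ)) * R.det) * hs
  rw [Matrix.det_apply', Finset.sum_mul, map_sum]
  simp only [Matrix.vandermonde_apply, key]
  simp [Fintype.card_perm]

end bracket

/-! ### Bordered Vandermonde determinants -/

section minors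
variable {n : ℕ}

/-- The polynomial `∏ (t - X_k)`, whose coefficients are the signed elementary symmetric
polynomials. -/
noncomputable def nodal (n : ℕ) : Polynomial (MvPolynomial (Fin n) ℝ) :=
  ∏ k : Fin n, (Polynomial.X - Polynomial.C (X k))

lemma nodal_natDegree : (nodal n).natDegree = n := by
  rw [nodal, Polynomial.natDegree_prod_of_monic _ _ (fun i _ => Polynomial.monic_X_sub_C _)]
  simp

lemma nodal_monic : (nodal n).Monic :=
  Polynomial.monic_prod_of_monic _ _ (fun i _ => Polynomial.monic_X_sub_C _)

lemma nodal_eval (k : Fin n) : (nodal n).eval (X k) = 0 := by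
  rw [nodal, Polynomial.eval_prod]
  exact Finset.prod_eq_zero (Finset.mem_univ k) (by simp)

lemma sum_ex_eq_eval {K : Type*} [CommRing K] (p : Polynomial K) (hp : p.natDegree < n + 2)
    (y : K) : ∑ c : Fin n ⊕ Fin 2, y ^ ex c * p.coeff (ex c) = p.eval y := by
  rw [Polynomial.eval_eq_sum_range' hp, ← Fin.sum_univ_eq_sum_range (fun i => p.coeff i * y ^ i),
    Fin.sum_univ_add, Fintype.sum_sum_type]
  simp [ex, mul_comm]

/-- The unipotent column operation that replaces the last two columns, of exponents `n` and
`n + 1`, by combinations that evaluate `nodal n` and `t * nodal n`; these vanish on `polyRows`. -/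
noncomputable def colOp (n : ℕ) :
    Matrix (Fin n ⊕ Fin 2) (Fin n ⊕ Fin 2) (MvPolynomial (Fin n) ℝ) :=
  Matrix.of fun c => Sum.elim (fun j => if c = Sum.inl j then 1 else 0)
    ![(nodal n).coeff (ex c), (Polynomial.X * nodal n).coeff (ex c)]

lemma colOp_det : (colOp n).det = 1 := by
  have h : colOp n = Matrix.fromBlocks 1 (Matrix.of fun j i => colOp n (Sum.inl j) (Sum.inr i)) 0
      !![1, (Polynomial.X * nodal n).coeff n; 0, 1] := by
    have h0 : (nodal n).coeff n = 1 := by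
      have := nodal_monic (n := n)
      rwa [Polynomial.Monic, Polynomial.leadingCoeff, nodal_natDegree] at this
    have h1 : (nodal n).coeff (n + 1) = 0 :=
      Polynomial.coeff_eq_zero_of_natDegree_lt (by rw [nodal_natDegree]; omega)
    ext1 i j
    rcases i with i | i <;> rcases j with j | j
    · simp [colOp, Matrix.one_apply]
    · simp
    · simp [colOp]
    · fin_cases i <;> fin_cases j <;> simp [colOp, ex, h0, h1]
  rw [h, Matrix.det_fromBlocks_zero₂₁]
  simp [Matrix.det_fin_two]

/-- The bordered determinant is the Vandermonde determinant times a `2 × 2` determinant of the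
coefficients of `nodal n` and `t * nodal n`, paired with the two border rows. -/
lemma det_polyRows (a b : Fin n ⊕ Fin 2 → MvPolynomial (Fin n) ℝ) :
    (rowsMat (polyRows n) a b).det =
      (Matrix.vandermonde (X : Fin n → MvPolynomial (Fin n) ℝ)).det *
      ((∑ c, a c * (nodal n).coeff (ex c)) * (∑ c, b c * (Polynomial.X * nodal n).coeff (ex c))
      - (∑ c, a c * (Polynomial.X * nodal n).coeff (ex c)) * (∑ c, b c * (nodal n).coeff (ex c))) := by
  have hd1 : (nodal n).natDegree < n + 2 := by rw [nodal_natDegree]; omega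
  have hd2 : (Polynomial.X * nodal n).natDegree < n + 2 := by
    rw [Polynomial.natDegree_X_mul nodal_monic.ne_zero, nodal_natDegree]; omega
  have h : rowsMat (polyRows n) a b * colOp n = Matrix.fromBlocks
      (Matrix.vandermonde (X : Fin n → MvPolynomial (Fin n) ℝ)) 0
      (Matrix.of fun i j => rowsMat (polyRows n) a b (Sum.inr i) (Sum.inl j))
      !![∑ c, a c * (nodal n).coeff (ex c), ∑ c, a c * (Polynomial.X * nodal n).coeff (ex c);
        ∑ c, b c * (nodal n).coeff (ex c), ∑ c, b c * (Polynomial.X * nodal n).coeff (ex c)] := by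
    ext1 i j
    rw [Matrix.mul_apply]
    rcases j with j | j
    · rcases i with i | i
      · simp [colOp, polyRows, ex, Matrix.vandermonde_apply]
      · simp [colOp]
    · rcases i with i | i
      · have e1 := sum_ex_eq_eval _ hd1 (X i)
        have e2 := sum_ex_eq_eval _ hd2 (X i)
        rw [nodal_eval] at e1
        rw [Polynomial.eval_mul, nodal_eval, mul_zero] at e2
        fin_cases j
        · simpa [colOp, polyRows] using e1
        · simpa [colOp, polyRows] using e2
      · fin_cases i <;> fin_cases j <;> simp [colOp]
  have h2 := congrArg Matrix.det h
  rw [Matrix.det_mul, colOp_det, mul_one, Matrix.det_fromBlocks_zero₁₂, Matrix.det_fin_two] at h2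
  simpa using h2

lemma vd_sq : vd n ^ 2 = (Matrix.vandermonde (X : Fin n → MvPolynomial (Fin n) ℝ)).det ^ 2 := by
  have : ∏ p ∈ Finset.univ.filter (fun p : Fin n × Fin n => p.1 < p.2),
      (X p.2 - X p.1 : MvPolynomial (Fin n) ℝ) = ∏ i : Fin n, ∏ j ∈ Finset.Ioi i, (X j - X i) := by
    rw [Finset.prod_sigma']
    refine Finset.prod_nbij' (fun p => ⟨p.1, p.2⟩) (fun p => (p.1, p.2)) ?_ ?_ ?_ ?_ ?_ <;> simp
  rw [Matrix.det_vandermonde, ← this, vd, ← Finset.prod_pow, ← Finset.prod_pow]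
  exact Finset.prod_congr rfl fun p _ => by ring

end minors

/-! ### The quadratic relation between averages -/

section pluecker

/-- The average of a `2 × 2` minor of the coefficients of `nodal n` and `t * nodal n` against the
squared Vandermonde product is a moment determinant with two columns removed. -/
lemma ell_minor {n : ℕ} (m : ℕ → ℝ) (c d : Fin n ⊕ Fin 2) :
    ell m (((nodal n).coeff (ex c) * (Polynomial.X * nodal n).coeff (ex d)
      - (Polynomial.X * nodal n).coeff (ex c) * (nodal n).coeff (ex d)) * vd n ^ 2) =
      (n.factorial : ℝ) * (rowsMat (momRows n m) (Pi.single c 1) (Pi.single d 1)).det := by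
  rw [← ell_vandermonde_mul_det, det_polyRows, vd_sq]
  congr 1
  have h : ∀ (c : Fin n ⊕ Fin 2) (f : Fin n ⊕ Fin 2 → MvPolynomial (Fin n) ℝ),
      ∑ i, C ((Pi.single c 1 : Fin n ⊕ Fin 2 → ℝ) i) * f i = f c := by
    intro c f
    rw [Finset.sum_eq_single c]
    · simp
    · intro b _ hb
      simp [Pi.single_eq_of_ne hb]
    · simp
  rw [h, h c, h d, h d]
  ring

lemma nodal_coeff (n r : ℕ) (hr : r ≤ n) :
    (nodal n).coeff (n - r) = (-1) ^ r * esymm (Fin n) ℝ r := by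
  have h := Multiset.prod_X_sub_C_coeff (R := MvPolynomial (Fin n) ℝ)
    (Finset.univ.val.map (X : Fin n → MvPolynomial (Fin n) ℝ)) (k := n - r) (by simp)
  rw [Multiset.map_map] at h
  rw [esymm_eq_multiset_esymm]
  simpa [nodal, Finset.prod, Function.comp_def, Nat.sub_sub_self hr] using h

/-- Newton's identities in degree at most three. -/
lemma esymm_newton (n : ℕ) :
    esymm (Fin n) ℝ 1 = ps n 1 ∧ 2 * esymm (Fin n) ℝ 2 = ps n 1 ^ 2 - ps n 2 ∧
    6 * esymm (Fin n) ℝ 3 = ps n 1 ^ 3 - 3 * ps n 1 * ps n 2 + 2 * ps n 3 := by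
  have hp : ∀ k, psum (Fin n) ℝ k = ps n k := fun k => rfl
  have h2 := mul_esymm_eq_sum (Fin n) ℝ 2
  have h3 := mul_esymm_eq_sum (Fin n) ℝ 3
  simp only [Finset.sum_filter, Finset.Nat.sum_antidiagonal_eq_sum_range_succ_mk,
    Finset.sum_range_succ, Finset.sum_range_zero, hp] at h2 h3
  have h1 : esymm (Fin n) ℝ 1 = ps n 1 := by rw [esymm_one]; simp [ps]
  rw [h1] at h2 h3
  norm_num [esymm_zero] at h2 h3
  refine ⟨h1, by linear_combination h2, by linear_combination 2 * h3 + ps n 1 * h2⟩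

/-- The quadratic relation between averages of power sums: the Plücker relation for moment
determinants with two of the last four columns removed. For `n = 1` there are only three columns,
and the relation is immediate since every `p_k` is `X ^ k`. -/
lemma ell_pluecker {n : ℕ} (hn : 1 ≤ n) (m : ℕ → ℝ) :
    ell m (1 * vd n ^ 2) *
      ell m ((ps n 1 ^ 4 + 3 * ps n 2 ^ 2 - 4 * (ps n 1 * ps n 3)) * vd n ^ 2)
    - 4 * (ell m (ps n 1 * vd n ^ 2) * ell m ((ps n 1 ^ 3 - ps n 3) * vd n ^ 2))
    + 3 * (ell m ((ps n 1 ^ 2 + ps n 2) * vd n ^ 2) * ell m ((ps n 1 ^ 2 - ps n 2) * vd n ^ 2))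
    = 0 := by
  rcases Nat.lt_or_ge n 2 with h2 | h2
  · obtain rfl : n = 1 := by omega
    have e : ∀ k, ps 1 k = X 0 ^ k := by intro k; simp [ps]
    simp only [e]
    ring_nf
    simp
  obtain ⟨k, rfl⟩ : ∃ k, n = k + 2 := ⟨n - 2, by omega⟩
  obtain ⟨e1, e2, e3⟩ := esymm_newton (k + 2)
  set E := nodal (k + 2) with hE
  have c0 : E.coeff (k + 2 + 1) = 0 :=
    Polynomial.coeff_eq_zero_of_natDegree_lt (by rw [hE, nodal_natDegree]; omega)
  have c1 : E.coeff (k + 2) = 1 := by simpa using nodal_coeff (k + 2) 0 (by omega)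
  have c2 : E.coeff (k + 1) = -esymm (Fin (k + 2)) ℝ 1 := by
    simpa using nodal_coeff (k + 2) 1 (by omega)
  have c3 : E.coeff k = esymm (Fin (k + 2)) ℝ 2 := by
    simpa using nodal_coeff (k + 2) 2 (by omega)
  have c4 : (Polynomial.X * E).coeff k = -esymm (Fin (k + 2)) ℝ 3 := by
    rcases k with _ | k
    · have : esymm (Fin (0 + 2)) ℝ 3 = 0 := by
        rw [esymm, Finset.powersetCard_eq_empty.2 (by simp), Finset.sum_empty]
      rw [this]; simp
    · rw [Polynomial.coeff_X_mul]
      have := nodal_coeff (k + 1 + 2) 3 (by omega)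
      rw [show k + 1 + 2 - 3 = k by omega] at this
      rw [this]; ring
  have ex1 : ex (Sum.inr 1 : Fin (k + 2) ⊕ Fin 2) = k + 2 + 1 := rfl
  have ex2 : ex (Sum.inr 0 : Fin (k + 2) ⊕ Fin 2) = k + 2 := rfl
  have ex3 : ex (Sum.inl ⟨k + 1, by omega⟩ : Fin (k + 2) ⊕ Fin 2) = k + 1 := rfl
  have ex4 : ex (Sum.inl ⟨k, by omega⟩ : Fin (k + 2) ⊕ Fin 2) = k := rfl
  have S := ell_minor (n := k + 2) m
  have S12 := S (Sum.inr 1) (Sum.inr 0)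
  have S13 := S (Sum.inr 1) (Sum.inl ⟨k + 1, by omega⟩)
  have S14 := S (Sum.inr 1) (Sum.inl ⟨k, by omega⟩)
  have S23 := S (Sum.inr 0) (Sum.inl ⟨k + 1, by omega⟩)
  have S24 := S (Sum.inr 0) (Sum.inl ⟨k, by omega⟩)
  have S34 := S (Sum.inl ⟨k + 1, by omega⟩) (Sum.inl ⟨k, by omega⟩)
  have hpl := bracket_pluecker (momRows (k + 2) m) (Pi.single (Sum.inr 1) 1)
    (Pi.single (Sum.inr 0) 1) (Pi.single (Sum.inl ⟨k + 1, by omega⟩) 1)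
    (Pi.single (Sum.inl ⟨k, by omega⟩) 1)
  simp only [ex1, ex2, ex3, ex4, ← hE, Polynomial.coeff_X_mul, c0, c1, c2, c3, c4]
    at S12 S13 S14 S23 S24 S34
  -- each bracket is a constant multiple of an average of power sums: over the last four
  -- columns the minors of the coefficients of `nodal` are `1, e₁, e₂, e₁² - e₂, e₁e₂ - e₃,
  -- e₂² - e₁e₃` up to sign
  have key : ∀ (c : ℕ) (A B : MvPolynomial (Fin (k + 2)) ℝ), c * A = B →
      ell m (B * vd (k + 2) ^ 2) = c * ell m (A * vd (k + 2) ^ 2) := by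
    rintro c A B rfl
    rw [mul_assoc, ← nsmul_eq_mul, map_nsmul, nsmul_eq_mul]
  have neg : ∀ A : MvPolynomial (Fin (k + 2)) ℝ,
      ell m (-A * vd (k + 2) ^ 2) = -ell m (A * vd (k + 2) ^ 2) := by
    intro A
    rw [neg_mul, map_neg]
  rw [e1] at S13 S23 S24 S34
  set p := ps (k + 2) 1
  set p' := ps (k + 2) 2
  set p3 := ps (k + 2) 3
  have k12 := key 1 _ (-1) (by push_cast; ring) |>.trans (congrArg _ S12)
  have k13 := key 1 _ p (by push_cast; ring) |>.trans (congrArg _ S13)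
  have k14 := key 2 _ (-(p ^ 2 - p')) (by push_cast; linear_combination -e2) |>.trans
    (congrArg _ S14)
  have k23 := key 2 _ (-(p ^ 2 + p')) (by push_cast; linear_combination e2) |>.trans
    (congrArg _ S23)
  have k24 := key 6 _ (2 * (p ^ 3 - p3)) (by push_cast; linear_combination 3 * p * e2 - e3) |>.trans
    (congrArg _ S24)
  rw [key 2 (p ^ 3 - p3) _ (by push_cast; ring)] at k24
  have k34 := key 12 _ (-(p ^ 4 + 3 * p' ^ 2 - 4 * (p * p3)))
    (by push_cast; linear_combination 2 * p * e3 - 3 * (2 * esymm (Fin (k + 2)) ℝ 2 + p ^ 2 - p') * e2)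
    |>.trans (congrArg _ S34)
  rw [neg] at k12 k14 k23 k34
  push_cast at k12 k13 k14 k23 k24 k34
  generalize ((k + 2).factorial : ℝ) = c at *
  generalize ell m (1 * vd (k + 2) ^ 2) = A1 at *
  generalize ell m (p * vd (k + 2) ^ 2) = A2 at *
  generalize ell m ((p ^ 2 - p') * vd (k + 2) ^ 2) = A3 at *
  generalize ell m ((p ^ 2 + p') * vd (k + 2) ^ 2) = A4 at *
  generalize ell m ((p ^ 3 - p3) * vd (k + 2) ^ 2) = A5 at *
  generalize ell m ((p ^ 4 + 3 * p' ^ 2 - 4 * (p * p3)) * vd (k + 2) ^ 2) = A6 at *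
  clear S S12 S13 S14 S23 S24 S34 key neg
  obtain rfl : A1 = _ := neg_eq_iff_eq_neg.1 k12
  obtain rfl : A2 = _ := k13
  obtain rfl : A3 = _ := neg_eq_iff_eq_neg.1 k14
  obtain rfl : A4 = _ := neg_eq_iff_eq_neg.1 k23
  obtain rfl : A6 = _ := neg_eq_iff_eq_neg.1 k34
  linear_combination 12 * c ^ 2 * hpl
    + (-2) * (c * (rowsMat (momRows (k + 2) m) (Pi.single (Sum.inr 1) 1)
      (Pi.single (Sum.inl ⟨k + 1, by omega⟩) 1)).det) * k24

end pluecker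

/-! ### Averages as functions of the endpoint -/

section analytic

/-- `v` is the image of `u` under `(1 - x²) d/dx` on the open interval `(-1, 1)`. -/
def HD (u v : ℝ → ℝ) : Prop :=
  ∀ x ∈ Set.Ioo (-1 : ℝ) 1, HasDerivAt u (v x / (1 - x ^ 2)) x

lemma one_sub_sq_pos {x : ℝ} (hx : x ∈ Set.Ioo (-1 : ℝ) 1) : 0 < 1 - x ^ 2 := by
  nlinarith [hx.1, hx.2]

namespace HD
variable {u v u' v' : ℝ → ℝ}

lemma congr (h : HD u v) (e : ∀ x ∈ Set.Ioo (-1 : ℝ) 1, v x = v' x) : HD u v' :=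
  fun x hx => by rw [← e x hx]; exact h x hx

lemma unique (h : HD u v) (h' : HD u' v') (e : ∀ x ∈ Set.Ioo (-1 : ℝ) 1, u x = u' x) :
    ∀ x ∈ Set.Ioo (-1 : ℝ) 1, v x = v' x := by
  intro x hx
  have h1 : HasDerivAt u (v' x / (1 - x ^ 2)) x :=
    (h' x hx).congr_of_eventuallyEq (Filter.eventuallyEq_of_mem (isOpen_Ioo.mem_nhds hx) e)
  have := (h x hx).unique h1
  have hp := (one_sub_sq_pos hx).ne'
  field_simp at this
  exact this

lemma add (h : HD u v) (h' : HD u' v') : HD (fun x => u x + u' x) (fun x => v x + v' x) :=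
  fun x hx => ((h x hx).add (h' x hx)).congr_deriv (by ring)

lemma sub (h : HD u v) (h' : HD u' v') : HD (fun x => u x - u' x) (fun x => v x - v' x) :=
  fun x hx => ((h x hx).sub (h' x hx)).congr_deriv (by ring)

lemma mul (h : HD u v) (h' : HD u' v') :
    HD (fun x => u x * u' x) (fun x => v x * u' x + u x * v' x) :=
  fun x hx => ((h x hx).mul (h' x hx)).congr_deriv (by ring)

lemma div (h : HD u v) (h' : HD u' v') (h0 : ∀ x ∈ Set.Ioo (-1 : ℝ) 1, u' x ≠ 0) :
    HD (fun x => u x / u' x) (fun x => v x / u' x - u x / u' x * (v' x / u' x)) :=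
  fun x hx => ((h x hx).div (h' x hx) (h0 x hx)).congr_deriv (by
    have := h0 x hx
    have := (one_sub_sq_pos hx).ne'
    field_simp)

lemma const_mul (c : ℝ) (h : HD u v) : HD (fun x => c * u x) (fun x => c * v x) :=
  fun x hx => ((h x hx).const_mul c).congr_deriv (by ring)

lemma x_mul (h : HD u v) : HD (fun x => x * u x) (fun x => (1 - x ^ 2) * u x + x * v x) :=
  fun x hx => ((hasDerivAt_id x).mul (h x hx)).congr_deriv (by
    have := (one_sub_sq_pos hx).ne'
    simp only [id]
    field_simp)

lemma y_mul (h : HD u v) :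
    HD (fun x => (1 - x ^ 2) * u x) (fun x => -2 * x * (1 - x ^ 2) * u x + (1 - x ^ 2) * v x) :=
  fun x hx => ((((hasDerivAt_id x).pow 2).const_sub 1).mul (h x hx)).congr_deriv (by
    have := (one_sub_sq_pos hx).ne'
    simp only [Pi.pow_apply, id]
    field_simp
    ring)

lemma deriv_eq (h : HD u v) {x : ℝ} (hx : x ∈ Set.Ioo (-1 : ℝ) 1) :
    deriv u x = v x / (1 - x ^ 2) := (h x hx).deriv

end HD

/-- The first three derivatives of `f` in terms of its iterated images under `(1 - x²) d/dx`. -/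
lemma derivatives_of_HD {f u0 u1 u2 u3 : ℝ → ℝ} (h0 : HD u0 u1) (h1 : HD u1 u2) (h2 : HD u2 u3)
    (hf : ∀ x ∈ Set.Ioo (-1 : ℝ) 1, f x = u0 x) {x : ℝ} (hx : x ∈ Set.Ioo (-1 : ℝ) 1) :
    deriv f x = u1 x / (1 - x ^ 2) ∧
    iteratedDeriv 2 f x = (u2 x + 2 * x * u1 x) / (1 - x ^ 2) ^ 2 ∧
    iteratedDeriv 3 f x = (u3 x + 2 * (1 - x ^ 2) * u1 x + 2 * x * u2 x) / (1 - x ^ 2) ^ 3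
      + 4 * x * (u2 x + 2 * x * u1 x) / (1 - x ^ 2) ^ 3 := by
  have hy : ∀ x : ℝ, HasDerivAt (fun x : ℝ => 1 - x ^ 2) (-2 * x) x := fun x => by
    simpa using ((hasDerivAt_id x).pow 2).const_sub 1
  have d1 : ∀ x ∈ Set.Ioo (-1 : ℝ) 1, HasDerivAt f (u1 x / (1 - x ^ 2)) x := fun x hx =>
    (h0 x hx).congr_of_eventuallyEq (Filter.eventuallyEq_of_mem (isOpen_Ioo.mem_nhds hx) hf)
  have d2 : ∀ x ∈ Set.Ioo (-1 : ℝ) 1,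
      HasDerivAt (deriv f) ((u2 x + 2 * x * u1 x) / (1 - x ^ 2) ^ 2) x := fun x hx => by
    have hp := (one_sub_sq_pos hx).ne'
    refine (((h1 x hx).div (hy x) hp).congr_deriv ?_).congr_of_eventuallyEq
      (Filter.eventuallyEq_of_mem (isOpen_Ioo.mem_nhds hx) fun z hz => (d1 z hz).deriv)
    field_simp
    ring
  have d3 : ∀ x ∈ Set.Ioo (-1 : ℝ) 1, HasDerivAt (iteratedDeriv 2 f)
      ((u3 x + 2 * (1 - x ^ 2) * u1 x + 2 * x * u2 x) / (1 - x ^ 2) ^ 3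
      + 4 * x * (u2 x + 2 * x * u1 x) / (1 - x ^ 2) ^ 3) x := fun x hx => by
    have hp := (one_sub_sq_pos hx).ne'
    refine ((((h2 x hx).add (((hasDerivAt_id x).const_mul 2).mul (h1 x hx))).div
      ((hy x).pow 2) (pow_ne_zero 2 hp)).congr_deriv ?_).congr_of_eventuallyEq
      (Filter.eventuallyEq_of_mem (isOpen_Ioo.mem_nhds hx) fun z hz => ?_)
    · simp
      field_simp
      ring
    · rw [iteratedDeriv_succ, iteratedDeriv_one]
      simpa using (d2 z hz).deriv
  refine ⟨(d1 x hx).deriv, ?_, ?_⟩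
  · rw [iteratedDeriv_succ, iteratedDeriv_one]
    exact (d2 x hx).deriv
  · rw [iteratedDeriv_succ]
    exact (d3 x hx).deriv

/-- The unnormalised average of `P` over the ensemble with endpoint `x`. -/
noncomputable def av (n : ℕ) (m : ℕ → ℝ → ℝ) (P : MvPolynomial (Fin n) ℝ) (x : ℝ) : ℝ :=
  ell (fun k => m k x) (P * vd n ^ 2)

/-- The operator on polynomials through which `(1 - x²) d/dx` acts on averages. -/
noncomputable def Lop (n : ℕ) (β γ : ℝ) (P : MvPolynomial (Fin n) ℝ) : MvPolynomial (Fin n) ℝ :=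
  der n 0 P + (C (β * n) - C (2 * n + γ) * ps n 1) * P

/-- The functions `m k` behave like the moments `∫_{-1}^x z ^ k w(z) dz` of a weight with
`(1 - z²) w' / w = β - γ z` that satisfies the boundary condition at `-1`: their derivatives are
`x ^ k w(x)`, and integration by parts gives the three-term relation. -/
structure Moments (m : ℕ → ℝ → ℝ) (β γ : ℝ) : Prop where
  exists_weight : ∃ w : ℝ → ℝ, ∀ x ∈ Set.Ioo (-1 : ℝ) 1,
    (∀ k, HasDerivAt (m k) (x ^ k * w x) x) ∧
    ∀ k : ℕ, (1 - x ^ 2) * (x ^ k * w x) =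
      k * m (k - 1) x + β * m k x - (k + 2 + γ) * m (k + 1) x

variable {n : ℕ} {m : ℕ → ℝ → ℝ} {β γ : ℝ}

/-- Averages are differentiable, `Lop` computes their images under `(1 - x²) d/dx`, and multiplying
those images by `x` or `x²` gives averages again. -/
lemma Moments.loops (hm : Moments m β γ) (P : MvPolynomial (Fin n) ℝ) :
    HD (av n m P) (av n m (Lop n β γ P)) ∧ ∀ x ∈ Set.Ioo (-1 : ℝ) 1,
    (x * av n m (Lop n β γ P) x = av n m (der n 1 P + (C ((n : ℝ) ^ 2) + C β * ps n 1
      - C (2 * n + γ) * ps n 2 - ps n 1 * ps n 1) * P) x) ∧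
    (x ^ 2 * av n m (Lop n β γ P) x = av n m (der n 2 P + (C (2 * (n : ℝ)) * ps n 1
      + C β * ps n 2 - C (2 * n + γ) * ps n 3 - 2 * (ps n 1 * ps n 2)) * P) x) := by
  obtain ⟨w, hw⟩ := hm.exists_weight
  have hd : ∀ x : ℝ, ∀ k j : ℕ, x ^ j * (x ^ k * w x) = x ^ (k + j) * w x := by intros; ring
  have l0 : ∀ x ∈ Set.Ioo (-1 : ℝ) 1, _ = av n m (Lop n β γ P) x := fun x hx =>
    loop0 (m := fun k => m k x) (d := fun k => x ^ k * w x) (hd x) (hw x hx).2 P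
  refine ⟨fun x hx => ?_, fun x hx => ⟨?_, ?_⟩⟩
  · have h := hasDerivAt_ell (m := m) (d := fun k x => x ^ k * w x) (x := x)
      (fun k => (hw x hx).1 k) (P * vd n ^ 2)
    refine h.congr_deriv ?_
    rw [← l0 x hx, mul_div_cancel_left₀ _ (one_sub_sq_pos hx).ne']
  · rw [← l0 x hx]
    exact loop1 (m := fun k => m k x) (d := fun k => x ^ k * w x) (hd x) (hw x hx).2 P
  · rw [← l0 x hx]
    exact loop2 (m := fun k => m k x) (d := fun k => x ^ k * w x) (hd x) (hw x hx).2 P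

/-- Averages are smooth, because up to the factor `1 - x²` the derivative of an average is an
average. -/
lemma Moments.contDiffOn (hm : Moments m β γ) (P : MvPolynomial (Fin n) ℝ) :
    ContDiffOn ℝ (⊤ : ℕ∞) (av n m P) (Set.Ioo (-1) 1) := by
  rw [contDiffOn_infty]
  intro k
  induction k generalizing P with
  | zero =>
    simp only [Nat.cast_zero, contDiffOn_zero]
    exact fun x hx => ((hm.loops P).1 x hx).continuousAt.continuousWithinAt
  | succ k ih =>
    push_cast
    rw [contDiffOn_succ_iff_deriv_of_isOpen isOpen_Ioo]
    refine ⟨fun x hx => ((hm.loops P).1 x hx).differentiableAt.differentiableWithinAt, by simp, ?_⟩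
    refine ContDiffOn.congr (f := fun x => av n m (Lop n β γ P) x / (1 - x ^ 2)) ?_
      fun x hx => (hm.loops P).1.deriv_eq hx
    exact (ih _).div (by fun_prop) fun x hx => (one_sub_sq_pos hx).ne'

end analytic

/-! ### Explicit loop equations in low degree -/

section relations

variable {n : ℕ} {m : ℕ → ℝ → ℝ} {β γ : ℝ}

lemma av_add (P Q : MvPolynomial (Fin n) ℝ) (x : ℝ) :
    av n m (P + Q) x = av n m P x + av n m Q x := by simp [av, add_mul]

lemma av_sub (P Q : MvPolynomial (Fin n) ℝ) (x : ℝ) :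
    av n m (P - Q) x = av n m P x - av n m Q x := by simp [av, sub_mul]

lemma av_C_mul (c : ℝ) (P : MvPolynomial (Fin n) ℝ) (x : ℝ) :
    av n m (C c * P) x = c * av n m P x := by
  rw [av, ← smul_eq_C_mul, smul_mul_assoc, map_smul, smul_eq_mul, av]

/-- Linear relations between the averages of products of power sums at a point `x`. Here `g`,
`P`, `p2`, …, `p1111` are the averages of `1`, `p₁`, `p₂`, …, `p₁⁴`, and `F1`, `DP`, … are the
images of the averages of `1`, `p₁`, … under `(1 - x²) d/dx`. The letter in a field name is the
polynomial to which the loop equation is applied, the digit is the exponent of its left factor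
`x ^ j`; `N = 2n + γ`. -/
structure Relations (x n N β g P p2 p3 p4 p11 p12 p13 p22 p111 p112 p1111
    F1 DP Dp2 Dp3 Dp11 Dp12 : ℝ) : Prop where
  a0 : F1 = β * n * g - N * P
  a1 : x * F1 = n ^ 2 * g + β * P - N * p2 - p11
  b0 : DP = n * g - p2 + β * n * P - N * p11
  b1 : x * DP = P - p3 + n ^ 2 * P + β * p11 - N * p12 - p111
  b2 : x ^ 2 * DP = p2 - p4 + 2 * n * p11 + β * p12 - N * p13 - 2 * p112
  c0 : Dp2 = 2 * (P - p3) + β * n * p2 - N * p12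
  c1 : x * Dp2 = 2 * (p2 - p4) + n ^ 2 * p2 + β * p12 - N * p22 - p112
  d0 : Dp11 = 2 * (n * P - p12) + β * n * p11 - N * p111
  d1 : x * Dp11 = 2 * (p11 - p13) + n ^ 2 * p11 + β * p111 - N * p112 - p1111
  e0 : Dp3 = 3 * (p2 - p4) + β * n * p3 - N * p13
  f0 : Dp12 = n * p2 - p22 + 2 * (p11 - p13) + β * n * p12 - N * p112

lemma Moments.relations (hm : Moments m β γ) {x : ℝ} (hx : x ∈ Set.Ioo (-1 : ℝ) 1) :
    let A := fun P => av n m P x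
    let D := fun P => A (Lop n β γ P)
    let p := ps n
    Relations x n (2 * n + γ) β (A 1) (A (p 1)) (A (p 2)) (A (p 3)) (A (p 4)) (A (p 1 * p 1))
      (A (p 1 * p 2)) (A (p 1 * p 3)) (A (p 2 * p 2)) (A (p 1 * p 1 * p 1)) (A (p 1 * p 1 * p 2))
      (A (p 1 * p 1 * p 1 * p 1)) (D 1) (D (p 1)) (D (p 2)) (D (p 3)) (D (p 1 * p 1))
      (D (p 1 * p 2)) := by
  intro A D p
  have l0 : ∀ P, Lop n β γ P = der n 0 P + (C (β * n) - C (2 * n + γ) * ps n 1) * P := fun P => rfl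
  have l1 := fun P => ((hm.loops (n := n) P).2 x hx).1
  have l2 := fun P => ((hm.loops (n := n) P).2 x hx).2
  have h2 : (C 2 : MvPolynomial (Fin n) ℝ) = 2 := map_ofNat C 2
  have h3 : (C 3 : MvPolynomial (Fin n) ℝ) = 3 := map_ofNat C 3
  constructor <;> simp only [D, A, p]
  · rw [l0, show der n 0 1 + (C (β * n) - C (2 * n + γ) * ps n 1) * 1
      = C (β * n) * 1 - C (2 * n + γ) * ps n 1 by simp]
    simp only [av_sub, av_C_mul]
  · rw [l1, show der n 1 1 + (C ((n : ℝ) ^ 2) + C β * ps n 1 - C (2 * n + γ) * ps n 2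
        - ps n 1 * ps n 1) * 1 = C ((n : ℝ) ^ 2) * 1 + C β * ps n 1 - C (2 * n + γ) * ps n 2
        - ps n 1 * ps n 1 by simp]
    simp only [av_sub, av_add, av_C_mul]
  · rw [l0, der_ps, show C (((1 : ℕ)) : ℝ) * (ps n (1 - 1 + 0) - ps n (1 + 1 + 0)) +
      (C (β * n) - C (2 * n + γ) * ps n 1) * ps n 1 = C (n : ℝ) * 1 - ps n 2
        + C (β * n) * ps n 1 - C (2 * n + γ) * (ps n 1 * ps n 1) by simp [ps_zero]; ring]
    simp only [av_sub, av_add, av_C_mul]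
  · rw [l1, der_ps, show C (((1 : ℕ)) : ℝ) * (ps n (1 - 1 + 1) - ps n (1 + 1 + 1)) +
      (C ((n : ℝ) ^ 2) + C β * ps n 1 - C (2 * n + γ) * ps n 2 - ps n 1 * ps n 1) * ps n 1
      = ps n 1 - ps n 3 + C ((n : ℝ) ^ 2) * ps n 1 + C β * (ps n 1 * ps n 1)
      - C (2 * n + γ) * (ps n 1 * ps n 2) - ps n 1 * ps n 1 * ps n 1 by simp; ring]
    simp only [av_sub, av_add, av_C_mul]
  · rw [l2, der_ps, show C (((1 : ℕ)) : ℝ) * (ps n (1 - 1 + 2) - ps n (1 + 1 + 2)) +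
      (C (2 * (n : ℝ)) * ps n 1 + C β * ps n 2 - C (2 * n + γ) * ps n 3 - 2 * (ps n 1 * ps n 2))
        * ps n 1
      = ps n 2 - ps n 4 + C (2 * (n : ℝ)) * (ps n 1 * ps n 1) + C β * (ps n 1 * ps n 2)
      - C (2 * n + γ) * (ps n 1 * ps n 3) - C 2 * (ps n 1 * ps n 1 * ps n 2) by
        simp [h2]; ring]
    simp only [av_sub, av_add, av_C_mul]
  · rw [l0, der_ps, show C (((2 : ℕ)) : ℝ) * (ps n (2 - 1 + 0) - ps n (2 + 1 + 0)) +
      (C (β * n) - C (2 * n + γ) * ps n 1) * ps n 2 = C 2 * (ps n 1 - ps n 3)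
        + C (β * n) * ps n 2 - C (2 * n + γ) * (ps n 1 * ps n 2) by
        simp [h2]; ring]
    simp only [av_sub, av_add, av_C_mul]
  · rw [l1, der_ps, show C (((2 : ℕ)) : ℝ) * (ps n (2 - 1 + 1) - ps n (2 + 1 + 1)) +
      (C ((n : ℝ) ^ 2) + C β * ps n 1 - C (2 * n + γ) * ps n 2 - ps n 1 * ps n 1) * ps n 2
      = C 2 * (ps n 2 - ps n 4) + C ((n : ℝ) ^ 2) * ps n 2 + C β * (ps n 1 * ps n 2)
      - C (2 * n + γ) * (ps n 2 * ps n 2) - ps n 1 * ps n 1 * ps n 2 by simp [h2]; ring]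
    simp only [av_sub, av_add, av_C_mul]
  · rw [l0, Derivation.leibniz, der_ps, smul_eq_mul,
      show ps n 1 * (C (((1 : ℕ)) : ℝ) * (ps n (1 - 1 + 0) - ps n (1 + 1 + 0))) +
        ps n 1 * (C (((1 : ℕ)) : ℝ) * (ps n (1 - 1 + 0) - ps n (1 + 1 + 0))) +
      (C (β * n) - C (2 * n + γ) * ps n 1) * (ps n 1 * ps n 1)
        = C 2 * (C (n : ℝ) * ps n 1 - ps n 1 * ps n 2)
        + C (β * n) * (ps n 1 * ps n 1) - C (2 * n + γ) * (ps n 1 * ps n 1 * ps n 1) by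
        simp [ps_zero, h2]; ring]
    simp only [av_sub, av_add, av_C_mul]
  · rw [l1, Derivation.leibniz, der_ps, smul_eq_mul,
      show ps n 1 * (C (((1 : ℕ)) : ℝ) * (ps n (1 - 1 + 1) - ps n (1 + 1 + 1))) +
        ps n 1 * (C (((1 : ℕ)) : ℝ) * (ps n (1 - 1 + 1) - ps n (1 + 1 + 1))) +
      (C ((n : ℝ) ^ 2) + C β * ps n 1 - C (2 * n + γ) * ps n 2 - ps n 1 * ps n 1)
        * (ps n 1 * ps n 1)
      = C 2 * (ps n 1 * ps n 1 - ps n 1 * ps n 3) + C ((n : ℝ) ^ 2) * (ps n 1 * ps n 1)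
      + C β * (ps n 1 * ps n 1 * ps n 1) - C (2 * n + γ) * (ps n 1 * ps n 1 * ps n 2)
      - ps n 1 * ps n 1 * ps n 1 * ps n 1 by simp [h2]; ring]
    simp only [av_sub, av_add, av_C_mul]
  · rw [l0, der_ps, show C (((3 : ℕ)) : ℝ) * (ps n (3 - 1 + 0) - ps n (3 + 1 + 0)) +
      (C (β * n) - C (2 * n + γ) * ps n 1) * ps n 3 = C 3 * (ps n 2 - ps n 4)
        + C (β * n) * ps n 3 - C (2 * n + γ) * (ps n 1 * ps n 3) by simp [h3]; ring]
    simp only [av_sub, av_add, av_C_mul]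
  · rw [l0, Derivation.leibniz, der_ps, der_ps, smul_eq_mul, smul_eq_mul,
      show ps n 1 * (C (((2 : ℕ)) : ℝ) * (ps n (2 - 1 + 0) - ps n (2 + 1 + 0))) +
        ps n 2 * (C (((1 : ℕ)) : ℝ) * (ps n (1 - 1 + 0) - ps n (1 + 1 + 0))) +
      (C (β * n) - C (2 * n + γ) * ps n 1) * (ps n 1 * ps n 2)
        = C (n : ℝ) * ps n 2 - ps n 2 * ps n 2 + C 2 * (ps n 1 * ps n 1 - ps n 1 * ps n 3)
        + C (β * n) * (ps n 1 * ps n 2) - C (2 * n + γ) * (ps n 1 * ps n 1 * ps n 2) by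
        simp [ps_zero, h2]; ring]
    simp only [av_sub, av_add, av_C_mul]

end relations

/-! ### The differential equation -/

section ode
/-- Elimination at a point, for `N > 1`. Here `f1`, `f2`, `f3` are the images of `f` under the
iterates of `(1 - x²) d/dx`, and a name such as `D2P` stands for the second image of `P`. The
relations `r1`, `r2`, `r3` and their derivatives are solved for the averages of `p₁`, `p₂`, `p₁²`;
`S21` and `S22` are the averages of `p₁³ - p₃` and `p₁⁴ + 3p₂² - 4p₁p₃`. Substitution in the
Plücker relation `hpl` gives the equation. -/
lemma painleve_algebra (x n N β g f f1 f2 f3 P DP D2P D3P p2 Dp2 D2p2 p11 Dp11 D2p11 S21 S22 : ℝ)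
    (hN : 1 < N)
    (r1 : f * g = β * n * g - N * P)
    (r1' : (f1 + f ^ 2) * g = β * n * (f * g) - N * DP)
    (r1'' : (f2 + 3 * f * f1 + f ^ 3) * g = β * n * ((f1 + f ^ 2) * g) - N * D2P)
    (r1''' : (f3 + 4 * f * f2 + 3 * f1 ^ 2 + 6 * f ^ 2 * f1 + f ^ 4) * g
      = β * n * ((f2 + 3 * f * f1 + f ^ 3) * g) - N * D3P)
    (r2 : x * (f * g) = n ^ 2 * g + β * P - N * p2 - p11)
    (r2' : (1 - x ^ 2) * (f * g) + x * ((f1 + f ^ 2) * g)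
      = n ^ 2 * (f * g) + β * DP - N * Dp2 - Dp11)
    (r2'' : -2 * x * (1 - x ^ 2) * (f * g) + 2 * (1 - x ^ 2) * ((f1 + f ^ 2) * g)
      + x * ((f2 + 3 * f * f1 + f ^ 3) * g)
      = n ^ 2 * ((f1 + f ^ 2) * g) + β * D2P - N * D2p2 - D2p11)
    (r3 : DP = n * g + β * n * P - p2 - N * p11)
    (r3' : D2P = n * (f * g) + β * n * DP - Dp2 - N * Dp11)
    (r3'' : D3P = n * ((f1 + f ^ 2) * g) + β * n * D2P - D2p2 - N * D2p11)
    (r4 : S21 = (n ^ 2 - 1) * P + β * (p11 - n * p2) - x * DP + Dp2)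
    (r5 : N * S22 = -(-2 * x ^ 2 * DP + 4 * x * Dp2 + N * x * Dp11
        - (2 * DP + β * n * Dp2 - D2p2))
      - 2 * (p2 + 2 * n * p11) + 4 * (2 + n ^ 2) * p2 + N * (2 + n ^ 2) * p11 - 6 * p2
      - N * (n * p2 + 2 * p11)
      + β * ((2 * n * P + β * n * p11 - Dp11) - n * (2 * P + β * n * p2 - Dp2)))
    (hpl : g * S22 - 4 * (P * S21) + 3 * ((p11 + p2) * (p11 - p2)) = 0)
    (hg : g ≠ 0) (a b q r s : ℝ) (ha : a = (N - 2 * n - β) / 2) (hb : b = (N - 2 * n + β) / 2)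
    (hq : q = N ^ 2) (hr : r = a ^ 2 + b ^ 2) (hs : s = a ^ 2 - b ^ 2) :
    f3 + 2 * (1 - x ^ 2) * f1 + 4 * x * f2 + 4 * x ^ 2 * f1 + 6 * f1 ^ 2
      + (8 * x * f + q * (1 - x ^ 2) - 2 * s * x - 2 * r) * f1
      - (1 - x ^ 2) * f * (2 * f - q * x - s) = 0 := by
  have hN0 : N ≠ 0 := by positivity
  have hN1 : N ^ 2 - 1 ≠ 0 := by nlinarith
  have eP : P = (β * n * g - f * g) / N := by rw [eq_div_iff hN0]; linear_combination r1
  have eDP : DP = (β * n * (f * g) - (f1 + f ^ 2) * g) / N := by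
    rw [eq_div_iff hN0]; linear_combination r1'
  have eD2P : D2P = (β * n * ((f1 + f ^ 2) * g) - (f2 + 3 * f * f1 + f ^ 3) * g) / N := by
    rw [eq_div_iff hN0]; linear_combination r1''
  have eD3P : D3P = (β * n * ((f2 + 3 * f * f1 + f ^ 3) * g)
      - (f3 + 4 * f * f2 + 3 * f1 ^ 2 + 6 * f ^ 2 * f1 + f ^ 4) * g) / N := by
    rw [eq_div_iff hN0]; linear_combination r1'''
  have es : s = -(N - 2 * n) * β := by rw [hs, ha, hb]; ring
  have er : r = ((N - 2 * n) ^ 2 + β ^ 2) / 2 := by rw [hr, ha, hb]; ring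
  have ep2 : p2 = (N * (n ^ 2 * g + β * P - x * (f * g)) - (n * g + β * n * P - DP)) / (N ^ 2 - 1) := by
    rw [eq_div_iff hN1]; linear_combination N * r2 - r3
  have ep11 : p11 = (N * (n * g + β * n * P - DP) - (n ^ 2 * g + β * P - x * (f * g))) / (N ^ 2 - 1) := by
    rw [eq_div_iff hN1]; linear_combination N * r3 - r2
  have eDp2 : Dp2 = (N * (n ^ 2 * (f * g) + β * DP
      - ((1 - x ^ 2) * (f * g) + x * ((f1 + f ^ 2) * g)))
      - (n * (f * g) + β * n * DP - D2P)) / (N ^ 2 - 1) := by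
    rw [eq_div_iff hN1]; linear_combination N * r2' - r3'
  have eDp11 : Dp11 = (N * (n * (f * g) + β * n * DP - D2P) - (n ^ 2 * (f * g) + β * DP
      - ((1 - x ^ 2) * (f * g) + x * ((f1 + f ^ 2) * g)))) / (N ^ 2 - 1) := by
    rw [eq_div_iff hN1]; linear_combination N * r3' - r2'
  have eD2p2 : D2p2 = (N * (n ^ 2 * ((f1 + f ^ 2) * g) + β * D2P
      - (-2 * x * (1 - x ^ 2) * (f * g) + 2 * (1 - x ^ 2) * ((f1 + f ^ 2) * g)
      + x * ((f2 + 3 * f * f1 + f ^ 3) * g)))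
      - (n * ((f1 + f ^ 2) * g) + β * n * D2P - D3P)) / (N ^ 2 - 1) := by
    rw [eq_div_iff hN1]; linear_combination N * r2'' - r3''
  have e22 : S22 = (N * S22) / N := by field_simp
  rw [r5] at e22
  rw [e22, r4, eD2p2, eDp11, eDp2, ep11, ep2, eD3P, eD2P, eDP, eP] at hpl
  subst hq
  rw [es, er]
  clear r1 r1' r1'' r1''' r2 r2' r2'' r3 r3' r3'' r4 r5 eP eDP eD2P eD3P ep2 ep11 eDp2 eDp11
    eD2p2 e22 hr hs ha hb
  -- the quadratic relation is now rational in `f` and its derivatives; clearing denominators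
  -- leaves `N² - 1` times the equation, up to a nonzero factor
  field_simp at hpl
  rw [mul_zero] at hpl
  have hpl2 := (mul_eq_zero.1 hpl).resolve_left (by positivity)
  refine mul_left_cancel₀ hN1 ?_
  linear_combination hpl2

/-- For `n = 1`, `f` satisfies the Riccati equation `f1 = (β - N x) f - f²`, which implies the
third-order equation. -/
lemma riccati_algebra (x n N β g f f1 f2 f3 : ℝ) (hn : n = 1) (hg : g ≠ 0)
    (h2 : (f1 + f ^ 2) * g = β * (f * g) - N * (x * (f * g)))
    (h3 : (f2 + 3 * f * f1 + f ^ 3) * g = β * ((f1 + f ^ 2) * g)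
      - N * ((1 - x ^ 2) * (f * g) + x * ((f1 + f ^ 2) * g)))
    (h4 : (f3 + 4 * f * f2 + 3 * f1 ^ 2 + 6 * f ^ 2 * f1 + f ^ 4) * g
      = β * ((f2 + 3 * f * f1 + f ^ 3) * g) - N * (-2 * x * (1 - x ^ 2) * (f * g)
        + 2 * (1 - x ^ 2) * ((f1 + f ^ 2) * g) + x * ((f2 + 3 * f * f1 + f ^ 3) * g)))
    (a b q r s : ℝ) (ha : a = (N - 2 * n - β) / 2) (hb : b = (N - 2 * n + β) / 2)
    (hq : q = N ^ 2) (hr : r = a ^ 2 + b ^ 2) (hs : s = a ^ 2 - b ^ 2) :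
    f3 + 2 * (1 - x ^ 2) * f1 + 4 * x * f2 + 4 * x ^ 2 * f1 + 6 * f1 ^ 2
      + (8 * x * f + q * (1 - x ^ 2) - 2 * s * x - 2 * r) * f1
      - (1 - x ^ 2) * f * (2 * f - q * x - s) = 0 := by
  have e1 : f1 = (β - N * x) * f - f ^ 2 := by
    refine mul_right_cancel₀ hg ?_
    linear_combination h2
  have e2 : f2 = (β - N * x) * (f1 + f ^ 2) - N * (1 - x ^ 2) * f - 3 * f * f1 - f ^ 3 := by
    refine mul_right_cancel₀ hg ?_
    linear_combination h3
  have e3 : f3 = β * (f2 + 3 * f * f1 + f ^ 3) - N * (-2 * x * (1 - x ^ 2) * f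
        + 2 * (1 - x ^ 2) * (f1 + f ^ 2) + x * (f2 + 3 * f * f1 + f ^ 3))
        - (4 * f * f2 + 3 * f1 ^ 2 + 6 * f ^ 2 * f1 + f ^ 4) := by
    refine mul_right_cancel₀ hg ?_
    linear_combination h4
  subst hq hr hs ha hb hn
  rw [e3, e2, e1]
  ring

/-- The differential equation for any family of moments with the Jacobi recurrence. -/
theorem painleve_of_moments {n : ℕ} {m : ℕ → ℝ → ℝ} (hn : 1 ≤ n) {a b : ℝ} (ha : -1 < a)
    (hb : -1 < b) (hm : Moments m (b - a) (a + b)) {G : ℝ → ℝ}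
    (hG : ∀ x ∈ Set.Ioo (-1 : ℝ) 1, G x = av n m 1 x)
    (hpos : ∀ x ∈ Set.Ioo (-1 : ℝ) 1, 0 < G x) {f : ℝ → ℝ}
    (hf : ∀ x, f x = (1 - x ^ 2) * deriv G x / G x)
    {q r s : ℝ} (hq : q = (2 * (n : ℝ) + a + b) ^ 2) (hr : r = a ^ 2 + b ^ 2)
    (hs : s = a ^ 2 - b ^ 2) {x : ℝ} (hx : x ∈ Set.Ioo (-1 : ℝ) 1) :
    (x ^ 2 - 1) ^ 2 * iteratedDeriv 3 f x
        + 2 * (x ^ 2 - 1) * (x * iteratedDeriv 2 f x - 3 * (deriv f x) ^ 2)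
        + (8 * x * f x - q * (x ^ 2 - 1) - 2 * s * x - 2 * r) * deriv f x
        - f x * (2 * f x - q * x - s) = 0 := by
  set β := b - a with hβ
  set γ := a + b with hγ
  have hD : ∀ P, HD (av n m P) (av n m (Lop n β γ P)) := fun P => (hm.loops P).1
  have hg0 : ∀ x ∈ Set.Ioo (-1 : ℝ) 1, av n m 1 x ≠ 0 := fun x hx => by
    rw [← hG x hx]; exact ne_of_gt (hpos x hx)
  -- the successive images of `G` under `(1 - x²) d/dx`
  obtain ⟨g, hgd⟩ : ∃ g, g = av n m 1 := ⟨_, rfl⟩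
  obtain ⟨F1, hF1⟩ : ∃ F, F = av n m (Lop n β γ 1) := ⟨_, rfl⟩
  obtain ⟨F2, hF2⟩ : ∃ F, F = av n m (Lop n β γ (Lop n β γ 1)) := ⟨_, rfl⟩
  obtain ⟨F3, hF3⟩ : ∃ F, F = av n m (Lop n β γ (Lop n β γ (Lop n β γ 1))) := ⟨_, rfl⟩
  obtain ⟨F4, hF4⟩ : ∃ F, F = av n m (Lop n β γ (Lop n β γ (Lop n β γ (Lop n β γ 1)))) := ⟨_, rfl⟩
  have d0 : HD g F1 := by rw [hgd, hF1]; exact hD _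
  have d1 : HD F1 F2 := by rw [hF1, hF2]; exact hD _
  have d2 : HD F2 F3 := by rw [hF2, hF3]; exact hD _
  have d3 : HD F3 F4 := by rw [hF3, hF4]; exact hD _
  rw [← hgd] at hg0 hG
  -- the successive images of `F1 / g`, which is `f` on the interval
  obtain ⟨u0, hu0⟩ : ∃ u : ℝ → ℝ, u = fun x => F1 x / g x := ⟨_, rfl⟩
  obtain ⟨u1, hu1⟩ : ∃ u : ℝ → ℝ, u = fun x => F2 x / g x - u0 x * u0 x := ⟨_, rfl⟩
  obtain ⟨u2, hu2⟩ : ∃ u : ℝ → ℝ, u = fun x => F3 x / g x - (3 * u0 x * u1 x + u0 x ^ 3) :=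
    ⟨_, rfl⟩
  obtain ⟨u3, hu3⟩ : ∃ u : ℝ → ℝ, u = fun x => F4 x / g x -
    (4 * u0 x * u2 x + 3 * u1 x ^ 2 + 6 * u0 x ^ 2 * u1 x + u0 x ^ 4) := ⟨_, rfl⟩
  have k0 : HD u0 u1 := by
    rw [hu0]
    refine (d1.div d0 hg0).congr fun x _ => ?_
    simp only [hu1, hu0]
  have k1 : HD u1 u2 := by
    rw [hu1]
    refine ((d2.div d0 hg0).sub (k0.mul k0)).congr fun x _ => ?_
    simp only [hu2, hu1, hu0]
    ring
  have k2 : HD u2 u3 := by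
    have h := (d3.div d0 hg0).sub (((k0.mul k1).const_mul 3).add (k0.mul (k0.mul k0)))
    have e : u2 = fun x => F3 x / g x - (3 * (u0 x * u1 x) + u0 x * (u0 x * u0 x)) := by
      rw [hu2]; funext x; ring
    rw [e]
    refine h.congr fun x _ => ?_
    simp only [hu3, hu2, hu1, hu0]
    ring
  have hfu : ∀ x ∈ Set.Ioo (-1 : ℝ) 1, f x = u0 x := fun x hx => by
    have h1 : HasDerivAt G (F1 x / (1 - x ^ 2)) x :=
      (d0 x hx).congr_of_eventuallyEq (Filter.eventuallyEq_of_mem (isOpen_Ioo.mem_nhds hx) hG)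
    rw [hf, h1.deriv, hG x hx, mul_div_cancel₀ _ (one_sub_sq_pos hx).ne', hu0]
  obtain ⟨j1, j2, j3⟩ := derivatives_of_HD k0 k1 k2 hfu hx
  have hy := (one_sub_sq_pos hx).ne'
  have e1 : F1 x = u0 x * g x := by
    simp only [hu0]; have := hg0 x hx; field_simp
  have e2 : F2 x = (u1 x + u0 x ^ 2) * g x := by
    simp only [hu1]; have := hg0 x hx; field_simp; ring
  have e3 : F3 x = (u2 x + 3 * u0 x * u1 x + u0 x ^ 3) * g x := by
    simp only [hu2]; have := hg0 x hx; field_simp; ring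
  have e4 : F4 x = (u3 x + 4 * u0 x * u2 x + 3 * u1 x ^ 2 + 6 * u0 x ^ 2 * u1 x + u0 x ^ 4)
      * g x := by
    simp only [hu3]; have := hg0 x hx; field_simp; ring
  suffices hE : u3 x + 2 * (1 - x ^ 2) * u1 x + 4 * x * u2 x + 4 * x ^ 2 * u1 x + 6 * u1 x ^ 2
      + (8 * x * u0 x + q * (1 - x ^ 2) - 2 * s * x - 2 * r) * u1 x
      - (1 - x ^ 2) * u0 x * (2 * u0 x - q * x - s) = 0 by
    rw [j1, j2, j3, hfu x hx, show x ^ 2 - 1 = -(1 - x ^ 2) by ring]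
    field_simp
    linear_combination hE
  have R := fun (y : ℝ) (hy : y ∈ Set.Ioo (-1 : ℝ) 1) => hm.relations (n := n) hy
  simp only [← hgd, ← hF1] at R
  have dP := hD (ps n 1)
  have dDP := hD (Lop n β γ (ps n 1))
  have dD2P := hD (Lop n β γ (Lop n β γ (ps n 1)))
  have r1 : ∀ x ∈ Set.Ioo (-1 : ℝ) 1, _ := fun x hx => (R x hx).a0
  have r1' := d1.unique ((d0.const_mul (β * n)).sub (dP.const_mul (2 * n + γ))) r1
  have r1'' := d2.unique ((d1.const_mul (β * n)).sub (dDP.const_mul (2 * n + γ))) r1'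
  have r1''' := d3.unique ((d2.const_mul (β * n)).sub (dD2P.const_mul (2 * n + γ))) r1''
  have hag : a = ((2 * n + γ) - 2 * n - β) / 2 := by rw [hβ, hγ]; ring
  have hbg : b = ((2 * n + γ) - 2 * n + β) / 2 := by rw [hβ, hγ]; ring
  have hqg : q = (2 * n + γ) ^ 2 := by rw [hq, hγ]; ring
  rcases eq_or_lt_of_le hn with h1 | h2
  · have hn1 : (n : ℝ) = 1 := by rw [← h1]; norm_num
    have hp : ps n 1 * ps n 1 = ps n 2 := by
      subst h1
      simp [ps, pow_two]
    -- for `n = 1` the measure is one-dimensional, so `p₁² = p₂` and `G` itself satisfies a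
    -- linear second-order equation; this also covers `2n + a + b ≤ 1`
    have s2 : ∀ x ∈ Set.Ioo (-1 : ℝ) 1, F2 x = β * F1 x - (2 * n + γ) * (x * F1 x) := by
      intro x hx
      have a1 := (R x hx).a1
      have b0 := (R x hx).b0
      have := r1' x hx
      rw [hp] at a1 b0
      rw [hn1] at *
      linear_combination this + (2 * 1 + γ) * (a1 - b0)
    have s3 := d2.unique ((d1.const_mul β).sub ((d1.x_mul).const_mul (2 * n + γ))) s2
    have s4 := d3.unique ((d2.const_mul β).sub ((d1.y_mul.add d2.x_mul).const_mul (2 * n + γ))) s3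
    have t2 := s2 x hx
    have t3 := s3 x hx
    have t4 := s4 x hx
    rw [e1, e2] at t2
    rw [e1, e2, e3] at t3
    rw [e1, e2, e3, e4] at t4
    exact riccati_algebra x n (2 * n + γ) β (g x) (u0 x) (u1 x) (u2 x) (u3 x) hn1 (hg0 x hx)
      t2 t3 (by linear_combination t4) a b q r s hag hbg hqg hr hs
  · have hN : 1 < 2 * (n : ℝ) + γ := by
      have : (2 : ℝ) ≤ n := by exact_mod_cast h2
      rw [hγ]; linarith
    have dp2 := hD (ps n 2)
    have dDp2 := hD (Lop n β γ (ps n 2))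
    have dp11 := hD (ps n 1 * ps n 1)
    have dDp11 := hD (Lop n β γ (ps n 1 * ps n 1))
    have r2 : ∀ x ∈ Set.Ioo (-1 : ℝ) 1, _ := fun x hx => (R x hx).a1
    have r2' := d1.x_mul.unique ((((d0.const_mul _).add (dP.const_mul _)).sub
      (dp2.const_mul _)).sub dp11) r2
    have r2'' := (d1.y_mul.add d2.x_mul).unique ((((d1.const_mul _).add (dDP.const_mul _)).sub
      (dDp2.const_mul _)).sub dDp11) r2'
    have r3 : ∀ x ∈ Set.Ioo (-1 : ℝ) 1, _ := fun x hx => (R x hx).b0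
    have r3' := dDP.unique ((((d0.const_mul _).sub dp2).add (dP.const_mul _)).sub
      (dp11.const_mul _)) r3
    have r3'' := dD2P.unique ((((d1.const_mul _).sub dDp2).add (dDP.const_mul _)).sub
      (dDp11.const_mul _)) r3'
    have r4 : ∀ x ∈ Set.Ioo (-1 : ℝ) 1, (2 * n + γ) * av n m (ps n 1 * ps n 2) x
        + 2 * av n m (ps n 3) x = 2 * av n m (ps n 1) x + β * n * av n m (ps n 2) x
        - av n m (Lop n β γ (ps n 2)) x := by
      intro x hx
      linear_combination (R x hx).c0
    -- the derivative of the relation for `N p₁p₂ + 2p₃` supplies `N D[p₁p₂] + 2 D[p₃]`, which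
    -- is what the loop equations at `p₁p₂` and `p₃` compute
    have r4' := (((hD (ps n 1 * ps n 2)).const_mul _).add ((hD (ps n 3)).const_mul _)).unique
      (((dP.const_mul _).add (dp2.const_mul _)).sub dDp2) r4 x hx
    have pl := ell_pluecker hn (fun k => m k x)
    have h3 : (3 : MvPolynomial (Fin n) ℝ) = C 3 := (map_ofNat C 3).symm
    have h4 : (4 : MvPolynomial (Fin n) ℝ) = C 4 := (map_ofNat C 4).symm
    change av n m 1 x * av n m _ x - 4 * (av n m _ x * av n m _ x)
      + 3 * (av n m _ x * av n m _ x) = 0 at pl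
    simp only [h3, h4, av_add, av_sub, av_C_mul, pow_succ, pow_zero, one_mul, ← hgd] at pl
    have Rx := R x hx
    have t1 := r1 x hx
    have t1' := r1' x hx
    have t1'' := r1'' x hx
    have t1''' := r1''' x hx
    have t2 := r2 x hx
    have t2' := r2' x hx
    have t2'' := r2'' x hx
    have t3 := r3 x hx
    have t3' := r3' x hx
    have t3'' := r3'' x hx
    simp only [e1, e2, e3, e4] at t1 t1' t1'' t1''' t2 t2' t2'' t3 t3' t3''
    refine painleve_algebra x n (2 * n + γ) β (g x) (u0 x) (u1 x) (u2 x) (u3 x) _ _ _ _ _ _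
      (av n m (Lop n β γ (Lop n β γ (ps n 2))) x) _ _
      (av n m (Lop n β γ (Lop n β γ (ps n 1 * ps n 1))) x) _ _ hN t1 t1' t1'' t1''' t2 t2'
      (by linear_combination t2'')
      (by linear_combination t3) (by linear_combination t3') (by linear_combination t3'')
      ?_ ?_ pl (hg0 x hx) a b q r s hag hbg hqg hr hs
    · linear_combination Rx.b1 - Rx.c0
    -- the unknown averages `p₄`, `p₁p₃`, `p₁²p₂`, `p₂²` other than in the combination
    -- `p₁⁴ + 3p₂² - 4p₁p₃` cancel
    · linear_combination -2 * Rx.b2 + 4 * Rx.c1 + (2 * n + γ) * Rx.d1 - 2 * Rx.e0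
        - (2 * n + γ) * Rx.f0 + r4' + β * Rx.d0 - β * n * Rx.c0

end ode

/-! ### The Jacobi weight -/

section jacobi

/-- The Jacobi weight `(1 - z) ^ a (1 + z) ^ b`. -/
noncomputable def wt (a b z : ℝ) : ℝ := (1 - z) ^ a * (1 + z) ^ b

/-- The moments of the Jacobi weight truncated to `[-1, x]`. -/
noncomputable def mom (a b : ℝ) (k : ℕ) (x : ℝ) : ℝ := ∫ z in (-1)..x, z ^ k * wt a b z

variable {a b : ℝ}

lemma wt_integrable (hb : -1 < b) (k : ℕ) {x : ℝ} (hx : x ∈ Set.Ioo (-1 : ℝ) 1) :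
    IntervalIntegrable (fun z => z ^ k * wt a b z) volume (-1) x := by
  have h1 : IntervalIntegrable (fun z : ℝ => (1 + z) ^ b) volume (-1) x := by
    have := (intervalIntegral.intervalIntegrable_rpow' (a := 0) (b := 1 + x) hb).comp_add_left 1
    simpa using this
  have h2 : ContinuousOn (fun z : ℝ => z ^ k * (1 - z) ^ a) (Set.uIcc (-1) x) := by
    rw [Set.uIcc_of_le hx.1.le]
    refine (continuousOn_id.pow k).mul (ContinuousOn.rpow_const (by fun_prop) fun z hz => ?_)
    left
    have := hz.2.trans_lt hx.2
    linarith
  refine (h1.continuousOn_mul h2).congr fun z _ => ?_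
  simp only [wt]
  ring

lemma continuousAt_wt {x : ℝ} (hx : x ∈ Set.Ioo (-1 : ℝ) 1) (k : ℕ) :
    ContinuousAt (fun z => z ^ k * wt a b z) x := by
  have h1 : (1 - x) ≠ 0 := by linarith [hx.2]
  have h2 : (1 + x) ≠ 0 := by linarith [hx.1]
  unfold wt
  refine (continuousAt_id.pow k).mul (ContinuousAt.mul ?_ ?_)
  · exact ContinuousAt.rpow_const (by fun_prop) (Or.inl h1)
  · exact ContinuousAt.rpow_const (by fun_prop) (Or.inl h2)

lemma measurable_wt (k : ℕ) : Measurable (fun z => z ^ k * wt a b z) := by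
  unfold wt
  fun_prop

lemma mom_hasDerivAt (hb : -1 < b) (k : ℕ) {x : ℝ} (hx : x ∈ Set.Ioo (-1 : ℝ) 1) :
    HasDerivAt (mom a b k) (x ^ k * wt a b x) x :=
  intervalIntegral.integral_hasDerivAt_right (wt_integrable hb k hx)
    ((measurable_wt k).stronglyMeasurable.stronglyMeasurableAtFilter) (continuousAt_wt hx k)

lemma mom_recurrence (ha : -1 < a) (hb : -1 < b) (k : ℕ) {x : ℝ} (hx : x ∈ Set.Ioo (-1 : ℝ) 1) :
    (1 - x ^ 2) * (x ^ k * wt a b x) =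
      k * mom a b (k - 1) x + (b - a) * mom a b k x - (k + 2 + (a + b)) * mom a b (k + 1) x := by
  have hw : ∀ z ∈ Set.Ioc (-1 : ℝ) x,
      (1 - z) ^ (a + 1) * (1 + z) ^ (b + 1) = (1 - z ^ 2) * wt a b z := by
    intro z hz
    rw [wt, Real.rpow_add_one (by linarith [hz.2, hx.2]), Real.rpow_add_one (by linarith [hz.1])]
    ring
  have hI := ((((wt_integrable (a := a) hb (k - 1) hx).const_mul (k : ℝ)).add
    ((wt_integrable (a := a) hb k hx).const_mul (b - a))).sub
    ((wt_integrable (a := a) hb (k + 1) hx).const_mul (k + 2 + (a + b))))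
  -- integrate the derivative of `z ^ k (1 - z) ^ (a + 1) (1 + z) ^ (b + 1)`, which vanishes at
  -- `-1` because `b + 1 > 0`
  have key := intervalIntegral.integral_eq_sub_of_hasDerivAt_of_le hx.1.le
    (f := fun z : ℝ => z ^ k * ((1 - z) ^ (a + 1) * (1 + z) ^ (b + 1))) ?_ ?_ hI
  · rw [intervalIntegral.integral_sub, intervalIntegral.integral_add,
      intervalIntegral.integral_const_mul, intervalIntegral.integral_const_mul,
      intervalIntegral.integral_const_mul] at key
    · rw [hw x ⟨hx.1, le_rfl⟩, add_neg_cancel, Real.zero_rpow (by linarith)] at key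
      simp only [mom]
      linarith
    · exact (wt_integrable (a := a) hb (k - 1) hx).const_mul (k : ℝ)
    · exact (wt_integrable (a := a) hb k hx).const_mul (b - a)
    · exact ((wt_integrable (a := a) hb (k - 1) hx).const_mul (k : ℝ)).add
        ((wt_integrable (a := a) hb k hx).const_mul (b - a))
    · exact (wt_integrable (a := a) hb (k + 1) hx).const_mul (k + 2 + (a + b))
  · refine (continuousOn_id.pow k).mul (ContinuousOn.mul ?_ ?_)
    · exact ContinuousOn.rpow_const (by fun_prop) fun z hz => Or.inr (by linarith)
    · exact ContinuousOn.rpow_const (by fun_prop) fun z hz => Or.inr (by linarith)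
  · intro z hz
    have h1 : (1 - z) ≠ 0 := by linarith [hz.2, hx.2]
    have h2 : (1 + z) ≠ 0 := by linarith [hz.1]
    have e1 := ((hasDerivAt_id z).const_sub 1).rpow_const (p := a + 1) (Or.inl h1)
    have e2 := ((hasDerivAt_id z).const_add 1).rpow_const (p := b + 1) (Or.inl h2)
    refine ((hasDerivAt_pow k z).mul (e1.mul e2)).congr_deriv ?_
    simp only [id, add_sub_cancel_right, wt, Pi.mul_apply]
    rw [Real.rpow_add_one h1, Real.rpow_add_one h2]
    rcases k with _ | k
    · simp; ring
    · simp only [Nat.add_sub_cancel]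
      push_cast
      ring

lemma moments_mom (ha : -1 < a) (hb : -1 < b) : Moments (mom a b) (b - a) (a + b) :=
  ⟨wt a b, fun _ hx => ⟨fun k => mom_hasDerivAt hb k hx, fun k => mom_recurrence ha hb k hx⟩⟩

/-- Fubini: on the box `[-1, x]^n`, polynomials are integrable against the product weight, with
integral given by `ell`. -/
lemma integral_eval (hb : -1 < b) {x : ℝ} (hx : x ∈ Set.Ioo (-1 : ℝ) 1) {n : ℕ}
    (Q : MvPolynomial (Fin n) ℝ) :
    IntegrableOn (fun z : Fin n → ℝ => eval z Q * ∏ k, wt a b (z k))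
      (Set.univ.pi fun _ => Set.Icc (-1) x) ∧
    ∫ z : Fin n → ℝ in Set.univ.pi (fun _ => Set.Icc (-1) x), eval z Q * ∏ k, wt a b (z k) =
      ell (fun k => mom a b k x) Q := by
  rw [IntegrableOn, volume_pi, Measure.restrict_pi_pi]
  induction Q using MvPolynomial.induction_on' with
  | monomial α c =>
    have e : (fun z : Fin n → ℝ => eval z (monomial α c) * ∏ k, wt a b (z k)) =
        fun z => c * ∏ k, (z k ^ α k * wt a b (z k)) := by
      funext z
      rw [eval_monomial, Finsupp.prod_fintype _ _ (by simp), Finset.prod_mul_distrib, mul_assoc]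
    rw [e]
    constructor
    · refine Integrable.const_mul (Integrable.fintype_prod (f := fun k z => z ^ α k * wt a b z)
        fun k => ?_) c
      have := wt_integrable (a := a) hb (α k) hx
      rwa [intervalIntegrable_iff_integrableOn_Icc_of_le hx.1.le] at this
    · rw [integral_const_mul,
        integral_fintype_prod_eq_prod (fun (k : Fin n) z => z ^ α k * wt a b z), ell_monomial]
      congr 1
      refine Finset.prod_congr rfl fun k _ => ?_
      rw [mom, intervalIntegral.integral_of_le hx.1.le, integral_Icc_eq_integral_Ioc]
  | add p q hp hq =>
    simp only [map_add, add_mul]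
    exact ⟨hp.1.add hq.1, by rw [integral_add hp.1 hq.1, hp.2, hq.2]⟩

lemma eval_vd {n : ℕ} (z : Fin n → ℝ) : eval z (vd n) = Vdm n z := by
  simp [vd, Vdm, map_prod]

lemma integral_eq_av (hb : -1 < b) {x : ℝ} (hx : x ∈ Set.Ioo (-1 : ℝ) 1) {n : ℕ} :
    ∫ z : Fin n → ℝ in Set.univ.pi (fun _ => Set.Icc (-1) x),
      (Vdm n z) ^ 2 * ∏ k, ((1 - z k) ^ a * (1 + z k) ^ b) = av n (mom a b) 1 x := by
  rw [av, ← (integral_eval hb hx _).2]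
  simp [eval_vd, wt]

lemma integral_pos_of_mem (hb : -1 < b) {x : ℝ} (hx : x ∈ Set.Ioo (-1 : ℝ) 1) {n : ℕ} :
    0 < ∫ z : Fin n → ℝ in Set.univ.pi (fun _ => Set.Icc (-1) x),
      (Vdm n z) ^ 2 * ∏ k, ((1 - z k) ^ a * (1 + z k) ^ b) := by
  have hms : MeasurableSet (Set.univ.pi (fun _ : Fin n => Set.Icc (-1 : ℝ) x)) :=
    MeasurableSet.univ_pi fun _ => measurableSet_Icc
  rw [setIntegral_pos_iff_support_of_nonneg_ae]
  · have hc : Continuous (Vdm n) := by unfold Vdm; fun_prop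
    have hU : IsOpen ((Set.univ.pi (fun _ : Fin n => Set.Ioo (-1 : ℝ) x)) ∩ {z | Vdm n z ≠ 0}) :=
      (isOpen_set_pi Set.finite_univ fun _ _ => isOpen_Ioo).inter (isOpen_ne.preimage hc)
    refine (hU.measure_pos volume ?_).trans_le (measure_mono ?_)
    · have hn : (0 : ℝ) < n + 1 := by positivity
      -- a point of the open box with strictly increasing coordinates
      refine ⟨fun i => -1 + (x + 1) * ((i + 1 : ℝ) / (n + 1)), fun i _ => ⟨?_, ?_⟩, ?_⟩
      · have : 0 < (x + 1) * ((i + 1 : ℝ) / (n + 1)) :=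
          mul_pos (by linarith [hx.1]) (by positivity)
        show (-1 : ℝ) < -1 + _
        linarith
      · have h1 : ((i + 1 : ℝ) / (n + 1)) < 1 := by
          rw [div_lt_one hn]
          have : (i : ℝ) < n := by exact_mod_cast i.2
          linarith
        show -1 + (x + 1) * ((i + 1 : ℝ) / (n + 1)) < x
        nlinarith [hx.1]
      · refine Finset.prod_ne_zero_iff.2 fun p hp => ?_
        have hlt : ((p.1 : ℕ) : ℝ) < (p.2 : ℕ) := by
          exact_mod_cast (Finset.mem_filter.1 hp).2
        have h1 : (((p.1 : ℕ) : ℝ) + 1) / (n + 1) < (((p.2 : ℕ) : ℝ) + 1) / (n + 1) := by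
          gcongr
        have h2 := mul_lt_mul_of_pos_left h1 (show 0 < x + 1 by linarith [hx.1])
        exact ne_of_lt (by linarith)
    · rintro z ⟨hz, hv⟩
      refine ⟨mul_ne_zero (pow_ne_zero 2 hv) (Finset.prod_ne_zero_iff.2 fun k _ => ?_),
        fun k hk => Set.Ioo_subset_Icc_self (hz k hk)⟩
      have h1 := (hz k trivial).1
      have h2 := (hz k trivial).2
      exact (mul_pos (Real.rpow_pos_of_pos (by linarith [hx.2]) a)
        (Real.rpow_pos_of_pos (by linarith) b)).ne'
  · refine ae_restrict_of_forall_mem hms fun z hz => ?_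
    refine mul_nonneg (sq_nonneg _) (Finset.prod_nonneg fun k _ => ?_)
    have h1 := (hz k trivial).1
    have h2 := (hz k trivial).2
    exact mul_nonneg (Real.rpow_nonneg (by linarith [hx.2]) a)
      (Real.rpow_nonneg (by linarith) b)
  · have := (integral_eval (a := a) hb hx (vd n ^ 2)).1
    simpa [eval_vd, wt] using this

end jacobi

end

/-- `(1 − x²)` times the logarithmic derivative of the Jacobi largest-eigenvalue
distribution satisfies a third-order ODE (a form of Painlevé VI). -/
theorem stmt19 (n : ℕ) (hn : 1 ≤ n) (a b : ℝ) (ha : -1 < a) (hb : -1 < b) :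
    let q : ℝ := (2 * (n : ℝ) + a + b) ^ 2
    let r : ℝ := a ^ 2 + b ^ 2
    let s : ℝ := a ^ 2 - b ^ 2
    let G : ℝ → ℝ := fun x =>
      ∫ z : Fin n → ℝ in Set.univ.pi (fun _ => Set.Icc (-1) x),
        (Vdm n z) ^ 2 * ∏ k, ((1 - z k) ^ a * (1 + z k) ^ b)
    let f : ℝ → ℝ := fun x => (1 - x ^ 2) * deriv G x / G x
    ContDiffOn ℝ (⊤ : ℕ∞) G (Set.Ioo (-1) 1) ∧ (∀ x ∈ Set.Ioo (-1 : ℝ) 1, 0 < G x) ∧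
    (∀ x ∈ Set.Ioo (-1 : ℝ) 1,
      (x ^ 2 - 1) ^ 2 * iteratedDeriv 3 f x
        + 2 * (x ^ 2 - 1) * (x * iteratedDeriv 2 f x - 3 * (deriv f x) ^ 2)
        + (8 * x * f x - q * (x ^ 2 - 1) - 2 * s * x - 2 * r) * deriv f x
        - f x * (2 * f x - q * x - s) = 0) := by
  intro q r s G f
  have hm := moments_mom ha hb
  have hG : ∀ x ∈ Set.Ioo (-1 : ℝ) 1, G x = av n (mom a b) 1 x :=
    fun x hx => integral_eq_av hb hx
  have hpos : ∀ x ∈ Set.Ioo (-1 : ℝ) 1, 0 < G x := fun x hx => integral_pos_of_mem hb hx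
  exact ⟨(hm.contDiffOn 1).congr hG, hpos, fun x hx =>
    painleve_of_moments hn ha hb hm hG hpos (fun _ => rfl) rfl rfl rfl hx⟩
end
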